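/- arXiv:1309.0264 — 3 statements merged into one kernel-verified Lean document; each statement's English description precedes it below -/
import Mathlib

section
/- Let β ∈ (π, 2π] and let S_β = {(r cos θ, r sin θ) : r > 0, 0 < θ < β} be the infinite open sector of angle β. Then the Hardy constant of S_β, i.e. the largest constant c such that ∫_{S_β} |∇u|² dx ≥ c ∫_{S_β} u(x)²/dist(x, ∂S_β)² dx for all u ∈ C_c^∞(S_β), equals c_β. -/
open Real MeasureTheory Set

noncomputable abbrev E2 := EuclideanSpace ℝ (Fin 2)

/-- `c` solves the Hardy-constant equation for the angle `β`. -/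
def hardyEq (c β : ℝ) : Prop :=
  Real.sqrt c * Real.tan (Real.sqrt c * ((β - Real.pi) / 2)) =
    2 * (Real.Gamma ((3 + Real.sqrt (1 - 4 * c)) / 4) /
         Real.Gamma ((1 + Real.sqrt (1 - 4 * c)) / 4)) ^ 2

/-- `βcr` is the critical angle: the unique angle in `(π, 2π)` with
`tan((βcr − π)/4) = 4 (Γ(3/4)/Γ(1/4))²`. -/
def isBetaCr (βcr : ℝ) : Prop :=
  βcr ∈ Set.Ioo Real.pi (2 * Real.pi) ∧
    Real.tan ((βcr - Real.pi) / 4) = 4 * (Real.Gamma (3 / 4) / Real.Gamma (1 / 4)) ^ 2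

/-- `c = c_β`: for `β ≤ βcr`, `c = 1/4`; for `β > βcr`, `c` is the unique solution in
`(0, 1/4]` of the Hardy-constant equation for `β`. -/
def isHardyConst (βcr β c : ℝ) : Prop :=
  (β ≤ βcr ∧ c = 1 / 4) ∨ (βcr < β ∧ c ∈ Set.Ioc (0 : ℝ) (1 / 4) ∧ hardyEq c β)

/-- The infinite open sector of angle `β` with vertex at the origin. -/
def sector (β : ℝ) : Set E2 :=
  {p | ∃ r θ : ℝ, 0 < r ∧ 0 < θ ∧ θ < β ∧
    p 0 = r * Real.cos θ ∧ p 1 = r * Real.sin θ}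

lemma hs_cosh_lower (x u : ℝ) (hx : -1/2 ≤ x) : Real.exp u / 4 ≤ x + Real.cosh u := by
  have h1 := Real.one_le_cosh u
  have h2 : Real.exp u / 2 ≤ Real.cosh u := by
    rw [Real.cosh_eq]; have := Real.exp_pos (-u); linarith
  linarith

lemma hs_K_pos (x u : ℝ) (hx : -1/2 ≤ x) : 0 < x + Real.cosh u :=
  lt_of_lt_of_le (by positivity) (hs_cosh_lower x u hx)

lemma hs_K_bound (b x u : ℝ) (hb : 0 < b) (hx : -1/2 ≤ x) :
    (x + Real.cosh u) ^ (-b) ≤ 4 ^ b * Real.exp (-b * u) := by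
  calc (x + Real.cosh u) ^ (-b) ≤ (Real.exp u / 4) ^ (-b) :=
        Real.rpow_le_rpow_of_nonpos (by positivity) (hs_cosh_lower x u hx) (by linarith)
    _ = 4 ^ b * Real.exp (-b * u) := by
        rw [Real.div_rpow (by positivity) (by norm_num), ← Real.exp_mul,
          Real.rpow_neg (by norm_num : (0:ℝ) ≤ 4)]
        field_simp

lemma hs_K_cont (b x : ℝ) (hx : -1/2 ≤ x) :
    Continuous (fun u : ℝ => (x + Real.cosh u) ^ (-b)) := by
  refine Continuous.rpow_const (by fun_prop) ?_
  intro u; left; exact (hs_K_pos x u hx).ne'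

lemma hs_bound_int (b C : ℝ) (hb : 0 < b) :
    IntegrableOn (fun u : ℝ => C * Real.exp (-b * u)) (Ioi 0) :=
  (exp_neg_integrableOn_Ioi 0 hb).const_mul C

lemma hs_K_int (b x : ℝ) (hb : 0 < b) (hx : -1/2 ≤ x) :
    IntegrableOn (fun u : ℝ => (x + Real.cosh u) ^ (-b)) (Ioi 0) := by
  refine Integrable.mono' (hs_bound_int b (4^b) hb) (hs_K_cont b x hx).aestronglyMeasurable ?_
  refine Filter.Eventually.of_forall fun u => ?_
  rw [Real.norm_of_nonneg (Real.rpow_nonneg (hs_K_pos x u hx).le _)]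
  exact hs_K_bound b x u hb hx

/-- `J b x = ∫₀^∞ (x + cosh u)^(-b) du`. -/
noncomputable def hsJ (b x : ℝ) : ℝ := ∫ u in Ioi (0:ℝ), (x + Real.cosh u) ^ (-b)

lemma hsJ_deriv (b x : ℝ) (hb : 0 < b) (hx : -1/2 < x) :
    HasDerivAt (hsJ b) (-b * hsJ (b+1) x) x := by
  have key := hasDerivAt_integral_of_dominated_loc_of_deriv_le
    (μ := volume.restrict (Ioi (0:ℝ))) (s := Ioi (-1/2 : ℝ)) (x₀ := x)
    (F := fun x u => (x + Real.cosh u) ^ (-b))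
    (F' := fun x u => -b * (x + Real.cosh u) ^ (-(b+1)))
    (bound := fun u => b * (4 ^ (b+1)) * Real.exp (-(b+1) * u))
    (Ioi_mem_nhds hx) ?_ ?_ ?_ ?_ ?_ ?_
  · have := key.2
    rw [integral_const_mul] at this
    exact this
  · filter_upwards [Ioi_mem_nhds hx] with y hy
    exact (hs_K_cont b y (le_of_lt hy)).aestronglyMeasurable
  · exact hs_K_int b x hb hx.le
  · exact ((hs_K_cont (b+1) x hx.le).const_mul _ |>.aestronglyMeasurable) 
  · refine Filter.Eventually.of_forall fun u y hy => ?_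
    have hy' : -1/2 ≤ y := le_of_lt hy
    rw [norm_mul, norm_neg, Real.norm_of_nonneg hb.le,
      Real.norm_of_nonneg (Real.rpow_nonneg (hs_K_pos y u hy').le _), mul_assoc]
    exact mul_le_mul_of_nonneg_left (hs_K_bound (b+1) y u (by linarith) hy') hb.le
  · exact hs_bound_int (b+1) _ (by linarith)
  · refine Filter.Eventually.of_forall fun u y hy => ?_
    have hy' : -1/2 ≤ y := le_of_lt hy
    have := ((hasDerivAt_id y).add_const (Real.cosh u)).rpow_const (p := -b)
      (Or.inl (hs_K_pos y u hy').ne')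
    refine HasDerivAt.congr_deriv this ?_
    rw [show -(b+1) = -b - 1 by ring]
    simp only [id, one_mul]

lemma hsJ_pos (b x : ℝ) (hb : 0 < b) (hx : -1/2 ≤ x) : 0 < hsJ b x := by
  unfold hsJ
  rw [setIntegral_pos_iff_support_of_nonneg_ae]
  · have : Function.support (fun u : ℝ => (x + Real.cosh u) ^ (-b)) = univ := by
      ext u; simp only [Function.mem_support, mem_univ, iff_true]
      exact (Real.rpow_pos_of_pos (hs_K_pos x u hx) _).ne'
    rw [this]; simp
  · exact Filter.Eventually.of_forall fun u => (Real.rpow_nonneg (hs_K_pos x u hx).le _)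
  · exact hs_K_int b x hb hx

lemma hsJ_anti (b x : ℝ) (hb : 0 < b) (hx : 0 ≤ x) : hsJ b x ≤ hsJ b 0 := by
  unfold hsJ
  refine integral_mono (hs_K_int b x hb (by linarith)) (hs_K_int b 0 hb (by norm_num)) ?_
  intro u
  exact Real.rpow_le_rpow_of_nonpos (hs_K_pos 0 u (by norm_num)) (by linarith) (by linarith)

lemma hsJ_rec (a x : ℝ) (ha : 0 < a) (hx : -1/2 < x) :
    (a+1) * (1 - x^2) * hsJ (a+2) x = a * hsJ a x - (2*a+1) * x * hsJ (a+1) x := by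
  have hd : ∀ u ∈ Ici (0:ℝ), HasDerivAt (fun u => Real.sinh u * (x + Real.cosh u) ^ (-(a+1)))
      (-a * (x + Real.cosh u) ^ (-a) + (2*a+1)*x * (x + Real.cosh u) ^ (-(a+1))
        + (a+1)*(1-x^2) * (x + Real.cosh u) ^ (-(a+2))) u := by
    intro u _
    have hK := hs_K_pos x u hx.le
    have h1 := (Real.hasDerivAt_sinh u).mul
      (((Real.hasDerivAt_cosh u).const_add x).rpow_const (p := -(a+1)) (Or.inl hK.ne'))
    refine HasDerivAt.congr_deriv h1 ?_
    have e1 : (x + Real.cosh u) ^ (-a) = (x + Real.cosh u) ^ (-(a+2)) * (x + Real.cosh u)^2 := by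
      rw [← Real.rpow_natCast, ← Real.rpow_add hK]; congr 1; push_cast; ring
    have e2 : (x + Real.cosh u) ^ (-(a+1)) = (x + Real.cosh u) ^ (-(a+2)) * (x + Real.cosh u) := by
      nth_rewrite 3 [← Real.rpow_one (x + Real.cosh u)]
      rw [← Real.rpow_add hK]; congr 1; ring
    have e3 : -(a+1) - 1 = -(a+2) := by ring
    rw [e3, e1, e2]
    have e4 := Real.cosh_sq u
    have e5 : Real.sinh u * (Real.sinh u * -(a + 1) * (x + Real.cosh u) ^ (-(a + 2)))
      = (Real.cosh u ^ 2 - 1) * -(a + 1) * (x + Real.cosh u) ^ (-(a + 2)) := by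
        rw [e4]; ring
    rw [e5]; ring
  have hI0 := hs_K_int a x ha hx.le
  have hI1 := hs_K_int (a+1) x (by linarith) hx.le
  have hI2 := hs_K_int (a+2) x (by linarith) hx.le
  have hlim : Filter.Tendsto (fun u => Real.sinh u * (x + Real.cosh u) ^ (-(a+1))) Filter.atTop
      (nhds 0) := by
    have hb : Filter.Tendsto (fun u : ℝ => 4^(a+1) * Real.exp (-(a*u))) Filter.atTop (nhds 0) := by
      have : Filter.Tendsto (fun u : ℝ => Real.exp (-(a*u))) Filter.atTop (nhds 0) :=
        Real.tendsto_exp_neg_atTop_nhds_zero.comp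
          (Filter.tendsto_id.const_mul_atTop ha)
      simpa using this.const_mul (4^(a+1))
    refine squeeze_zero_norm' ?_ hb
    filter_upwards [Filter.eventually_ge_atTop 0] with u hu
    have hK := hs_K_pos x u hx.le
    rw [norm_mul, Real.norm_of_nonneg (Real.sinh_nonneg_iff.2 hu),
      Real.norm_of_nonneg (Real.rpow_nonneg hK.le _)]
    have h1 : Real.sinh u ≤ Real.exp u := by
      rw [Real.sinh_eq]; have := Real.exp_pos (-u); have := Real.exp_pos u; linarith
    have h2 := hs_K_bound (a+1) x u (by linarith) hx.le
    calc _ ≤ Real.exp u * (4 ^ (a+1) * Real.exp (-(a+1) * u)) :=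
          mul_le_mul h1 h2 (Real.rpow_nonneg hK.le _) (Real.exp_pos _).le
      _ = 4^(a+1) * (Real.exp u * Real.exp (-(a+1) * u)) := by ring
      _ = _ := by rw [← Real.exp_add]; congr 2; ring
  have h := integral_Ioi_of_hasDerivAt_of_tendsto' hd
    (((hI0.const_mul (-a)).add (hI1.const_mul ((2*a+1)*x))).add (hI2.const_mul ((a+1)*(1-x^2))))
    hlim
  rw [integral_add, integral_add, integral_const_mul, integral_const_mul, integral_const_mul] at h
  · simp only [Real.sinh_zero, zero_mul, sub_zero] at h
    unfold hsJ
    linarith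
  · exact hI0.const_mul (-a)
  · exact hI1.const_mul ((2*a+1)*x)
  · exact (hI0.const_mul (-a)).add (hI1.const_mul ((2*a+1)*x))
  · exact hI2.const_mul ((a+1)*(1-x^2))

lemma hs_beta (α : ℝ) (hα : 0 < α) :
    ∫ x in Ioo (0:ℝ) 1, x ^ (α-1) * (1-x) ^ (α-1) = Real.Gamma α ^ 2 / Real.Gamma (2*α) := by
  have h := ProbabilityTheory.beta_eq_betaIntegralReal α α hα hα
  rw [ProbabilityTheory.beta, ← two_mul, ← sq] at h
  rw [h, Complex.betaIntegral, intervalIntegral.integral_of_le zero_le_one,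
    ← integral_Ioc_eq_integral_Ioo]
  have : ∫ x in Ioc (0:ℝ) 1, (x:ℂ) ^ ((α:ℂ)-1) * (1-(x:ℂ)) ^ ((α:ℂ)-1)
      = ∫ x in Ioc (0:ℝ) 1, ((x ^ (α-1) * (1-x) ^ (α-1) : ℝ) : ℂ) := by
    refine setIntegral_congr_fun measurableSet_Ioc fun x hx => ?_
    push_cast
    rw [Complex.ofReal_cpow hx.1.le, Complex.ofReal_cpow (by linarith [hx.2])]
    push_cast; rfl
  rw [this, integral_complex_ofReal]; simp

lemma hsJ_zero (a : ℝ) (ha : 0 < a) :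
    hsJ a 0 * Real.Gamma ((a+1)/2) = Real.sqrt π / 2 * Real.Gamma (a/2) := by
  -- whole line
  have h1 : ∫ u : ℝ, (Real.cosh u) ^ (-a) = 2 * hsJ a 0 := by
    have := integral_comp_abs (f := fun u : ℝ => (Real.cosh u) ^ (-a))
    simp only [Real.cosh_abs] at this
    rw [this]; simp [hsJ]
  -- sigmoid substitution
  let f : ℝ → ℝ := fun u => 1 / (1 + Real.exp (-2*u))
  have hf : ∀ u ∈ (univ : Set ℝ), HasDerivWithinAt f (2 * f u * (1 - f u)) univ u := by
    intro u _
    have hp : (1 + Real.exp (-2*u)) ≠ 0 := by positivity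
    have h := (((hasDerivAt_id u).const_mul (-2)).exp.const_add 1).inv hp
    have h' : HasDerivAt f (2 * f u * (1 - f u)) u := by
      have e : f = (fun x => 1 + Real.exp (-2 * id x))⁻¹ := by
        ext x; simp [f]
      have h0 := e ▸ h
      refine HasDerivAt.congr_deriv h0 ?_
      simp only [id, f]
      field_simp
      ring
    exact h'.hasDerivWithinAt
  have hfpos : ∀ u, 0 < f u := fun u => by simp only [f]; positivity
  have hflt : ∀ u, f u < 1 := fun u => by
    simp only [f]; rw [div_lt_one (by positivity)]; linarith [Real.exp_pos (-2*u)]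
  have hinj : InjOn f univ := by
    intro u _ v _ h
    simp only [f, one_div, inv_inj, add_right_inj, Real.exp_eq_exp] at h
    linarith
  have himg : f '' univ = Ioo 0 1 := by
    ext y; constructor
    · rintro ⟨u, _, rfl⟩; exact ⟨hfpos u, hflt u⟩
    · rintro ⟨h0, h1⟩
      refine ⟨-(Real.log ((1-y)/y))/2, trivial, ?_⟩
      simp only [f]
      rw [show -2 * (-(Real.log ((1-y)/y))/2) = Real.log ((1-y)/y) by ring,
        Real.exp_log (div_pos (by linarith) h0)]
      field_simp
      ring
  have h2 := integral_image_eq_integral_abs_deriv_smul MeasurableSet.univ hf hinj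
    (fun x => x ^ (a/2-1) * (1-x) ^ (a/2-1))
  rw [himg, hs_beta (a/2) (by linarith), setIntegral_univ] at h2
  have h3 : ∀ u, |2 * f u * (1 - f u)| • (f u ^ (a/2-1) * (1-f u) ^ (a/2-1))
      = 2 ^ (1-a) * (Real.cosh u) ^ (-a) := by
    intro u
    have p1 := hfpos u
    have p2 : 0 < 1 - f u := by linarith [hflt u]
    rw [abs_of_pos (by positivity), smul_eq_mul]
    have e1 : f u * (1 - f u) = (2 * Real.cosh u)⁻¹ ^ 2 := by
      simp only [f, Real.cosh_eq]
      have : Real.exp (-2*u) = Real.exp (-u) ^ 2 := by rw [← Real.exp_nat_mul]; congr 1; push_cast; ring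
      rw [this]
      have e : Real.exp u = (Real.exp (-u))⁻¹ := by rw [Real.exp_neg, inv_inv]
      rw [e]
      have := Real.exp_pos (-u)
      field_simp
      ring
    calc 2 * f u * (1 - f u) * (f u ^ (a/2-1) * (1-f u) ^ (a/2-1))
        = 2 * ((f u * (1 - f u)) * (f u * (1 - f u)) ^ (a/2-1)) := by
          rw [Real.mul_rpow p1.le p2.le]; ring
      _ = 2 * (f u * (1 - f u)) ^ (a/2) := by
          rw [← Real.rpow_one_add' (by positivity) (by ring_nf; linarith [ha])]; congr 2; ring
      _ = 2 * ((2 * Real.cosh u)⁻¹) ^ a := by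
          rw [e1, ← Real.rpow_natCast, ← Real.rpow_mul (by positivity)]; congr 2; push_cast; ring
      _ = 2 ^ (1-a) * (Real.cosh u) ^ (-a) := by
          rw [Real.inv_rpow (by positivity), ← Real.rpow_neg (by positivity),
            Real.mul_rpow (by norm_num) (Real.cosh_pos u).le, ← mul_assoc]
          congr 1
          rw [sub_eq_add_neg, Real.rpow_add (by norm_num), Real.rpow_one]
  simp_rw [h3] at h2
  rw [integral_const_mul, h1] at h2
  have h4 := Real.Gamma_mul_Gamma_add_half (a/2)
  rw [show 2 * (a/2) = a by ring] at h2 h4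
  rw [show a/2+1/2 = (a+1)/2 by ring] at h4
  have g0 : 0 < Real.Gamma a := Real.Gamma_pos_of_pos ha
  have g1 : 0 < Real.Gamma (a/2) := Real.Gamma_pos_of_pos (by linarith)
  have g2 : (0:ℝ) < 2 ^ (1-a) := by positivity
  rw [div_eq_iff g0.ne'] at h2
  -- Γ(a/2)^2 = 2^(1-a) * (2 * J) * Γ a
  have : Real.Gamma (a/2) * (2 ^ (1-a) * Real.Gamma a) * (hsJ a 0 * Real.Gamma ((a+1)/2)) =
      Real.Gamma (a/2) * (2 ^ (1-a) * Real.Gamma a) * (Real.sqrt π / 2 * Real.Gamma (a/2)) := by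
    calc _ = (Real.Gamma (a/2) * Real.Gamma ((a+1)/2)) * (2 ^ (1-a) * (2 * hsJ a 0) * Real.Gamma a) / 2 := by ring
      _ = _ := by rw [h4, ← h2]; ring
  exact mul_left_cancel₀ (by positivity) this

/-- The angular ground state near the boundary and its derivative. -/
noncomputable def hsP (a θ : ℝ) : ℝ := Real.sin θ ^ a * hsJ a (Real.cos θ)
noncomputable def hsQ (a θ : ℝ) : ℝ :=
  a * (Real.sin θ ^ (a-1) * Real.cos θ * hsJ a (Real.cos θ)) +
  a * (Real.sin θ ^ (a+1) * hsJ (a+1) (Real.cos θ))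

lemma hs_dom {θ : ℝ} (h0 : 0 < θ) (h1 : θ ≤ π/2) : 0 < Real.sin θ ∧ 0 ≤ Real.cos θ :=
  ⟨Real.sin_pos_of_pos_of_lt_pi h0 (by linarith [Real.pi_pos]),
    Real.cos_nonneg_of_neg_pi_div_two_le_of_le (by linarith [Real.pi_pos]) h1⟩

lemma hsJc_deriv (b θ : ℝ) (hb : 0 < b) (h0 : 0 < θ) (h1 : θ ≤ π/2) :
    HasDerivAt (fun θ => hsJ b (Real.cos θ)) (b * hsJ (b+1) (Real.cos θ) * Real.sin θ) θ := by
  have hc := (hs_dom h0 h1).2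
  have := (hsJ_deriv b (Real.cos θ) hb (by linarith)).comp θ (Real.hasDerivAt_cos θ)
  refine HasDerivAt.congr_deriv this ?_
  ring

lemma hsP_deriv (a θ : ℝ) (ha : 0 < a) (h0 : 0 < θ) (h1 : θ ≤ π/2) :
    HasDerivAt (hsP a) (hsQ a θ) θ := by
  obtain ⟨hs, hc⟩ := hs_dom h0 h1
  have := ((Real.hasDerivAt_sin θ).rpow_const (p := a) (Or.inl hs.ne')).mul
    (hsJc_deriv a θ ha h0 h1)
  refine HasDerivAt.congr_deriv this ?_
  unfold hsQ
  rw [Real.rpow_add hs, Real.rpow_one]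
  ring

lemma hsQ_deriv (a θ : ℝ) (ha : 0 < a) (h0 : 0 < θ) (h1 : θ ≤ π/2) :
    HasDerivAt (hsQ a) (-(a*(1-a)) * hsP a θ / Real.sin θ ^ 2) θ := by
  obtain ⟨hs, hc⟩ := hs_dom h0 h1
  have d1 := ((((Real.hasDerivAt_sin θ).rpow_const (p := a-1) (Or.inl hs.ne')).mul
    (Real.hasDerivAt_cos θ)).mul (hsJc_deriv a θ ha h0 h1)).const_mul a
  have d2 := (((Real.hasDerivAt_sin θ).rpow_const (p := a+1) (Or.inl hs.ne')).mul
    (hsJc_deriv (a+1) θ (by linarith) h0 h1)).const_mul a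
  have := d1.add d2
  refine HasDerivAt.congr_deriv this ?_
  have hrec := hsJ_rec a (Real.cos θ) ha (by linarith)
  unfold hsP
  rw [show a + 1 + 1 = a + 2 by ring, show a - 1 - 1 = a - 2 by ring,
    show a + 1 - 1 = a by ring]
  have e1 : Real.sin θ ^ a = Real.sin θ ^ (a-2) * Real.sin θ ^ 2 := by
    rw [← Real.rpow_natCast, ← Real.rpow_add hs]; congr 1; push_cast; ring
  have e2 : Real.sin θ ^ (a+1) = Real.sin θ ^ (a-2) * Real.sin θ ^ 3 := by
    rw [← Real.rpow_natCast, ← Real.rpow_add hs]; congr 1; push_cast; ring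
  have e3 : Real.sin θ ^ (a-1) = Real.sin θ ^ (a-2) * Real.sin θ := by
    nth_rewrite 3 [← Real.rpow_one (Real.sin θ)]
    rw [← Real.rpow_add hs]; congr 1; ring
  rw [e1, e2, e3]
  have hcs : Real.cos θ ^ 2 = 1 - Real.sin θ ^ 2 := by
    have := Real.sin_sq_add_cos_sq θ; linarith
  rw [hcs] at hrec
  simp only [Pi.mul_apply]
  rw [e3, show -(a * (1 - a)) * (Real.sin θ ^ (a-2) * Real.sin θ ^ 2 * hsJ a (Real.cos θ))
    / Real.sin θ ^ 2 = -(a * (1 - a)) * (Real.sin θ ^ (a-2) * hsJ a (Real.cos θ)) by field_simp]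
  linear_combination (a * Real.sin θ ^ (a-2) * Real.sin θ ^ 2) * hrec
    + (a * (a-1) * Real.sin θ ^ (a-2) * hsJ a (Real.cos θ)) * hcs

lemma hsP_pos (a θ : ℝ) (ha : 0 < a) (h0 : 0 < θ) (h1 : θ ≤ π/2) : 0 < hsP a θ := by
  obtain ⟨hs, hc⟩ := hs_dom h0 h1
  exact mul_pos (Real.rpow_pos_of_pos hs _) (hsJ_pos a _ ha (by linarith))

lemma hsP_sq_le (a θ : ℝ) (ha : 1/2 ≤ a) (h0 : 0 < θ) (h1 : θ ≤ π/2) :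
    hsP a θ ^ 2 ≤ hsJ a 0 ^ 2 * θ := by
  obtain ⟨hs, hc⟩ := hs_dom h0 h1
  have hJ := hsJ_anti a _ (by linarith) hc
  have hJ0 := (hsJ_pos a _ (by linarith) (by linarith : -1/2 ≤ Real.cos θ)).le
  have h2 : Real.sin θ ^ a ≤ θ ^ (1/2 : ℝ) := by
    calc Real.sin θ ^ a ≤ Real.sin θ ^ (1/2 : ℝ) :=
          Real.rpow_le_rpow_of_exponent_ge hs (Real.sin_le_one θ) ha
      _ ≤ θ ^ (1/2 : ℝ) := Real.rpow_le_rpow hs.le (Real.sin_le h0.le) (by norm_num)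
  have h3 : hsP a θ ≤ θ ^ (1/2 : ℝ) * hsJ a 0 :=
    mul_le_mul h2 hJ hJ0 (by positivity)
  calc hsP a θ ^ 2 ≤ (θ ^ (1/2 : ℝ) * hsJ a 0) ^ 2 :=
        pow_le_pow_left₀ (hsP_pos a θ (by linarith) h0 h1).le h3 2
    _ = hsJ a 0 ^ 2 * θ := by
        rw [mul_pow, ← Real.sqrt_eq_rpow, Real.sq_sqrt h0.le]; ring

lemma hsQP (a : ℝ) (ha : 0 < a) : hsQ a (π/2) =
    2 * (Real.Gamma ((a+1)/2) / Real.Gamma (a/2)) ^ 2 * hsP a (π/2) := by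
  have h1 := hsJ_zero a ha
  have h2 := hsJ_zero (a+1) (by linarith)
  rw [show (a+1+1)/2 = a/2+1 by ring, Real.Gamma_add_one (by linarith)] at h2
  have g1 : 0 < Real.Gamma (a/2) := Real.Gamma_pos_of_pos (by linarith)
  have g2 : 0 < Real.Gamma ((a+1)/2) := Real.Gamma_pos_of_pos (by linarith)
  simp only [hsQ, hsP, Real.sin_pi_div_two, Real.cos_pi_div_two, Real.one_rpow]
  rw [eq_div_of_mul_eq g2.ne' h1, eq_div_of_mul_eq (by positivity) h2]
  field_simp
  ring

noncomputable def hsPsi (r θ : ℝ) : E2 := !₂[r * Real.cos θ, r * Real.sin θ]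
noncomputable def hsZ (y : E2) : ℂ := ⟨-(y 0), -(y 1)⟩
noncomputable def hsArg (y : E2) : ℝ := π + Complex.arg (hsZ y)

@[simp] lemma hsPsi_0 (r θ : ℝ) : hsPsi r θ 0 = r * Real.cos θ := by simp [hsPsi]
@[simp] lemma hsPsi_1 (r θ : ℝ) : hsPsi r θ 1 = r * Real.sin θ := by simp [hsPsi]

lemma hsPsi_dist (r θ ρ τ : ℝ) :
    dist (hsPsi r θ) (hsPsi ρ τ) ^ 2 = r^2 + ρ^2 - 2*r*ρ*Real.cos (τ - θ) := by
  rw [EuclideanSpace.dist_eq, Real.sq_sqrt (by positivity)]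
  simp only [Fin.sum_univ_two, hsPsi_0, hsPsi_1, Real.dist_eq, sq_abs, Real.cos_sub]
  have h1 := Real.sin_sq_add_cos_sq θ
  have h2 := Real.sin_sq_add_cos_sq τ
  linear_combination r^2 * h1 + ρ^2 * h2

lemma hsPsi_norm (r θ : ℝ) (hr : 0 ≤ r) : ‖hsPsi r θ‖ = r := by
  rw [EuclideanSpace.norm_eq]
  simp only [Fin.sum_univ_two, hsPsi_0, hsPsi_1, Real.norm_eq_abs, sq_abs]
  have h1 := Real.sin_sq_add_cos_sq θ
  rw [show (r * Real.cos θ)^2 + (r * Real.sin θ)^2 = r^2 by linear_combination (r^2) * h1]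
  exact Real.sqrt_sq hr

lemma hsZ_norm (y : E2) : ‖hsZ y‖ = ‖y‖ := by
  rw [EuclideanSpace.norm_eq, Complex.norm_eq_sqrt_sq_add_sq]
  simp [Fin.sum_univ_two, hsZ]

lemma hsZ_ne (y : E2) : hsZ y ≠ 0 ↔ y ≠ 0 := by
  rw [← norm_ne_zero_iff, hsZ_norm, norm_ne_zero_iff]

lemma hsPsi_arg (y : E2) : hsPsi ‖y‖ (hsArg y) = y := by
  have h1 := Complex.norm_mul_cos_arg (hsZ y)
  have h2 := Complex.norm_mul_sin_arg (hsZ y)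
  rw [hsZ_norm] at h1 h2
  ext i
  fin_cases i
  · simp only [hsZ] at h1
    simp [hsArg, Real.cos_add, h1, hsZ]
  · simp only [hsZ] at h2
    simp [hsArg, Real.sin_add, h2, hsZ]

lemma hsArg_mem (y : E2) : hsArg y ∈ Ioc 0 (2*π) := by
  have := Complex.arg_mem_Ioc (hsZ y)
  unfold hsArg
  constructor <;> linarith [this.1, this.2]

lemma hsArg_Psi (r θ : ℝ) (hr : 0 < r) (h0 : 0 < θ) (h1 : θ ≤ 2*π) : hsArg (hsPsi r θ) = θ := by
  have : hsZ (hsPsi r θ) = r * (Complex.cos ((θ - π : ℝ)) + Complex.sin ((θ - π : ℝ)) * Complex.I) := by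
    rw [← Complex.ofReal_cos, ← Complex.ofReal_sin, Real.cos_sub_pi, Real.sin_sub_pi]
    apply Complex.ext <;> simp [hsZ, -Complex.ofReal_cos, -Complex.ofReal_sin]
  rw [hsArg, this, Complex.arg_mul_cos_add_sin_mul_I hr ⟨by linarith, by linarith⟩]
  ring

lemma hs_mem_sector (β : ℝ) (hβ : β ≤ 2*π) (y : E2) :
    y ∈ sector β ↔ y ≠ 0 ∧ hsArg y < β := by
  constructor
  · rintro ⟨r, θ, hr, h0, h1, e0, e1⟩
    have : y = hsPsi r θ := by
      ext i; fin_cases i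
      · simpa using e0
      · simpa using e1
    rw [this]
    refine ⟨?_, ?_⟩
    · rw [← norm_ne_zero_iff, hsPsi_norm _ _ hr.le]; exact hr.ne'
    · rwa [hsArg_Psi r θ hr h0 (by linarith)]
  · rintro ⟨h, h1⟩
    refine ⟨‖y‖, hsArg y, norm_pos_iff.2 h, (hsArg_mem y).1, h1, ?_, ?_⟩
    · nth_rewrite 1 [← hsPsi_arg y]; simp
    · nth_rewrite 1 [← hsPsi_arg y]; simp

lemma hsPsi_mem_sector (β : ℝ) (r θ : ℝ) (hr : 0 < r) (h0 : 0 < θ) (h1 : θ < β) :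
    hsPsi r θ ∈ sector β := ⟨r, θ, hr, h0, h1, by simp, by simp⟩

lemma hs_slit (β : ℝ) (hβ : β ≤ 2*π) (y : E2) (hy : y ∈ sector β) :
    hsZ y ∈ Complex.slitPlane := by
  rw [hs_mem_sector β hβ] at hy
  rw [Complex.mem_slitPlane_iff_arg, hsZ_ne]
  refine ⟨?_, hy.1⟩
  intro h
  have := hy.2
  rw [hsArg, h] at this
  linarith

lemma hsZ_contDiff : ContDiff ℝ (⊤ : ℕ∞) hsZ := by
  have : hsZ = fun y : E2 => -(Complex.equivRealProdCLM.symm (y 0, y 1)) := by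
    ext y
    apply Complex.ext <;> simp [hsZ, Complex.equivRealProdCLM_symm_apply]
  rw [this]
  fun_prop

lemma hsArg_contDiffAt (β : ℝ) (hβ : β ≤ 2*π) (y : E2) (hy : y ∈ sector β) :
    ContDiffAt ℝ (⊤ : ℕ∞) hsArg y := by
  have h := hs_slit β hβ y hy
  have h1 : ContDiffAt ℝ (⊤ : ℕ∞) (fun y => Complex.log (hsZ y)) y :=
    ((Complex.contDiffAt_log h).restrict_scalars ℝ).comp y hsZ_contDiff.contDiffAt
  have h2 : ContDiffAt ℝ (⊤ : ℕ∞) (fun y => π + Complex.imCLM (Complex.log (hsZ y))) y :=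
    contDiffAt_const.add (Complex.imCLM.contDiff.contDiffAt.comp y h1)
  have e : hsArg = (fun y => π + Complex.imCLM (Complex.log (hsZ y))) := by
    ext y; simp [hsArg, Complex.log_im]
  rw [e]; exact h2

lemma hs_sector_open (β : ℝ) (hβ : β ≤ 2*π) : IsOpen (sector β) := by
  rw [isOpen_iff_mem_nhds]
  intro y hy
  have hc := (hsArg_contDiffAt β hβ y hy).continuousAt
  have hy' := (hs_mem_sector β hβ y).1 hy
  filter_upwards [hc.eventually (gt_mem_nhds hy'.2), isOpen_ne.mem_nhds hy'.1] with z h1 h2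
  exact (hs_mem_sector β hβ z).2 ⟨h2, h1⟩

lemma hsPsi_cont : Continuous (fun p : ℝ × ℝ => hsPsi p.1 p.2) := by
  unfold hsPsi
  refine (PiLp.continuous_toLp 2 _).comp ?_
  refine continuous_pi fun i => ?_
  fin_cases i
  · simp; fun_prop
  · simp; fun_prop

lemma hs_closure (β : ℝ) (hβ0 : 0 < β) (t θ : ℝ) (ht : 0 ≤ t) (h0 : 0 ≤ θ) (h1 : θ ≤ β) :
    hsPsi t θ ∈ closure (sector β) := by
  have h : (t, θ) ∈ closure (Ioi (0:ℝ) ×ˢ Ioo 0 β) := by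
    rw [closure_prod_eq, closure_Ioi, closure_Ioo hβ0.ne]
    exact ⟨ht, h0, h1⟩
  refine closure_mono ?_ (image_closure_subset_closure_image hsPsi_cont ⟨_, h, rfl⟩)
  rintro _ ⟨p, hp, rfl⟩
  exact hsPsi_mem_sector β _ _ hp.1 hp.2.1 hp.2.2

lemma hs_frontier (β : ℝ) (hβ0 : 0 < β) (hβ : β ≤ 2*π) (t : ℝ) (ht : 0 ≤ t) :
    hsPsi t 0 ∈ frontier (sector β) ∧ hsPsi t β ∈ frontier (sector β) := by
  rw [(hs_sector_open β hβ).frontier_eq]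
  refine ⟨⟨hs_closure β hβ0 t 0 ht le_rfl hβ0.le, ?_⟩, ⟨hs_closure β hβ0 t β ht hβ0.le le_rfl, ?_⟩⟩
  · rw [hs_mem_sector β hβ]
    rintro ⟨h1, h2⟩
    have ht' : 0 < t := by
      rw [← norm_ne_zero_iff, hsPsi_norm _ _ ht] at h1; exact lt_of_le_of_ne ht h1.symm
    have e : hsPsi t 0 = hsPsi t (2*π) := by
      ext i; fin_cases i <;> simp [hsPsi]
    rw [e, hsArg_Psi t _ ht' (by positivity) le_rfl] at h2
    linarith
  · rw [hs_mem_sector β hβ]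
    rintro ⟨h1, h2⟩
    have ht' : 0 < t := by
      rw [← norm_ne_zero_iff, hsPsi_norm _ _ ht] at h1; exact lt_of_le_of_ne ht h1.symm
    rw [hsArg_Psi t _ ht' (by positivity) hβ] at h2
    linarith

/-- angular distance weight -/
noncomputable def hsW (β θ : ℝ) : ℝ :=
  if θ ≤ π/2 then Real.sin θ else if θ ≤ β - π/2 then 1 else Real.sin (β - θ)

lemma hsW_pos (β θ : ℝ) (h0 : 0 < θ) (h1 : θ < β) : 0 < hsW β θ := by
  have := Real.pi_pos
  unfold hsW
  split_ifs with h2 h3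
  · exact Real.sin_pos_of_pos_of_lt_pi h0 (by linarith)
  · norm_num
  · push Not at h3; exact Real.sin_pos_of_pos_of_lt_pi (by linarith) (by linarith)

lemma hsW_le_one (β θ : ℝ) : hsW β θ ≤ 1 := by
  unfold hsW
  split_ifs
  · exact Real.sin_le_one _
  · exact le_rfl
  · exact Real.sin_le_one _

lemma hs_infDist (β : ℝ) (hβ1 : π < β) (hβ : β ≤ 2*π) (r θ : ℝ) (hr : 0 < r) (h0 : 0 < θ)
    (h1 : θ < β) : Metric.infDist (hsPsi r θ) (frontier (sector β)) = r * hsW β θ := by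
  have hpi := Real.pi_pos
  have hβ0 : 0 < β := by linarith
  have hw := hsW_pos β θ h0 h1
  have hw1 := hsW_le_one β θ
  apply le_antisymm
  · have key : ∀ t τ : ℝ, hsPsi t τ ∈ frontier (sector β) →
        r^2 + t^2 - 2*r*t*Real.cos (τ-θ) ≤ (r * hsW β θ)^2 →
        Metric.infDist (hsPsi r θ) (frontier (sector β)) ≤ r * hsW β θ := by
      intro t τ hm hle
      refine (Metric.infDist_le_dist_of_mem hm).trans ?_
      rw [← hsPsi_dist] at hle
      exact le_of_sq_le_sq hle (by positivity) 
    by_cases c1 : θ ≤ π/2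
    · have hc := (hs_dom h0 c1).2
      refine key (r * Real.cos θ) 0 (hs_frontier β hβ0 hβ _ (by positivity)).1 (le_of_eq ?_)
      rw [zero_sub, Real.cos_neg, hsW, if_pos c1]
      have := Real.sin_sq_add_cos_sq θ
      linear_combination (-r^2) * this
    · by_cases c2 : θ ≤ β - π/2
      · refine key 0 0 (hs_frontier β hβ0 hβ _ le_rfl).1 (le_of_eq ?_)
        rw [hsW, if_neg c1, if_pos c2]; ring
      · push Not at c2
        have hc := (hs_dom (sub_pos.2 h1) (by linarith)).2
        refine key (r * Real.cos (β - θ)) β (hs_frontier β hβ0 hβ _ (by positivity)).2 (le_of_eq ?_)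
        rw [hsW, if_neg c1, if_neg (by linarith)]
        have := Real.sin_sq_add_cos_sq (β - θ)
        linear_combination (-r^2) * this
  · refine (Metric.le_infDist ⟨_, (hs_frontier β hβ0 hβ 0 le_rfl).1⟩).2 ?_
    intro y hy
    rw [(hs_sector_open β hβ).frontier_eq] at hy
    have hy2 := hy.2
    rw [hs_mem_sector β hβ] at hy2
    refine le_of_sq_le_sq ?_ dist_nonneg
    have hyn := norm_nonneg y
    rw [← hsPsi_arg y, hsPsi_dist]
    generalize hρ : ‖y‖ = ρ at *
    obtain ⟨ht0, ht2⟩ := hsArg_mem y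
    generalize hτ : hsArg y = τ at *
    have triv : (r * hsW β θ)^2 ≤ r^2 := by
      rw [mul_pow]; nlinarith [sq_nonneg r, pow_le_one₀ hw.le hw1 (n := 2)]
    rcases eq_or_lt_of_le hyn with h | hpos
    · rw [← h]; linarith
    · have hτβ : β ≤ τ := by
        by_contra hh; push Not at hh
        exact hy2 ⟨by rw [← norm_pos_iff, hρ]; exact hpos, hh⟩
      by_cases hcos : Real.cos (τ - θ) ≤ 0
      · have : 0 ≤ r * ρ * (- Real.cos (τ - θ)) := by
          apply mul_nonneg (by positivity); linarith
        nlinarith [sq_nonneg ρ]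
      · push Not at hcos
        have hs2 : hsW β θ ^ 2 ≤ Real.sin (τ - θ) ^ 2 := by
          have hlt : τ - θ < π/2 ∨ 3*π/2 < τ - θ := by
            by_contra hh; push Not at hh
            have := Real.cos_nonpos_of_pi_div_two_le_of_le (x := τ - θ) hh.1 (by linarith)
            linarith
          rcases hlt with hl | hl
          · have hle : hsW β θ = Real.sin (β - θ) := by
              rw [hsW, if_neg (by linarith), if_neg (by linarith)]
            rw [hle]
            refine pow_le_pow_left₀ (hle ▸ hw.le) ?_ 2
            exact Real.sin_le_sin_of_le_of_le_pi_div_two (by linarith) (by linarith) (by linarith)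
          · have hle : hsW β θ = Real.sin θ := by
              rw [hsW, if_pos (by linarith)]
            have e : Real.sin (τ - θ) = - Real.sin (2*π - (τ - θ)) := by
              rw [Real.sin_two_pi_sub]; ring
            rw [e, neg_sq, hle]
            refine pow_le_pow_left₀ (hle ▸ hw.le) ?_ 2
            exact Real.sin_le_sin_of_le_of_le_pi_div_two (by linarith) (by linarith) (by linarith)
        have h3 := Real.sin_sq_add_cos_sq (τ - θ)
        have h4 : r^2 + ρ^2 - 2*r*ρ*Real.cos (τ - θ)
          = (ρ - r * Real.cos (τ - θ))^2 + r^2 * Real.sin (τ - θ)^2 := by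
            linear_combination (-r^2) * h3
        rw [h4, mul_pow]
        have := mul_le_mul_of_nonneg_left hs2 (sq_nonneg r)
        nlinarith [sq_nonneg (ρ - r * Real.cos (τ - θ))]

lemma hs_integral_sector (β : ℝ) (hβ : β ≤ 2*π) (F : E2 → ℝ) :
    ∫ x in sector β, F x = ∫ p in Ioi (0:ℝ) ×ˢ Ioo 0 β, p.1 * F (hsPsi p.1 p.2) := by
  let e : E2 ≃ᵐ ℝ × ℝ := (MeasurableEquiv.toLp 2 (Fin 2 → ℝ)).symm.trans MeasurableEquiv.finTwoArrow
  have he : MeasurePreserving e volume volume :=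
    (EuclideanSpace.volume_preserving_symm_measurableEquiv_toLp (Fin 2)).trans
      (volume_preserving_finTwoArrow ℝ)
  have hes := he.symm
  have hsymm : ∀ p, e.symm (polarCoord.symm p) = hsPsi p.1 p.2 := by
    intro p
    ext i; fin_cases i <;> simp [e, hsPsi, MeasurableEquiv.finTwoArrow, polarCoord] 
  rw [← hes.setIntegral_preimage_emb e.symm.measurableEmbedding]
  have himg : e.symm ⁻¹' (sector β) = polarCoord.symm '' (Ioi (0:ℝ) ×ˢ Ioo 0 β) := by
    ext q
    constructor
    · intro hq
      obtain ⟨r, θ, hr, h0, h1, e0, e1⟩ := hq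
      refine ⟨(r, θ), ⟨hr, h0, h1⟩, ?_⟩
      apply e.symm.injective
      rw [hsymm]
      ext i; fin_cases i
      · simpa using e0.symm
      · simpa using e1.symm
    · rintro ⟨p, hp, rfl⟩
      rw [mem_preimage, hsymm]
      exact hsPsi_mem_sector β _ _ hp.1 hp.2.1 hp.2.2
  have hinj : InjOn polarCoord.symm (Ioi (0:ℝ) ×ˢ Ioo 0 β) := by
    intro p hp q hq h
    have h' : hsPsi p.1 p.2 = hsPsi q.1 q.2 := by rw [← hsymm, ← hsymm, h]
    have h1 := congrArg norm h'
    have h2 := congrArg hsArg h'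
    rw [hsPsi_norm _ _ (le_of_lt hp.1), hsPsi_norm _ _ (le_of_lt hq.1)] at h1
    rw [hsArg_Psi _ _ hp.1 hp.2.1 (by linarith [hp.2.2]),
      hsArg_Psi _ _ hq.1 hq.2.1 (by linarith [hq.2.2])] at h2
    exact Prod.ext h1 h2
  rw [himg, integral_image_eq_integral_abs_det_fderiv_smul volume
    (measurableSet_Ioi.prod measurableSet_Ioo)
    (fun p _ => (hasFDerivAt_polarCoord_symm p).hasFDerivWithinAt) hinj]
  refine setIntegral_congr_fun (measurableSet_Ioi.prod measurableSet_Ioo) fun p hp => ?_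
  simp only [det_fderivPolarCoordSymm, hsymm, smul_eq_mul]
  rw [abs_of_pos hp.1]

lemma hs_gradient (u : E2 → ℝ) (r θ vr vt : ℝ) (hr : 0 < r)
    (hu : DifferentiableAt ℝ u (hsPsi r θ))
    (h1 : HasDerivAt (fun r => u (hsPsi r θ)) vr r)
    (h2 : HasDerivAt (fun θ => u (hsPsi r θ)) vt θ) :
    ‖gradient u (hsPsi r θ)‖ ^ 2 = vr ^ 2 + vt ^ 2 / r ^ 2 := by
  have hg := hu.hasGradientAt.hasFDerivAt
  set g := gradient u (hsPsi r θ) with hgdef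
  have hpsi : ∀ r θ, hsPsi r θ = (r * Real.cos θ) • (EuclideanSpace.single (0 : Fin 2) (1:ℝ) : E2)
      + (r * Real.sin θ) • (EuclideanSpace.single (1 : Fin 2) (1:ℝ) : E2) := by
    intro r θ
    ext i; fin_cases i <;> simp
  have d1 : HasDerivAt (fun r => hsPsi r θ) (hsPsi 1 θ) r := by
    simp only [hpsi]
    exact (((hasDerivAt_id r).mul_const (Real.cos θ)).smul_const _).add
      (((hasDerivAt_id r).mul_const (Real.sin θ)).smul_const _)
  have d2 : HasDerivAt (fun θ => hsPsi r θ) ((r * -Real.sin θ) •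
      (EuclideanSpace.single (0 : Fin 2) (1:ℝ) : E2)
      + (r * Real.cos θ) • (EuclideanSpace.single (1 : Fin 2) (1:ℝ) : E2)) θ := by
    simp only [hpsi]
    exact (((Real.hasDerivAt_cos θ).const_mul r).smul_const _).add
      (((Real.hasDerivAt_sin θ).const_mul r).smul_const _)
  have e1 := h1.unique (hg.comp_hasDerivAt r d1)
  have e2 := h2.unique (hg.comp_hasDerivAt θ d2)
  rw [hpsi] at e1
  simp only [InnerProductSpace.toDual_apply_apply, inner_add_right, inner_smul_right,
    EuclideanSpace.inner_single_right] at e1 e2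
  simp at e1 e2
  rw [EuclideanSpace.norm_sq_eq]
  simp only [Fin.sum_univ_two, Real.norm_eq_abs, sq_abs]
  have hcs := Real.sin_sq_add_cos_sq θ
  rw [e1, e2]
  field_simp
  linear_combination (-(g 0 ^2 + g 1^2)) * hcs

lemma hs_riccati (x0 x1 : ℝ) (hx : x0 ≤ x1) (f f' g q : ℝ → ℝ)
    (hf : ∀ x, HasDerivAt f (f' x) x) (hf' : Continuous f')
    (hg : ∀ x ∈ Icc x0 x1, HasDerivAt g (-(q x) - g x ^ 2) x) (hq : ContinuousOn q (Icc x0 x1)) :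
    (∫ x in x0..x1, q x * f x ^ 2) + g x1 * f x1 ^ 2 - g x0 * f x0 ^ 2 ≤
      ∫ x in x0..x1, f' x ^ 2 := by
  have hfc : Continuous f := continuous_iff_continuousAt.2 fun x => (hf x).continuousAt
  have hgc : ContinuousOn g (Icc x0 x1) := fun x hx => (hg x hx).continuousAt.continuousWithinAt
  have hFTC : ∫ x in x0..x1, ((-(q x) - g x ^ 2) * f x ^ 2 + g x * (2 * f x * f' x))
      = g x1 * f x1 ^ 2 - g x0 * f x0 ^ 2 := by
    refine intervalIntegral.integral_eq_sub_of_hasDerivAt (f := fun x => g x * f x ^ 2) ?_ ?_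
    · intro x hx'
      rw [uIcc_of_le hx] at hx'
      refine ((hg x hx').mul ((hf x).pow 2)).congr_deriv ?_
      simp
    · apply ContinuousOn.intervalIntegrable
      rw [uIcc_of_le hx]
      fun_prop
  have i1 : IntervalIntegrable (fun x => q x * f x ^ 2) volume x0 x1 := by
    apply ContinuousOn.intervalIntegrable
    rw [uIcc_of_le hx]; fun_prop
  have i2 : IntervalIntegrable
      (fun x => ((-(q x) - g x ^ 2) * f x ^ 2 + g x * (2 * f x * f' x))) volume x0 x1 := by
    apply ContinuousOn.intervalIntegrable
    rw [uIcc_of_le hx]; fun_prop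
  have i3 : IntervalIntegrable (fun x => f' x ^ 2) volume x0 x1 :=
    (hf'.pow 2).intervalIntegrable _ _
  rw [add_sub_assoc, ← hFTC, ← intervalIntegral.integral_add i1 i2]
  refine intervalIntegral.integral_mono_on hx (i1.add i2) i3 ?_
  intro x _
  nlinarith [sq_nonneg (f' x - g x * f x)]

lemma hsW_cont (β : ℝ) (hβ1 : π < β) : Continuous (hsW β) := by
  unfold hsW
  refine Continuous.if_le (by fun_prop) ?_ continuous_id continuous_const ?_
  · refine Continuous.if_le (by fun_prop) (by fun_prop) continuous_id continuous_const ?_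
    intro x hx
    rw [hx, show β - (β - π/2) = π/2 by ring, Real.sin_pi_div_two]
  · intro x hx
    rw [hx, if_pos (by linarith), Real.sin_pi_div_two]

lemma hs_quot_cont (β δ : ℝ) (hβ1 : π < β) (hδ : 0 < δ) (f : ℝ → ℝ) (hf : Continuous f)
    (z0 : ∀ x ∈ Icc 0 δ, f x = 0) (z1 : ∀ x ∈ Icc (β - δ) β, f x = 0) :
    ContinuousOn (fun x => f x ^ 2 / hsW β x ^ 2) (Icc 0 β) := by
  intro x hx
  by_cases h0 : x = 0
  · subst h0
    refine ContinuousWithinAt.congr_of_eventuallyEq (f := fun _ => (0:ℝ))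
      continuousWithinAt_const ?_ ?_
    · filter_upwards [self_mem_nhdsWithin, mem_nhdsWithin_of_mem_nhds (Iio_mem_nhds hδ)] with y h1 h2
      simp [z0 y ⟨h1.1, le_of_lt h2⟩]
    · simp [z0 0 ⟨le_rfl, hδ.le⟩]
  by_cases h1 : x = β
  · rw [h1]
    refine ContinuousWithinAt.congr_of_eventuallyEq (f := fun _ => (0:ℝ))
      continuousWithinAt_const ?_ ?_
    · filter_upwards [self_mem_nhdsWithin,
        mem_nhdsWithin_of_mem_nhds (Ioi_mem_nhds (by linarith : β - δ < β))] with y h1 h2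
      simp [z1 y ⟨le_of_lt h2, h1.2⟩]
    · simp [z1 β ⟨by linarith, le_rfl⟩]
  have hw := hsW_pos β x (lt_of_le_of_ne hx.1 (Ne.symm h0)) (lt_of_le_of_ne hx.2 h1)
  have := (hsW_cont β hβ1).continuousAt (x := x)
  refine ContinuousAt.continuousWithinAt ?_
  exact (hf.continuousAt.pow 2).div (this.pow 2) (by positivity)

/-- left piece -/
lemma hs_left (a δ : ℝ) (ha : 0 < a) (hδ : 0 < δ) (hδ2 : δ ≤ π/2) (f f' : ℝ → ℝ)
    (hf : ∀ x, HasDerivAt f (f' x) x) (hf' : Continuous f') (z0 : f δ = 0) :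
    a * (1-a) * (∫ x in δ..(π/2), f x ^ 2 / Real.sin x ^ 2)
      + 2 * (Real.Gamma ((a+1)/2) / Real.Gamma (a/2)) ^ 2 * f (π/2) ^ 2 ≤
      ∫ x in δ..(π/2), f' x ^ 2 := by
  have h := hs_riccati δ (π/2) hδ2 f f' (fun x => hsQ a x / hsP a x)
    (fun x => a*(1-a) / Real.sin x ^ 2) hf hf' ?_ ?_
  · simp only [z0] at h
    rw [hsQP a ha, mul_div_assoc, div_self (hsP_pos a _ ha (by positivity) le_rfl).ne'] at h
    rw [← intervalIntegral.integral_const_mul]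
    have e : ∫ x in δ..(π/2), a*(1-a) * (f x ^ 2 / Real.sin x ^ 2)
        = ∫ x in δ..(π/2), a*(1-a) / Real.sin x ^ 2 * f x ^ 2 := by
      congr 1; ext x; ring
    rw [e]; linarith
  · intro x hx
    have x0 : 0 < x := lt_of_lt_of_le hδ hx.1
    have hP := hsP_pos a x ha x0 hx.2
    have hs := (hs_dom x0 hx.2).1
    refine ((hsQ_deriv a x ha x0 hx.2).div (hsP_deriv a x ha x0 hx.2) hP.ne').congr_deriv ?_
    field_simp
  · intro x hx
    have hs := (hs_dom (lt_of_lt_of_le hδ hx.1) hx.2).1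
    have : ContinuousAt (fun x => a*(1-a) / Real.sin x ^ 2) x :=
      continuousAt_const.div (Real.continuous_sin.continuousAt.pow 2) (by positivity)
    exact this.continuousWithinAt

lemma hs_mid (β c : ℝ) (hβ1 : π < β) (hβ : β ≤ 2*π) (hc : 0 < c) (hc4 : c ≤ 1/4) (f f' : ℝ → ℝ)
    (hf : ∀ x, HasDerivAt f (f' x) x) (hf' : Continuous f') :
    c * (∫ x in (π/2)..(β-π/2), f x ^ 2)
      - Real.sqrt c * Real.tan (Real.sqrt c * ((β - π)/2)) * (f (π/2) ^ 2 + f (β-π/2)^2) ≤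
      ∫ x in (π/2)..(β-π/2), f' x ^ 2 := by
  have hs0 : 0 < Real.sqrt c := Real.sqrt_pos.2 hc
  have hs1 : Real.sqrt c ≤ 1/2 := by
    rw [Real.sqrt_le_left (by norm_num)]; linarith
  have hpi := Real.pi_pos
  have h := hs_riccati (π/2) (β-π/2) (by linarith) f f'
    (fun x => Real.sqrt c * Real.tan (Real.sqrt c * (β/2 - x))) (fun _ => c) hf hf' ?_
    continuousOn_const
  · simp only [intervalIntegral.integral_const_mul] at h
    rw [show β/2 - (β - π/2) = -((β-π)/2) by ring, show β/2 - π/2 = (β-π)/2 by ring, mul_neg,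
      Real.tan_neg] at h
    linarith
  · intro x hx
    have hcos : 0 < Real.cos (Real.sqrt c * (β/2 - x)) := by
      apply Real.cos_pos_of_mem_Ioo
      constructor
      · nlinarith [hx.1, hx.2]
      · nlinarith [hx.1, hx.2]
    have h1 : HasDerivAt (fun x => Real.sqrt c * (β/2 - x)) (Real.sqrt c * (-1)) x :=
      ((hasDerivAt_id x).const_sub (β/2)).const_mul _
    have h2 := ((Real.hasDerivAt_tan hcos.ne').comp x h1).const_mul (Real.sqrt c)
    refine h2.congr_deriv ?_
    have hsc := Real.sin_sq_add_cos_sq (Real.sqrt c * (β/2 - x))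
    rw [Real.tan_eq_sin_div_cos]
    generalize Real.sqrt c * (β/2 - x) = y at hsc hcos ⊢
    have hq : Real.sqrt c ^ 2 = c := Real.sq_sqrt hc.le
    rw [mul_pow, div_pow, hq,
      show Real.sqrt c * (1 / Real.cos y ^ 2 * (Real.sqrt c * -1)) =
        - (Real.sqrt c ^ 2) / Real.cos y ^ 2 by ring, hq]
    field_simp
    linear_combination hsc

lemma hs_one_dim (β c a : ℝ) (hβ1 : π < β) (hβ : β ≤ 2*π) (hc : 0 < c) (hc4 : c ≤ 1/4)
    (ha : 0 < a) (hac : a * (1-a) = c)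
    (hTG : Real.sqrt c * Real.tan (Real.sqrt c * ((β - π)/2)) ≤
      2 * (Real.Gamma ((a+1)/2) / Real.Gamma (a/2)) ^ 2)
    (δ : ℝ) (hδ : 0 < δ) (hδ2 : δ ≤ π/2) (f f' : ℝ → ℝ)
    (hf : ∀ x, HasDerivAt f (f' x) x) (hf' : Continuous f')
    (z0 : ∀ x ∈ Icc 0 δ, f x = 0) (z1 : ∀ x ∈ Icc (β - δ) β, f x = 0) :
    c * ∫ x in (0:ℝ)..β, f x ^ 2 / hsW β x ^ 2 ≤ ∫ x in (0:ℝ)..β, f' x ^ 2 := by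
  have hpi := Real.pi_pos
  have hfc : Continuous f := continuous_iff_continuousAt.2 fun x => (hf x).continuousAt
  have hqc := hs_quot_cont β δ hβ1 hδ f hfc z0 z1
  have hI : ∀ x ∈ Icc 0 β, ∀ y ∈ Icc 0 β,
      IntervalIntegrable (fun x => f x ^ 2 / hsW β x ^ 2) volume x y := by
    intro x hx y hy
    exact (hqc.mono (uIcc_subset_Icc hx hy)).intervalIntegrable
  have hJ : ∀ x y, IntervalIntegrable (fun x => f' x ^ 2) volume x y := fun x y =>
    (hf'.pow 2).intervalIntegrable _ _
  have m0 : (0:ℝ) ∈ Icc 0 β := ⟨le_rfl, by linarith⟩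
  have m1 : δ ∈ Icc 0 β := ⟨hδ.le, by linarith⟩
  have m2 : π/2 ∈ Icc 0 β := ⟨by linarith, by linarith⟩
  have m3 : β - π/2 ∈ Icc 0 β := ⟨by linarith, by linarith⟩
  have m4 : β - δ ∈ Icc 0 β := ⟨by linarith, by linarith⟩
  have m5 : β ∈ Icc 0 β := ⟨by linarith, le_rfl⟩
  rw [← intervalIntegral.integral_add_adjacent_intervals (hI _ m0 _ m1) (hI _ m1 _ m5),
    ← intervalIntegral.integral_add_adjacent_intervals (hI _ m1 _ m2) (hI _ m2 _ m5),
    ← intervalIntegral.integral_add_adjacent_intervals (hI _ m2 _ m3) (hI _ m3 _ m5),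
    ← intervalIntegral.integral_add_adjacent_intervals (hI _ m3 _ m4) (hI _ m4 _ m5),
    ← intervalIntegral.integral_add_adjacent_intervals (hJ 0 δ) (hJ δ β),
    ← intervalIntegral.integral_add_adjacent_intervals (hJ δ (π/2)) (hJ _ β),
    ← intervalIntegral.integral_add_adjacent_intervals (hJ (π/2) (β-π/2)) (hJ _ β),
    ← intervalIntegral.integral_add_adjacent_intervals (hJ (β-π/2) (β-δ)) (hJ _ β)]
  have q0 : ∫ x in (0:ℝ)..δ, f x ^ 2 / hsW β x ^ 2 = 0 := by
    rw [intervalIntegral.integral_congr (g := fun _ => (0:ℝ))]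
    · simp
    · intro x hx; rw [uIcc_of_le hδ.le] at hx; simp [z0 x hx]
  have q4 : ∫ x in (β-δ)..β, f x ^ 2 / hsW β x ^ 2 = 0 := by
    rw [intervalIntegral.integral_congr (g := fun _ => (0:ℝ))]
    · simp
    · intro x hx; rw [uIcc_of_le (by linarith)] at hx; simp [z1 x hx]
  have q1 : ∫ x in δ..(π/2), f x ^ 2 / hsW β x ^ 2 = ∫ x in δ..(π/2), f x ^ 2 / Real.sin x ^ 2 := by
    refine intervalIntegral.integral_congr fun x hx => ?_
    rw [uIcc_of_le hδ2] at hx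
    simp [hsW, hx.2]
  have q2 : ∫ x in (π/2)..(β-π/2), f x ^ 2 / hsW β x ^ 2 = ∫ x in (π/2)..(β-π/2), f x ^ 2 := by
    refine intervalIntegral.integral_congr fun x hx => ?_
    rw [uIcc_of_le (by linarith)] at hx
    simp only [hsW, hx.2, if_true]
    split_ifs with h
    · rw [le_antisymm h hx.1]; simp
    · simp
  have q3 : ∫ x in (β-π/2)..(β-δ), f x ^ 2 / hsW β x ^ 2
      = ∫ x in δ..(π/2), f (β-x) ^ 2 / Real.sin x ^ 2 := by
    have := intervalIntegral.integral_comp_sub_left (a := δ) (b := π/2)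
      (fun x => f x ^ 2 / hsW β x ^ 2) β
    rw [← this]
    refine intervalIntegral.integral_congr fun x hx => ?_
    rw [uIcc_of_le hδ2] at hx
    have : hsW β (β - x) = Real.sin x := by
      simp only [hsW]
      rw [if_neg (by linarith [hx.2])]
      split_ifs with h
      · rw [show x = π/2 by linarith [hx.2]]; simp
      · congr 1; ring
    simp only [this]
  have r3 : ∫ x in (β-π/2)..(β-δ), f' x ^ 2 = ∫ x in δ..(π/2), (-f' (β-x)) ^ 2 := by
    have := intervalIntegral.integral_comp_sub_left (a := δ) (b := π/2) (fun x => f' x ^ 2) β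
    rw [← this]; simp only [neg_sq]
  have p0 : 0 ≤ ∫ x in (0:ℝ)..δ, f' x ^ 2 :=
    intervalIntegral.integral_nonneg hδ.le fun x _ => sq_nonneg _
  have p4 : 0 ≤ ∫ x in (β-δ)..β, f' x ^ 2 :=
    intervalIntegral.integral_nonneg (by linarith) fun x _ => sq_nonneg _
  have l1 := hs_left a δ ha hδ hδ2 f f' hf hf' (z0 δ ⟨hδ.le, le_rfl⟩)
  have l3 := hs_left a δ ha hδ hδ2 (fun x => f (β - x)) (fun x => -f' (β-x)) (fun x => by
    have := (hf (β - x)).comp x ((hasDerivAt_id x).const_sub β)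
    refine this.congr_deriv ?_
    ring) (by fun_prop) (z1 _ ⟨le_rfl, by linarith⟩)
  have l2 := hs_mid β c hβ1 hβ hc hc4 f f' hf hf'
  rw [hac] at l1 l3
  rw [q0, q1, q2, q3, q4, r3]
  have k1 := mul_le_mul_of_nonneg_right hTG (sq_nonneg (f (π/2)))
  have k2 := mul_le_mul_of_nonneg_right hTG (sq_nonneg (f (β - π/2)))
  linarith

/-- a compact subset of the sector lies in a polar box -/
lemma hs_box (β : ℝ) (hβ1 : π < β) (hβ : β ≤ 2*π) (K : Set E2) (hK : IsCompact K)
    (hKs : K ⊆ sector β) : ∃ r1 r2 δ : ℝ, 0 < r1 ∧ 0 < δ ∧ δ ≤ π/2 ∧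
      ∀ y ∈ K, r1 ≤ ‖y‖ ∧ ‖y‖ ≤ r2 ∧ δ ≤ hsArg y ∧ hsArg y ≤ β - δ := by
  have hpi := Real.pi_pos
  rcases K.eq_empty_or_nonempty with rfl | hne
  · exact ⟨1, 1, π/2, by norm_num, by positivity, le_rfl, by simp⟩
  have hc : ContinuousOn hsArg K := fun y hy =>
    (hsArg_contDiffAt β hβ y (hKs hy)).continuousAt.continuousWithinAt
  obtain ⟨y1, hy1, h1⟩ := hK.exists_isMinOn hne continuous_norm.continuousOn
  obtain ⟨y2, hy2, h2⟩ := hK.exists_isMaxOn hne continuous_norm.continuousOn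
  obtain ⟨y3, hy3, h3⟩ := hK.exists_isMinOn hne hc
  obtain ⟨y4, hy4, h4⟩ := hK.exists_isMaxOn hne hc
  have hm1 := (hs_mem_sector β hβ y1).1 (hKs hy1)
  have hm4 := (hs_mem_sector β hβ y4).1 (hKs hy4)
  refine ⟨‖y1‖, ‖y2‖, min (π/2) (min (hsArg y3) (β - hsArg y4)), norm_pos_iff.2 hm1.1, ?_,
    min_le_left _ _, ?_⟩
  · exact lt_min (by positivity) (lt_min (hsArg_mem y3).1 (by linarith [hm4.2]))
  · intro y hy
    refine ⟨h1 hy, h2 hy, ((min_le_right _ _).trans (min_le_left _ _)).trans (h3 hy), ?_⟩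
    have : min (π/2) (min (hsArg y3) (β - hsArg y4)) ≤ β - hsArg y4 :=
      (min_le_right _ _).trans (min_le_right _ _)
    have h5 : hsArg y ≤ hsArg y4 := h4 hy
    linarith

lemma hs_integrable (β : ℝ) (hβ1 : π < β) (hβ : β ≤ 2*π) (K : Set E2) (hK : IsCompact K)
    (hKs : K ⊆ sector β) (F : E2 → ℝ) (hF : ContinuousOn F (sector β)) (hF0 : ∀ y, y ∉ K → F y = 0) :
    IntegrableOn (fun p : ℝ × ℝ => p.1 * F (hsPsi p.1 p.2)) (Ioi (0:ℝ) ×ˢ Ioo 0 β) := by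
  obtain ⟨r1, r2, δ, hr1, hδ, hδ2, hbox⟩ := hs_box β hβ1 hβ K hK hKs
  have hsub : Icc r1 r2 ×ˢ Icc δ (β - δ) ⊆ Ioi (0:ℝ) ×ˢ Ioo 0 β := by
    rintro p ⟨h1, h2⟩
    exact ⟨lt_of_lt_of_le hr1 h1.1, lt_of_lt_of_le hδ h2.1, by linarith [h2.2]⟩
  have hcomp : IsCompact (Icc r1 r2 ×ˢ Icc δ (β - δ)) := isCompact_Icc.prod isCompact_Icc
  have hI : IntegrableOn (fun p : ℝ × ℝ => p.1 * F (hsPsi p.1 p.2)) (Icc r1 r2 ×ˢ Icc δ (β - δ)) := by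
    refine ContinuousOn.integrableOn_compact hcomp ?_
    refine continuous_fst.continuousOn.mul (hF.comp hsPsi_cont.continuousOn ?_)
    intro p hp
    have := hsub hp
    exact hsPsi_mem_sector β _ _ this.1 this.2.1 this.2.2
  refine hI.of_forall_sdiff_eq_zero (measurableSet_Ioi.prod measurableSet_Ioo) ?_
  rintro p ⟨hp, hp2⟩
  rw [hF0, mul_zero]
  intro hk
  apply hp2
  have := hbox _ hk
  rw [hsPsi_norm _ _ (le_of_lt hp.1), hsArg_Psi _ _ hp.1 hp.2.1 (by linarith [hp.2.2])] at this
  exact ⟨⟨this.1, this.2.1⟩, this.2.2.1, this.2.2.2⟩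

lemma hs_hasDerivAt_theta (u : E2 → ℝ) (hu : Differentiable ℝ u) (r θ : ℝ) :
    HasDerivAt (fun θ => u (hsPsi r θ)) (fderiv ℝ u (hsPsi r θ) (hsPsi r (θ + π/2))) θ := by
  have hpsi : ∀ r θ, hsPsi r θ = (r * Real.cos θ) • (EuclideanSpace.single (0 : Fin 2) (1:ℝ) : E2)
      + (r * Real.sin θ) • (EuclideanSpace.single (1 : Fin 2) (1:ℝ) : E2) := by
    intro r θ
    ext i; fin_cases i <;> simp
  have d2 : HasDerivAt (fun θ => hsPsi r θ) (hsPsi r (θ + π/2)) θ := by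
    simp only [hpsi, Real.cos_add_pi_div_two, Real.sin_add_pi_div_two]
    exact (((Real.hasDerivAt_cos θ).const_mul r).smul_const _).add
      (((Real.hasDerivAt_sin θ).const_mul r).smul_const _)
  exact (hu _).hasFDerivAt.comp_hasDerivAt θ d2

lemma hs_lower (β c a : ℝ) (hβ1 : π < β) (hβ : β ≤ 2*π) (hc : 0 < c) (hc4 : c ≤ 1/4)
    (ha : 0 < a) (hac : a * (1-a) = c)
    (hTG : Real.sqrt c * Real.tan (Real.sqrt c * ((β - π)/2)) ≤
      2 * (Real.Gamma ((a+1)/2) / Real.Gamma (a/2)) ^ 2)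
    (u : E2 → ℝ) (hu : ContDiff ℝ (⊤ : ℕ∞) u) (hcs : HasCompactSupport u)
    (hts : tsupport u ⊆ sector β) :
    c * ∫ x in sector β, (u x) ^ 2 / (Metric.infDist x (frontier (sector β))) ^ 2 ≤
          ∫ x in sector β, ‖gradient u x‖ ^ 2 := by
  have hpi := Real.pi_pos
  have hud : Differentiable ℝ u := hu.differentiable (by simp)
  have hgn : ∀ x, ‖gradient u x‖ = ‖fderiv ℝ u x‖ := by
    intro x; simp [gradient]
  have hfc : Continuous (fderiv ℝ u) := hu.continuous_fderiv (by simp)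
  have hgc : Continuous (fun x => ‖gradient u x‖ ^ 2) := by
    simp only [hgn]; fun_prop
  have I1 := hs_integrable β hβ1 hβ (tsupport u) hcs hts
    (fun x => (u x) ^ 2 / (Metric.infDist x (frontier (sector β))) ^ 2) (by
      refine ContinuousOn.div (hu.continuous.pow 2).continuousOn
        ((Metric.continuous_infDist_pt _).pow 2).continuousOn ?_
      intro y hy
      have hm := (hs_mem_sector β hβ y).1 hy
      rw [← hsPsi_arg y, hs_infDist β hβ1 hβ _ _ (norm_pos_iff.2 hm.1) (hsArg_mem y).1 hm.2]
      have := hsW_pos β _ (hsArg_mem y).1 hm.2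
      have := norm_pos_iff.2 hm.1
      positivity) (fun y hy => by simp [image_eq_zero_of_notMem_tsupport hy])
  have I2 := hs_integrable β hβ1 hβ (tsupport u) hcs hts
    (fun x => ‖gradient u x‖ ^ 2) hgc.continuousOn (fun y hy => by
      simp only [hgn]
      rw [image_eq_zero_of_notMem_tsupport (fun h => hy (tsupport_fderiv_subset ℝ h))]; simp)
  rw [hs_integral_sector β hβ, hs_integral_sector β hβ]
  obtain ⟨r1, r2, δ, hr1, hδ, hδ2, hbox⟩ := hs_box β hβ1 hβ _ hcs hts
  have I1' := I1; have I2' := I2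
  rw [Measure.volume_eq_prod] at I1 I2 ⊢
  rw [setIntegral_prod _ I1, setIntegral_prod _ I2, ← integral_const_mul]
  rw [IntegrableOn, ← Measure.prod_restrict] at I1 I2
  refine setIntegral_mono_on (I1.integral_prod_left.const_mul c) I2.integral_prod_left
    measurableSet_Ioi ?_
  intro r hr
  have hr0 : (0:ℝ) < r := hr
  set f : ℝ → ℝ := fun θ => u (hsPsi r θ) with hf
  set f' : ℝ → ℝ := fun θ => fderiv ℝ u (hsPsi r θ) (hsPsi r (θ + π/2)) with hf'
  have hd := hs_hasDerivAt_theta u hud r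
  have hpc : Continuous (fun θ => hsPsi r θ) := hsPsi_cont.comp (by fun_prop : Continuous fun θ => (r, θ))
  have hpc2 : Continuous (fun θ => hsPsi r (θ + π/2)) := hpc.comp (by fun_prop)
  have hf'c : Continuous f' := by
    exact (hfc.comp hpc).clm_apply hpc2
  have hz : ∀ θ, 0 < θ → θ ≤ 2*π → (¬ (δ ≤ θ ∧ θ ≤ β - δ)) → f θ = 0 := by
    intro θ h0 h1 h2
    refine image_eq_zero_of_notMem_tsupport (f := u) ?_
    intro hm
    have := hbox _ hm
    rw [hsArg_Psi _ _ hr0 h0 h1] at this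
    exact h2 this.2.2
  have hfcont : Continuous f := hu.continuous.comp hpc
  -- slightly smaller δ
  have z0 : ∀ x ∈ Icc 0 (δ/2), f x = 0 := by
    intro x hx
    rcases eq_or_lt_of_le hx.1 with h | h
    · have e : f x = f (2*π) := by
        simp only [hf]; congr 1; ext i; fin_cases i <;> simp [hsPsi, ← h]
      rw [e]
      exact hz _ (by positivity) le_rfl (by intro hh; linarith [hh.2])
    · exact hz x h (by linarith [hx.2]) (by intro hh; linarith [hh.1, hx.2])
  have z1 : ∀ x ∈ Icc (β - δ/2) β, f x = 0 := by
    intro x hx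
    exact hz x (by linarith [hx.1]) (by linarith [hx.2]) (by intro hh; linarith [hh.2, hx.1])
  have key := hs_one_dim β c a hβ1 hβ hc hc4 ha hac hTG (δ/2) (by linarith) (by linarith) f f' hd hf'c
    z0 z1
  rw [intervalIntegral.integral_of_le (by linarith), intervalIntegral.integral_of_le (by linarith),
    integral_Ioc_eq_integral_Ioo, integral_Ioc_eq_integral_Ioo] at key
  have e1 : ∫ θ in Ioo 0 β, r * (u (hsPsi r θ) ^ 2 / Metric.infDist (hsPsi r θ) (frontier (sector β)) ^ 2)
      = r⁻¹ * ∫ θ in Ioo 0 β, f θ ^ 2 / hsW β θ ^ 2 := by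
    rw [← integral_const_mul]
    refine setIntegral_congr_fun measurableSet_Ioo fun θ hθ => ?_
    rw [hs_infDist β hβ1 hβ r θ hr0 hθ.1 hθ.2]
    have := hsW_pos β θ hθ.1 hθ.2
    simp only [hf]
    field_simp
  have e2 : r⁻¹ * ∫ θ in Ioo 0 β, f' θ ^ 2 ≤ ∫ θ in Ioo 0 β, r * ‖gradient u (hsPsi r θ)‖ ^ 2 := by
    rw [← integral_const_mul]
    refine setIntegral_mono_on ?_ ?_ measurableSet_Ioo ?_
    · exact (((hf'c.pow 2).const_mul _).integrableOn_Icc).mono_set Ioo_subset_Icc_self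
    · exact (((hgc.comp hpc).const_mul r).integrableOn_Icc).mono_set Ioo_subset_Icc_self
    · intro θ _
      have h := (fderiv ℝ u (hsPsi r θ)).le_opNorm (hsPsi r (θ + π/2))
      rw [hsPsi_norm _ _ hr0.le, Real.norm_eq_abs] at h
      have h2 : f' θ ^ 2 ≤ (‖fderiv ℝ u (hsPsi r θ)‖ * r) ^ 2 := by
        rw [← sq_abs (f' θ)]
        exact pow_le_pow_left₀ (abs_nonneg _) h 2
      rw [hgn]
      calc r⁻¹ * f' θ ^ 2 ≤ r⁻¹ * (‖fderiv ℝ u (hsPsi r θ)‖ * r) ^ 2 :=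
            mul_le_mul_of_nonneg_left h2 (by positivity)
        _ = _ := by field_simp
  calc _ = r⁻¹ * (c * ∫ θ in Ioo 0 β, f θ ^ 2 / hsW β θ ^ 2) := by rw [e1]; ring
    _ ≤ r⁻¹ * ∫ θ in Ioo 0 β, f' θ ^ 2 := mul_le_mul_of_nonneg_left key (by positivity)
    _ ≤ _ := e2

def hsAdm (β c : ℝ) : Prop := ∀ u : E2 → ℝ, ContDiff ℝ (⊤ : ℕ∞) u → HasCompactSupport u →
  tsupport u ⊆ sector β →
        c * ∫ x in sector β, (u x) ^ 2 / (Metric.infDist x (frontier (sector β))) ^ 2 ≤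
          ∫ x in sector β, ‖gradient u x‖ ^ 2

lemma hs_intOn (r1 r2 : ℝ) (h1 : 0 < r1) (f : ℝ → ℝ) (hf : ContinuousOn f (Ioi 0))
    (h0 : ∀ r, r ∉ Icc r1 r2 → f r = 0) : IntegrableOn f (Ioi 0) := by
  have : IntegrableOn f (Icc r1 r2) :=
    (hf.mono fun x hx => lt_of_lt_of_le h1 hx.1).integrableOn_compact isCompact_Icc
  exact this.of_forall_sdiff_eq_zero measurableSet_Ioi fun x hx => h0 x hx.2

lemma hs_deriv_zero (r1 r2 : ℝ) (f : ℝ → ℝ)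
    (h0 : ∀ r, r ∉ Icc r1 r2 → f r = 0) (r : ℝ) (hr : r ∉ Icc r1 r2) : deriv f r = 0 := by
  have : f =ᶠ[nhds r] fun _ => 0 := by
    filter_upwards [isClosed_Icc.isOpen_compl.mem_nhds hr] with y hy using h0 y hy
  rw [this.deriv_eq]; simp

lemma hs_D1a (β c : ℝ) (hβ1 : π < β) (hβ : β ≤ 2*π) (hc : hsAdm β c) (δ : ℝ) (hδ : 0 < δ)
    (φ : ℝ → ℝ) (hφ : ContDiff ℝ (⊤ : ℕ∞) φ) (hφ0 : ∀ θ, θ ∉ Icc δ (β - δ) → φ θ = 0)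
    (r1 r2 : ℝ) (hr1 : 0 < r1) (χ : ℝ → ℝ) (hχ : ∀ r, 0 < r → ContDiffAt ℝ (⊤ : ℕ∞) χ r)
    (hχ0 : ∀ r, r ∉ Icc r1 r2 → χ r = 0) :
    c * ((∫ r in Ioi (0:ℝ), χ r ^ 2 / r) * ∫ θ in Ioo 0 β, φ θ ^ 2 / hsW β θ ^ 2) ≤
      (∫ r in Ioi (0:ℝ), r * deriv χ r ^ 2) * (∫ θ in Ioo 0 β, φ θ ^ 2) +
      (∫ r in Ioi (0:ℝ), χ r ^ 2 / r) * (∫ θ in Ioo 0 β, deriv φ θ ^ 2) := by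
  have hpi := Real.pi_pos
  set u : E2 → ℝ := fun y => χ ‖y‖ * φ (hsArg y) with hu
  set K : Set E2 := (fun p : ℝ × ℝ => hsPsi p.1 p.2) '' (Icc r1 r2 ×ˢ Icc δ (β - δ)) with hK
  have hKc : IsCompact K := (isCompact_Icc.prod isCompact_Icc).image hsPsi_cont
  have hKs : K ⊆ sector β := by
    rintro _ ⟨p, hp, rfl⟩
    exact hsPsi_mem_sector β _ _ (lt_of_lt_of_le hr1 hp.1.1) (lt_of_lt_of_le hδ hp.2.1)
      (by linarith [hp.2.2])
  have hu0 : ∀ y, y ∉ K → u y = 0 := by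
    intro y hy
    by_contra hne
    have h1 : ‖y‖ ∈ Icc r1 r2 := by
      by_contra h; exact hne (by simp [hu, hχ0 _ h])
    have h2 : hsArg y ∈ Icc δ (β - δ) := by
      by_contra h; exact hne (by simp [hu, hφ0 _ h])
    exact hy ⟨(‖y‖, hsArg y), ⟨h1, h2⟩, hsPsi_arg y⟩
  have hts : tsupport u ⊆ K := by
    refine closure_minimal ?_ hKc.isClosed
    intro y hy
    by_contra h; exact hy (hu0 y h)
  have hcs : HasCompactSupport u := hKc.of_isClosed_subset (isClosed_tsupport u) hts
  have husm : ContDiff ℝ (⊤ : ℕ∞) u := by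
    rw [contDiff_iff_contDiffAt]
    intro y
    by_cases hy : y ∈ sector β
    · have hm := (hs_mem_sector β hβ y).1 hy
      have n1 : ContDiffAt ℝ (⊤ : ℕ∞) (fun y : E2 => ‖y‖) y := contDiffAt_norm ℝ hm.1
      exact ((hχ _ (norm_pos_iff.2 hm.1)).comp y n1).mul
        (hφ.contDiffAt.comp y (hsArg_contDiffAt β hβ y hy))
    · have : u =ᶠ[nhds y] fun _ => 0 := by
        filter_upwards [hKc.isClosed.isOpen_compl.mem_nhds (fun h => hy (hKs h))] with z hz
          using hu0 z hz
      exact contDiffAt_const.congr_of_eventuallyEq this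
  have key := hc u husm hcs (hts.trans hKs)
  have huP : ∀ r θ, 0 < r → 0 < θ → θ < β → u (hsPsi r θ) = χ r * φ θ := by
    intro r θ hr h0 h1
    simp only [hu]
    rw [hsPsi_norm _ _ hr.le, hsArg_Psi _ _ hr h0 (by linarith)]
  rw [hs_integral_sector β hβ, hs_integral_sector β hβ] at key
  have hmeas : MeasurableSet (Ioi (0:ℝ) ×ˢ Ioo 0 β) := measurableSet_Ioi.prod measurableSet_Ioo
  have e1 : ∫ p in Ioi (0:ℝ) ×ˢ Ioo 0 β, p.1 * (u (hsPsi p.1 p.2) ^ 2 /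
        Metric.infDist (hsPsi p.1 p.2) (frontier (sector β)) ^ 2) =
      (∫ r in Ioi (0:ℝ), χ r ^ 2 / r) * ∫ θ in Ioo 0 β, φ θ ^ 2 / hsW β θ ^ 2 := by
    rw [Measure.volume_eq_prod, ← setIntegral_prod_mul]
    refine setIntegral_congr_fun hmeas fun p hp => ?_
    have hp1 : 0 < p.1 := hp.1
    have := hsW_pos β p.2 hp.2.1 hp.2.2
    rw [hs_infDist β hβ1 hβ _ _ hp.1 hp.2.1 hp.2.2, huP _ _ hp.1 hp.2.1 hp.2.2]
    field_simp
  have hχd : ∀ r, 0 < r → HasDerivAt χ (deriv χ r) r := fun r hr =>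
    ((hχ r hr).differentiableAt (by simp)).hasDerivAt
  have hφd : ∀ r, HasDerivAt φ (deriv φ r) r := fun r =>
    ((hφ.differentiable (by simp)) r).hasDerivAt
  have hχc : ContinuousOn χ (Ioi 0) := fun r hr => (hχ r hr).continuousAt.continuousWithinAt
  have hχc' : ContinuousOn (deriv χ) (Ioi 0) := by
    have : ContDiffOn ℝ (⊤ : ℕ∞) χ (Ioi 0) := fun r hr => (hχ r hr).contDiffWithinAt
    exact this.continuousOn_deriv_of_isOpen isOpen_Ioi (by simp)
  have hφc' : Continuous (deriv φ) := hφ.continuous_deriv (by simp)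
  have I1 : IntegrableOn (fun r => χ r ^ 2 / r) (Ioi 0) := by
    refine hs_intOn r1 r2 hr1 _ ?_ ?_
    · exact (hχc.pow 2).div continuousOn_id (fun x hx => (ne_of_gt hx))
    · intro r hr; simp [hχ0 r hr]
  have I2 : IntegrableOn (fun r => r * deriv χ r ^ 2) (Ioi 0) := by
    refine hs_intOn r1 r2 hr1 _ ?_ ?_
    · exact continuousOn_id.mul (hχc'.pow 2)
    · intro r hr; simp [hs_deriv_zero _ _ _ hχ0 r hr]
  have J1 : IntegrableOn (fun r => φ r ^ 2) (Ioo 0 β) :=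
    ((hφ.continuous.pow 2).integrableOn_Icc).mono_set Ioo_subset_Icc_self
  have J2 : IntegrableOn (fun r => deriv φ r ^ 2) (Ioo 0 β) :=
    ((hφc'.pow 2).integrableOn_Icc).mono_set Ioo_subset_Icc_self
  have e2 : ∫ p in Ioi (0:ℝ) ×ˢ Ioo 0 β, p.1 * ‖gradient u (hsPsi p.1 p.2)‖ ^ 2 =
      (∫ r in Ioi (0:ℝ), r * deriv χ r ^ 2) * (∫ θ in Ioo 0 β, φ θ ^ 2) +
      (∫ r in Ioi (0:ℝ), χ r ^ 2 / r) * (∫ θ in Ioo 0 β, deriv φ θ ^ 2) := by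
    rw [Measure.volume_eq_prod, ← setIntegral_prod_mul, ← setIntegral_prod_mul, ← integral_add]
    · refine setIntegral_congr_fun hmeas fun p hp => ?_
      have hp1 : 0 < p.1 := hp.1
      rw [hs_gradient u p.1 p.2 (deriv χ p.1 * φ p.2) (χ p.1 * deriv φ p.2) hp.1
        (husm.differentiable (by simp) _)]
      · field_simp
      · refine ((hχd _ hp1).mul_const (φ p.2)).congr_of_eventuallyEq ?_
        filter_upwards [Ioi_mem_nhds hp1] with r hr using huP _ _ hr hp.2.1 hp.2.2
      · refine ((hφd p.2).const_mul (χ p.1)).congr_of_eventuallyEq ?_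
        filter_upwards [Ioo_mem_nhds hp.2.1 hp.2.2] with r hr using huP _ _ hp1 hr.1 hr.2
    · rw [← Measure.prod_restrict]; exact I2.mul_prod J1
    · rw [← Measure.prod_restrict]; exact I1.mul_prod J2
  rw [e1, e2] at key
  exact key

lemma hs_subst (g : ℝ → ℝ) (ε : ℝ) (hε : 0 < ε) :
    ∫ r in Ioi (0:ℝ), r ^ (ε - 1) * g (r ^ ε) = (1/ε) * ∫ r in Ioi (0:ℝ), g r := by
  rw [← integral_comp_rpow_Ioi g hε.ne', ← integral_const_mul]
  refine setIntegral_congr_fun measurableSet_Ioi fun p hp => ?_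
  simp only [abs_of_pos hε, smul_eq_mul]
  field_simp

lemma hs_rpow_deriv (h : ℝ → ℝ) (h' ε r : ℝ) (hr : 0 < r) (hh : HasDerivAt h h' (r ^ ε)) :
    HasDerivAt (fun r => h (r ^ ε)) (h' * (ε * r ^ (ε - 1))) r :=
  hh.comp r (Real.hasDerivAt_rpow_const (Or.inl hr.ne'))

lemma hs_lim (A B C D : ℝ) (h : ∀ ε, 0 < ε → ε ≤ 1 → A ≤ B + C * ε + D * ε^2) : A ≤ B := by
  have hc : Filter.Tendsto (fun ε : ℝ => B + C * ε + D * ε^2) (nhdsWithin 0 (Ioi 0)) (nhds B) := by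
    have : Continuous (fun ε : ℝ => B + C * ε + D * ε^2) := by fun_prop
    have := (this.tendsto 0).mono_left (nhdsWithin_le_nhds (s := Ioi 0))
    simpa using this
  refine ge_of_tendsto hc ?_
  filter_upwards [Ioc_mem_nhdsGT (zero_lt_one' ℝ)] with ε hε using h ε hε.1 hε.2

lemma hs_bump : ∃ h : ℝ → ℝ, ContDiff ℝ (⊤ : ℕ∞) h ∧ (∀ r, r ∉ Icc (1/4) (3/4) → h r = 0) ∧
    0 < ∫ r in Ioi (0:ℝ), h r ^ 2 / r := by
  let b : ContDiffBump (1/2 : ℝ) := ⟨1/8, 1/4, by norm_num, by norm_num⟩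
  have hb0 : ∀ r, r ∉ Icc (1/4 : ℝ) (3/4) → b r = 0 := by
    intro r hr
    apply b.zero_of_le_dist
    show (1/4 : ℝ) ≤ _
    rw [Real.dist_eq]
    by_contra hlt
    push Not at hlt
    rw [abs_lt] at hlt
    exact hr ⟨by linarith, by linarith⟩
  have hbc : Continuous b := b.continuous
  refine ⟨b, b.contDiff, hb0, ?_⟩
  have hI : IntegrableOn (fun r => b r ^ 2 / r) (Ioi 0) := by
    refine hs_intOn (1/4) (3/4) (by norm_num) _ ?_ ?_
    · exact (hbc.pow 2).continuousOn.div continuousOn_id (fun x hx => (ne_of_gt hx))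
    · intro r hr; simp [hb0 r hr]
  have hlow : ∫ r in Icc (3/8:ℝ) (5/8), (1:ℝ) ≤ ∫ r in Icc (3/8:ℝ) (5/8), b r ^ 2 / r := by
    have hsub : Icc (3/8:ℝ) (5/8) ⊆ Ioi 0 := fun x hx => lt_of_lt_of_le (by norm_num) hx.1
    refine setIntegral_mono_on (by simp) (hI.mono_set hsub) measurableSet_Icc ?_
    intro x hx
    rw [b.one_of_mem_closedBall]
    · have : 0 < x := hsub hx
      rw [le_div_iff₀ this]; linarith [hx.2]
    · show dist x _ ≤ (1/8 : ℝ)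
      rw [Real.dist_eq, abs_le]; constructor <;> linarith [hx.1, hx.2]
  have hmono : ∫ r in Icc (3/8:ℝ) (5/8), b r ^ 2 / r ≤ ∫ r in Ioi (0:ℝ), b r ^ 2 / r := by
    refine setIntegral_mono_set hI ?_ ?_
    · filter_upwards [self_mem_ae_restrict measurableSet_Ioi] with x hx
      have : (0:ℝ) < x := hx
      simp only [Pi.zero_apply]; positivity
    · exact Filter.Eventually.of_forall fun x hx => lt_of_lt_of_le (by norm_num) hx.1
  have : ∫ r in Icc (3/8:ℝ) (5/8), (1:ℝ) = 1/4 := by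
    simp; norm_num
  linarith

lemma hs_bump_rpow (h : ℝ → ℝ) (a b : ℝ) (ha : 0 < a)  (hb : 0 < b) (h0 : ∀ r, r ∉ Icc a b → h r = 0)
    (ε : ℝ) (hε : 0 < ε) (r : ℝ) (hr0 : 0 ≤ r) (hr : r ∉ Icc (a ^ (1/ε)) (b ^ (1/ε))) :
    h (r ^ ε) = 0 := by
  apply h0
  intro hm
  apply hr
  have e : r = (r ^ ε) ^ (1/ε) := by
    rw [← Real.rpow_mul hr0, mul_one_div_cancel hε.ne', Real.rpow_one]
  rw [e]
  exact ⟨Real.rpow_le_rpow ha.le hm.1 (by positivity),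
    Real.rpow_le_rpow (ha.le.trans hm.1) hm.2 (by positivity)⟩

lemma hs_D1 (β c : ℝ) (hβ1 : π < β) (hβ : β ≤ 2*π) (hc : hsAdm β c) (δ : ℝ) (hδ : 0 < δ)
    (φ : ℝ → ℝ) (hφ : ContDiff ℝ (⊤ : ℕ∞) φ) (hφ0 : ∀ θ, θ ∉ Icc δ (β - δ) → φ θ = 0) :
    c * ∫ θ in (0:ℝ)..β, φ θ ^ 2 / hsW β θ ^ 2 ≤ ∫ θ in (0:ℝ)..β, deriv φ θ ^ 2 := by
  have hpi := Real.pi_pos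
  obtain ⟨h, hh, h0, hpos⟩ := hs_bump
  rw [intervalIntegral.integral_of_le (by linarith), intervalIntegral.integral_of_le (by linarith),
    integral_Ioc_eq_integral_Ioo, integral_Ioc_eq_integral_Ioo]
  set X := ∫ θ in Ioo 0 β, φ θ ^ 2 / hsW β θ ^ 2
  set Y := ∫ θ in Ioo 0 β, deriv φ θ ^ 2
  set Z := ∫ θ in Ioo 0 β, φ θ ^ 2
  set H := ∫ r in Ioi (0:ℝ), h r ^ 2 / r
  set H' := ∫ r in Ioi (0:ℝ), r * deriv h r ^ 2
  have main : c * X * H ≤ Y * H := by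
    apply hs_lim _ _ 0 (H' * Z)
    intro ε hε _
    have hε4 : (0:ℝ) < (1/4) ^ (1/ε) := by positivity
    -- cut off at negative r
    let χ : ℝ → ℝ := fun r => if 0 < r then h (r ^ ε) else 0
    have hχe : ∀ r, 0 < r → χ =ᶠ[nhds r] fun r => h (r ^ ε) := by
      intro r hr
      filter_upwards [Ioi_mem_nhds hr] with s hs
      exact if_pos hs
    have k := hs_D1a β c hβ1 hβ hc δ hδ φ hφ hφ0 ((1/4) ^ (1/ε)) ((3/4) ^ (1/ε)) hε4 χ ?_ ?_
    rotate_left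
    · intro r hr
      refine ContDiffAt.congr_of_eventuallyEq ?_ (hχe r hr)
      exact hh.contDiffAt.comp r (Real.contDiffAt_rpow_const_of_ne hr.ne')
    · intro r hr
      by_cases hr0 : 0 < r
      · simp only [χ, if_pos hr0]
        exact hs_bump_rpow h _ _ (by norm_num) (by norm_num) h0 ε hε r hr0.le hr
      · simp only [χ, if_neg hr0]
    have e1 : ∫ r in Ioi (0:ℝ), χ r ^ 2 / r = (1/ε) * H := by
      rw [← hs_subst (fun r => h r ^ 2 / r) ε hε]
      refine setIntegral_congr_fun measurableSet_Ioi fun r hr => ?_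
      have hr0 : (0:ℝ) < r := hr
      simp only [χ, if_pos hr0]
      rw [Real.rpow_sub_one hr0.ne']
      have : 0 < r ^ ε := by positivity
      field_simp
    have e2 : ∫ r in Ioi (0:ℝ), r * deriv χ r ^ 2 = ε * H' := by
      have := hs_subst (fun r => ε^2 * (r * deriv h r ^ 2)) ε hε
      rw [integral_const_mul] at this
      rw [show ε * H' = 1/ε * (ε^2 * H') by field_simp, ← this]
      refine setIntegral_congr_fun measurableSet_Ioi fun r hr => ?_
      have hr0 : (0:ℝ) < r := hr
      rw [(hχe r hr0).deriv_eq, (hs_rpow_deriv h _ ε r hr0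
        ((hh.differentiable (by simp)) _).hasDerivAt).deriv, Real.rpow_sub_one hr0.ne']
      field_simp
    rw [e1, e2] at k
    have k2 := mul_le_mul_of_nonneg_left k hε.le
    calc c * X * H = ε * (c * (1/ε * H * X)) := by field_simp
      _ ≤ _ := k2
      _ = _ := by field_simp; ring
  exact le_of_mul_le_mul_right main hpos

open scoped Convolution in
lemma hs_moll (β δ : ℝ) (hδ : 0 < δ) (φ φ' : ℝ → ℝ) (hφ : ∀ x, HasDerivAt φ (φ' x) x)
    (hφ' : Continuous φ') (hφ0 : ∀ θ, θ ∉ Icc δ (β - δ) → φ θ = 0) (ε : ℝ) (hε : 0 < ε) :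
    ∃ ψ : ℝ → ℝ, ContDiff ℝ (⊤ : ℕ∞) ψ ∧ (∀ θ, θ ∉ Icc (δ/2) (β - δ/2) → ψ θ = 0) ∧
      (∀ x, |ψ x - φ x| ≤ ε) ∧ (∀ x, |deriv ψ x - φ' x| ≤ ε) := by
  have hφc : Continuous φ := continuous_iff_continuousAt.2 fun x => (hφ x).continuousAt
  have hd : deriv φ = φ' := funext fun x => (hφ x).deriv
  have hφ1 : ContDiff ℝ 1 φ := by
    rw [contDiff_one_iff_deriv]
    exact ⟨fun x => (hφ x).differentiableAt, hd ▸ hφ'⟩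
  have hcs : HasCompactSupport φ := HasCompactSupport.intro isCompact_Icc hφ0
  have hcs' : HasCompactSupport φ' := HasCompactSupport.intro isCompact_Icc
    (fun x hx => by rw [← hd]; exact hs_deriv_zero _ _ _ hφ0 x hx)
  have u1 := hcs.uniformContinuous_of_continuous hφc
  have u2 := hcs'.uniformContinuous_of_continuous hφ'
  obtain ⟨η1, hη1, h1⟩ := Metric.uniformContinuous_iff.1 u1 ε hε
  obtain ⟨η2, hη2, h2⟩ := Metric.uniformContinuous_iff.1 u2 ε hε
  set R := min (δ/2) (min η1 η2) with hR
  have hR0 : 0 < R := lt_min (by linarith) (lt_min hη1 hη2)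
  let b : ContDiffBump (0:ℝ) := ⟨R/2, R, by linarith, by linarith⟩
  have hbR : b.rOut = R := rfl
  set ψ : ℝ → ℝ := (b.normed volume ⋆[ContinuousLinearMap.lsmul ℝ ℝ, volume] φ) with hψ
  refine ⟨ψ, ?_, ?_, ?_, ?_⟩
  · exact b.hasCompactSupport_normed.contDiff_convolution_left _ b.contDiff_normed
      hφc.locallyIntegrable
  · intro θ hθ
    by_contra hne
    have := support_convolution_subset (ContinuousLinearMap.lsmul ℝ ℝ) (μ := volume)
      (f := b.normed volume) (g := φ) hne
    rw [b.support_normed_eq] at this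
    obtain ⟨s, hs, t, ht, rfl⟩ := this
    have ht' : t ∈ Icc δ (β - δ) := by
      by_contra h; exact ht (hφ0 t h)
    rw [hbR, Metric.mem_ball, dist_zero_right, Real.norm_eq_abs, abs_lt] at hs
    have : R ≤ δ/2 := min_le_left _ _
    exact hθ ⟨by simp only []; linarith [hs.1, ht'.1], by simp only []; linarith [hs.2, ht'.2]⟩
  · intro x
    rw [← Real.dist_eq]
    refine ContDiffBump.dist_normed_convolution_le hφc.aestronglyMeasurable ?_
    intro y hy
    refine (h1 (lt_of_lt_of_le (Metric.mem_ball.1 hy) ?_)).le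
    exact (min_le_right _ _).trans (min_le_left _ _)
  · intro x
    rw [(hcs.hasDerivAt_convolution_right (ContinuousLinearMap.lsmul ℝ ℝ)
      b.continuous_normed.locallyIntegrable hφ1 x).deriv, hd, ← Real.dist_eq]
    refine ContDiffBump.dist_normed_convolution_le hφ'.aestronglyMeasurable ?_
    intro y hy
    refine (h2 (lt_of_lt_of_le (Metric.mem_ball.1 hy) ?_)).le
    exact (min_le_right _ _).trans (min_le_right _ _)

lemma hs_D2 (β c : ℝ) (hβ1 : π < β) (hβ : β ≤ 2*π) (hc : hsAdm β c) (δ : ℝ) (hδ : 0 < δ)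
    (φ φ' : ℝ → ℝ) (hφ : ∀ x, HasDerivAt φ (φ' x) x)
    (hφ' : Continuous φ') (hφ0 : ∀ θ, θ ∉ Icc δ (β - δ) → φ θ = 0) :
    c * ∫ θ in (0:ℝ)..β, φ θ ^ 2 / hsW β θ ^ 2 ≤ ∫ θ in (0:ℝ)..β, φ' θ ^ 2 := by
  have hpi := Real.pi_pos
  have hφc : Continuous φ := continuous_iff_continuousAt.2 fun x => (hφ x).continuousAt
  have hεn : ∀ n : ℕ, (0:ℝ) < 1/((n:ℝ)+1) := fun n => by positivity
  choose ψ hψ1 hψ2 hψ3 hψ4 using fun n : ℕ =>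
    hs_moll β δ hδ φ φ' hφ hφ' hφ0 (1/((n:ℝ)+1)) (hεn n)
  have hlim : Filter.Tendsto (fun n : ℕ => 1/((n:ℝ)+1)) Filter.atTop (nhds 0) :=
    tendsto_one_div_add_atTop_nhds_zero_nat
  have t1 : ∀ x, Filter.Tendsto (fun n => ψ n x) Filter.atTop (nhds (φ x)) := fun x =>
    tendsto_iff_dist_tendsto_zero.2 (squeeze_zero (fun _ => dist_nonneg)
      (fun n => by rw [Real.dist_eq]; exact hψ3 n x) hlim)
  have t2 : ∀ x, Filter.Tendsto (fun n => deriv (ψ n) x) Filter.atTop (nhds (φ' x)) := fun x =>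
    tendsto_iff_dist_tendsto_zero.2 (squeeze_zero (fun _ => dist_nonneg)
      (fun n => by rw [Real.dist_eq]; exact hψ4 n x) hlim)
  have hle1 : ∀ n : ℕ, 1/((n:ℝ)+1) ≤ 1 := by
    intro n
    rw [div_le_one (by positivity)]; linarith [Nat.cast_nonneg (α := ℝ) n]
  obtain ⟨M, hM⟩ := isCompact_Icc.exists_bound_of_continuousOn (s := Icc 0 β) hφc.continuousOn
  obtain ⟨M', hM'⟩ := isCompact_Icc.exists_bound_of_continuousOn (s := Icc 0 β) hφ'.continuousOn
  have hWc := hsW_cont β hβ1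
  obtain ⟨m, hm⟩ := isCompact_Icc.exists_bound_of_continuousOn (s := Icc (δ/2) (β - δ/2))
    (f := fun x => (hsW β x)⁻¹) (hWc.continuousOn.inv₀ fun x hx =>
      (hsW_pos β x (by linarith [hx.1]) (by linarith [hx.2])).ne')
  have hu : uIoc (0:ℝ) β = Ioc 0 β := uIoc_of_le (by linarith)
  have L1 : Filter.Tendsto (fun n => ∫ θ in (0:ℝ)..β, ψ n θ ^ 2 / hsW β θ ^ 2) Filter.atTop
      (nhds (∫ θ in (0:ℝ)..β, φ θ ^ 2 / hsW β θ ^ 2)) := by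
    refine intervalIntegral.tendsto_integral_filter_of_dominated_convergence
      (fun _ => (M + 1)^2 * m^2) ?_ ?_ (by simp) ?_
    · refine Filter.Eventually.of_forall fun n => ?_
      exact (((hψ1 n).continuous.pow 2).measurable.div (hWc.pow 2).measurable).aestronglyMeasurable
    · refine Filter.Eventually.of_forall fun n => Filter.Eventually.of_forall fun x hx => ?_
      rw [hu] at hx
      by_cases hx2 : x ∈ Icc (δ/2) (β - δ/2)
      · have a1 := hm x hx2
        have a2 := hM x ⟨hx.1.le, hx.2⟩
        have a3 := hψ3 n x
        have a4 : |ψ n x| ≤ M + 1 := by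
          rw [Real.norm_eq_abs] at a2
          have := abs_sub_abs_le_abs_sub (ψ n x) (φ x)
          linarith [hle1 n]
        have : ‖ψ n x ^ 2 / hsW β x ^ 2‖ = |ψ n x| ^ 2 * ‖(hsW β x)⁻¹‖ ^ 2 := by
          rw [div_eq_mul_inv, norm_mul, norm_pow, Real.norm_eq_abs, ← inv_pow, norm_pow]
        rw [this]
        gcongr
      · rw [hψ2 n x hx2]; simp; positivity
    · refine Filter.Eventually.of_forall fun x hx => ?_
      exact ((t1 x).pow 2).div_const _
  have L2 : Filter.Tendsto (fun n => ∫ θ in (0:ℝ)..β, deriv (ψ n) θ ^ 2) Filter.atTop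
      (nhds (∫ θ in (0:ℝ)..β, φ' θ ^ 2)) := by
    refine intervalIntegral.tendsto_integral_filter_of_dominated_convergence
      (fun _ => (M' + 1)^2) ?_ ?_ (by simp) ?_
    · refine Filter.Eventually.of_forall fun n => ?_
      exact (((hψ1 n).continuous_deriv (by simp)).pow 2).aestronglyMeasurable
    · refine Filter.Eventually.of_forall fun n => Filter.Eventually.of_forall fun x hx => ?_
      rw [hu] at hx
      have a2 := hM' x ⟨hx.1.le, hx.2⟩
      have a3 := hψ4 n x
      have a4 : |deriv (ψ n) x| ≤ M' + 1 := by
        rw [Real.norm_eq_abs] at a2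
        have := abs_sub_abs_le_abs_sub (deriv (ψ n) x) (φ' x)
        linarith [hle1 n]
      rw [norm_pow, Real.norm_eq_abs]
      gcongr
    · refine Filter.Eventually.of_forall fun x hx => ?_
      exact (t2 x).pow 2
  exact le_of_tendsto_of_tendsto' (L1.const_mul c) L2 fun n =>
    hs_D1 β c hβ1 hβ hc (δ/2) (by linarith) (ψ n) (hψ1 n) (hψ2 n)

lemma hs_D3 (β c : ℝ) (hβ1 : π < β) (hβ : β ≤ 2*π) (hc : hsAdm β c) : c ≤ 1/4 := by
  have hpi := Real.pi_gt_three
  by_contra hcon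
  push Not at hcon
  have hc0 : 0 < c := by linarith
  obtain ⟨h, hh, h0, hpos⟩ := hs_bump
  have hhd : ∀ x, HasDerivAt h (deriv h x) x := fun x => (hh.differentiable (by simp) x).hasDerivAt
  have hh' : Continuous (deriv h) := hh.continuous_deriv (by simp)
  have hhc : Continuous h := hh.continuous
  have hd0 := hs_deriv_zero _ _ _ h0
  set H := ∫ r in Ioi (0:ℝ), h r ^ 2 / r with hH
  set A := ∫ r in Ioi (0:ℝ), h r * deriv h r with hA
  set B := ∫ r in Ioi (0:ℝ), r * deriv h r ^ 2 with hB
  have I1 : IntegrableOn (fun r => h r ^ 2 / r) (Ioi 0) := by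
    refine hs_intOn (1/4) (3/4) (by norm_num) _ ?_ ?_
    · exact (hhc.pow 2).continuousOn.div continuousOn_id (fun x hx => (ne_of_gt hx))
    · intro r hr; simp [h0 r hr]
  have I2 : IntegrableOn (fun r => h r * deriv h r) (Ioi 0) := by
    refine hs_intOn (1/4) (3/4) (by norm_num) _ (by fun_prop) ?_
    intro r hr; simp [h0 r hr]
  have I3 : IntegrableOn (fun r => r * deriv h r ^ 2) (Ioi 0) := by
    refine hs_intOn (1/4) (3/4) (by norm_num) _ (by fun_prop) ?_
    intro r hr; simp [hd0 r hr]
  have main : c * H ≤ 1/4 * H := by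
    apply hs_lim _ _ A B
    intro ε hε hε1
    set δ : ℝ := (1/4) ^ (1/ε) with hδdef
    have hδ : 0 < δ := by positivity
    have hδ4 : δ ≤ 1/4 := by
      have := Real.rpow_le_rpow_of_exponent_ge (x := 1/4) (by norm_num) (by norm_num)
        (show 1 ≤ 1/ε by rw [le_div_iff₀ hε]; linarith)
      rwa [Real.rpow_one] at this
    have h34 : ((3:ℝ)/4) ^ (1/ε) ≤ 1 := Real.rpow_le_one (by norm_num) (by norm_num) (by positivity)
    let φ : ℝ → ℝ := fun r => if 0 < r then r ^ (1/2:ℝ) * h (r ^ ε) else 0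
    have hφe : ∀ r, 0 < r → φ =ᶠ[nhds r] fun r => r ^ (1/2:ℝ) * h (r ^ ε) := by
      intro r hr
      filter_upwards [Ioi_mem_nhds hr] with s hs
      exact if_pos hs
    have hφz : ∀ r, r ∉ Icc δ 1 → φ r = 0 := by
      intro r hr
      by_cases hr0 : 0 < r
      · simp only [φ, if_pos hr0]
        rw [hs_bump_rpow h _ _ (by norm_num) (by norm_num) h0 ε hε r hr0.le, mul_zero]
        exact fun hm => hr ⟨hm.1, hm.2.trans h34⟩
      · simp only [φ, if_neg hr0]
    have hφz2 : ∀ r, r ∉ Icc δ (β - δ) → φ r = 0 := fun r hr =>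
      hφz r fun hm => hr ⟨hm.1, by linarith [hm.2]⟩
    have hφs : ContDiff ℝ (⊤ : ℕ∞) φ := by
      rw [contDiff_iff_contDiffAt]
      intro r
      by_cases hr0 : 0 < r
      · refine ContDiffAt.congr_of_eventuallyEq ?_ (hφe r hr0)
        exact (Real.contDiffAt_rpow_const_of_ne hr0.ne').mul
          (hh.contDiffAt.comp r (Real.contDiffAt_rpow_const_of_ne hr0.ne'))
      · have : φ =ᶠ[nhds r] fun _ => 0 := by
          filter_upwards [Iio_mem_nhds (show r < δ by linarith)] with s hs
          exact hφz s fun hm => absurd hm.1 (not_le.2 hs)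
        exact contDiffAt_const.congr_of_eventuallyEq this
    have k := hs_D1 β c hβ1 hβ hc δ hδ φ hφs hφz2
    have hqc := hs_quot_cont β (δ/2) hβ1 (by linarith) φ hφs.continuous
      (fun x hx => hφz2 x fun hm => by linarith [hx.2, hm.1])
      (fun x hx => hφz2 x fun hm => by linarith [hx.1, hm.2])
    rw [intervalIntegral.integral_of_le (by linarith), intervalIntegral.integral_of_le (by linarith),
      integral_Ioc_eq_integral_Ioo, integral_Ioc_eq_integral_Ioo] at k
    have J0 : IntegrableOn (fun x => φ x ^ 2 / x ^ 2) (Ioi 0) := by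
      refine hs_intOn δ 1 hδ _ ?_ ?_
      · exact (hφs.continuous.pow 2).continuousOn.div (by fun_prop)
          (fun x hx => (pow_ne_zero 2 (ne_of_gt hx)))
      · intro r hr; simp [hφz r hr]
    have e1 : (1/ε) * H ≤ ∫ θ in Ioo 0 β, φ θ ^ 2 / hsW β θ ^ 2 := by
      rw [hH, ← hs_subst (fun r => h r ^ 2 / r) ε hε]
      have : ∫ r in Ioi (0:ℝ), r ^ (ε - 1) * (h (r ^ ε) ^ 2 / r ^ ε) =
          ∫ r in Ioi (0:ℝ), φ r ^ 2 / r ^ 2 := by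
        refine setIntegral_congr_fun measurableSet_Ioi fun r hr => ?_
        have hr0 : (0:ℝ) < r := hr
        simp only [φ, if_pos hr0]
        rw [mul_pow, ← Real.rpow_natCast (r ^ (1/2:ℝ)) 2, ← Real.rpow_mul hr0.le,
          Real.rpow_sub_one hr0.ne']
        norm_num
        field_simp
      rw [this, setIntegral_eq_of_subset_of_forall_sdiff_eq_zero measurableSet_Ioi
        (s := Ioo 0 β) (t := Ioi 0) (fun x hx => hx.1)
        (fun x hx => by rw [hφz2 x fun hm => hx.2 ⟨hx.1, by linarith [hm.2]⟩]; simp)]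
      refine setIntegral_mono_on (J0.mono_set fun x hx => hx.1)
        ((hqc.integrableOn_compact isCompact_Icc).mono_set Ioo_subset_Icc_self) measurableSet_Ioo ?_
      intro x hx
      by_cases hx1 : x ∈ Icc δ 1
      · have hw := hsW_pos β x hx.1 hx.2
        have : hsW β x ≤ x := by
          unfold hsW; rw [if_pos (by linarith [hx1.2])]; exact Real.sin_le hx.1.le
        gcongr
      · rw [hφz x hx1]; simp
    have e2 : ∫ θ in Ioo 0 β, deriv φ θ ^ 2 = (1/ε) * (1/4 * H + ε * A + ε^2 * B) := by
      have hS : ∫ r in Ioi (0:ℝ), (1/4 * (h r ^ 2 / r) + ε * (h r * deriv h r) +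
          ε^2 * (r * deriv h r ^ 2)) = 1/4 * H + ε * A + ε^2 * B := by
        have I12 : IntegrableOn (fun r => 1/4 * (h r ^ 2 / r) + ε * (h r * deriv h r)) (Ioi 0) :=
          (I1.const_mul _).add (I2.const_mul _)
        rw [integral_add I12 (I3.const_mul _),
          integral_add (I1.const_mul _) (I2.const_mul _), integral_const_mul, integral_const_mul,
          integral_const_mul]
      have hIoi := setIntegral_eq_of_subset_of_forall_sdiff_eq_zero (μ := volume)
        (f := fun x => deriv φ x ^ 2) measurableSet_Ioi
        (s := Ioo 0 β) (t := Ioi 0) (fun x hx => hx.1)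
        (fun x hx => by
          rw [hs_deriv_zero _ _ _ hφz2 x fun hm => hx.2 ⟨hx.1, by linarith [hm.2]⟩]; simp)
      rw [← hS, ← hs_subst _ ε hε, ← hIoi]
      refine setIntegral_congr_fun measurableSet_Ioi fun r hr => ?_
      have hr0 : (0:ℝ) < r := hr
      have d1 := (Real.hasDerivAt_rpow_const (x := r) (p := 1/2) (Or.inl hr0.ne')).mul
        (hs_rpow_deriv h _ ε r hr0 (hhd _))
      have d2 := (d1.congr_of_eventuallyEq (hφe r hr0)).deriv
      have hq : r = (r ^ (1/2:ℝ)) ^ 2 := by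
        rw [← Real.rpow_natCast, ← Real.rpow_mul hr0.le]; norm_num
      have hq2 : 0 < r ^ (1/2:ℝ) := by positivity
      have hq3 : 0 < r ^ ε := by positivity
      rw [d2, Real.rpow_sub_one hr0.ne', Real.rpow_sub_one hr0.ne']
      generalize deriv h (r ^ ε) = D
      generalize h (r ^ ε) = E
      generalize r ^ ε = ρ at *
      generalize r ^ (1/2:ℝ) = q at *
      rw [hq]
      field_simp
      ring
    rw [e2] at k
    have k2 := (mul_le_mul_of_nonneg_left e1 hc0.le).trans k
    have k3 := mul_le_mul_of_nonneg_left k2 hε.le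
    calc c * H = ε * (c * (1/ε * H)) := by field_simp
      _ ≤ _ := k3
      _ = _ := by field_simp
  have := le_of_mul_le_mul_right main hpos
  linarith

lemma hs_glue_deriv (f1 f2 : ℝ → ℝ) (x0 d1 d2 x : ℝ) (h1 : x ≤ x0 → HasDerivAt f1 d1 x)
    (h2 : x0 ≤ x → HasDerivAt f2 d2 x) (he : f1 x0 = f2 x0) (hd : x = x0 → d1 = d2) :
    HasDerivAt (fun t => if t ≤ x0 then f1 t else f2 t) (if x ≤ x0 then d1 else d2) x := by
  rcases lt_trichotomy x x0 with h | h | h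
  · rw [if_pos h.le]
    refine (h1 h.le).congr_of_eventuallyEq ?_
    filter_upwards [Iio_mem_nhds h] with s hs
    exact if_pos (le_of_lt hs)
  · subst h
    rw [if_pos le_rfl, ← hasDerivWithinAt_univ, ← Iic_union_Ici (a := x)]
    refine HasDerivWithinAt.union ?_ ?_
    · refine (h1 le_rfl).hasDerivWithinAt.congr (fun s hs => if_pos hs) (if_pos le_rfl)
    · rw [hd rfl]
      refine (h2 le_rfl).hasDerivWithinAt.congr (fun s hs => ?_) ?_
      · rcases eq_or_lt_of_le (show x ≤ s from hs) with h | h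
        · subst h; simp [he]
        · exact if_neg (not_le.2 h)
      · simp [he]
  · rw [if_neg (not_le.2 h)]
    refine (h2 h.le).congr_of_eventuallyEq ?_
    filter_upwards [Ioi_mem_nhds h] with s hs
    exact if_neg (not_le.2 hs)

lemma hs_glue_cont (f1 f2 : ℝ → ℝ) (x0 x : ℝ) (h1 : x ≤ x0 → ContinuousAt f1 x)
    (h2 : x0 ≤ x → ContinuousAt f2 x) (he : f1 x0 = f2 x0) :
    ContinuousAt (fun t => if t ≤ x0 then f1 t else f2 t) x := by
  rcases lt_trichotomy x x0 with h | h | h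
  · refine (h1 h.le).congr_of_eventuallyEq ?_
    filter_upwards [Iio_mem_nhds h] with s hs
    exact if_pos (le_of_lt hs)
  · subst h
    rw [← continuousWithinAt_univ, ← Iic_union_Ici (a := x)]
    refine ContinuousWithinAt.union ?_ ?_
    · refine (h1 le_rfl).continuousWithinAt.congr (fun s hs => if_pos hs) (if_pos le_rfl)
    · refine (h2 le_rfl).continuousWithinAt.congr (fun s hs => ?_) ?_
      · rcases eq_or_lt_of_le (show x ≤ s from hs) with h | h
        · subst h; simp [he]
        · exact if_neg (not_le.2 h)
      · simp [he]
  · refine (h2 h.le).congr_of_eventuallyEq ?_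
    filter_upwards [Ioi_mem_nhds h] with s hs
    exact if_neg (not_le.2 hs)

lemma hs_refl (β δ : ℝ) (hδ : 0 < δ) (hδ2 : δ ≤ β/2) (G : ℝ → ℝ) (hG : ContinuousOn G (Icc 0 β))
    (hs : ∀ x ∈ Icc 0 (β/2), G (β - x) = G x) (hz : ∀ x ∈ Icc 0 δ, G x = 0) :
    ∫ x in (0:ℝ)..β, G x = 2 * ∫ x in δ..(β/2), G x := by
  have i : ∀ a b, a ∈ Icc 0 β → b ∈ Icc 0 β → IntervalIntegrable G volume a b := by
    intro a b ha hb
    apply ContinuousOn.intervalIntegrable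
    exact hG.mono (uIcc_subset_Icc ha hb)
  have m0 : (0:ℝ) ∈ Icc 0 β := ⟨le_rfl, by linarith⟩
  have m1 : β ∈ Icc 0 β := ⟨by linarith, le_rfl⟩
  have m2 : β/2 ∈ Icc 0 β := ⟨by linarith, by linarith⟩
  have m3 : δ ∈ Icc 0 β := ⟨by linarith, by linarith⟩
  rw [← intervalIntegral.integral_add_adjacent_intervals (i 0 (β/2) m0 m2) (i (β/2) β m2 m1)]
  have e1 : ∫ x in (β/2)..β, G x = ∫ x in (0:ℝ)..(β/2), G x := by
    have := intervalIntegral.integral_comp_sub_left (a := 0) (b := β/2) G β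
    rw [show β - β/2 = β/2 by ring, sub_zero] at this
    rw [← this]
    refine intervalIntegral.integral_congr fun x hx => ?_
    rw [uIcc_of_le (by linarith)] at hx
    exact hs x hx
  have e2 : ∫ x in (0:ℝ)..(β/2), G x = ∫ x in δ..(β/2), G x := by
    rw [← intervalIntegral.integral_add_adjacent_intervals (i 0 δ m0 m3) (i δ (β/2) m3 m2)]
    have : ∫ x in (0:ℝ)..δ, G x = ∫ x in (0:ℝ)..δ, (0:ℝ) := by
      refine intervalIntegral.integral_congr fun x hx => ?_
      rw [uIcc_of_le hδ.le] at hx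
      exact hz x hx
    rw [this]; simp
  rw [e1, e2]; ring

lemma hsW_refl (β θ : ℝ) (hβ1 : π < β) (h : θ ∈ Icc 0 (β/2)) : hsW β (β - θ) = hsW β θ := by
  unfold hsW
  rw [if_neg (by have := h.2; intro hh; linarith)]
  by_cases h1 : θ ≤ π/2
  · rw [if_pos h1]
    by_cases h2 : β - θ ≤ β - π/2
    · have : θ = π/2 := by linarith
      rw [if_pos h2, this, Real.sin_pi_div_two]
    · rw [if_neg h2]; congr 1; ring
  · rw [if_neg h1, if_pos (by linarith), if_pos (by linarith [h.2])]

lemma hs_D4a (β c : ℝ) (hβ1 : π < β) (hβ : β ≤ 2*π) (hc : hsAdm β c) (δ : ℝ) (hδ : 0 < δ)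
    (hδ2 : δ ≤ β/2) (f f' : ℝ → ℝ) (hf : ∀ x, x ≤ β/2 → HasDerivAt f (f' x) x)
    (hf' : ∀ x, x ≤ β/2 → ContinuousAt f' x) (z : ∀ x, x ≤ δ → f x = 0)
    (z' : ∀ x, x ≤ δ → f' x = 0) (hend : f' (β/2) = 0) :
    c * ∫ θ in δ..(β/2), f θ ^ 2 / hsW β θ ^ 2 ≤ ∫ θ in δ..(β/2), f' θ ^ 2 := by
  have hpi := Real.pi_pos
  set φ : ℝ → ℝ := fun t => if t ≤ β/2 then f t else f (β - t) with hφ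
  set φ' : ℝ → ℝ := fun t => if t ≤ β/2 then f' t else - f' (β - t) with hφ'
  have hh : β - β/2 = β/2 := by ring
  have d : ∀ x, HasDerivAt φ (φ' x) x := by
    intro x
    refine hs_glue_deriv f (fun t => f (β - t)) (β/2) (f' x) (- f' (β - x)) x (hf x) ?_ ?_ ?_
    · intro hx
      have := (hf (β - x) (by linarith)).comp x ((hasDerivAt_id x).const_sub β)
      exact this.congr_deriv (by simp)
    · simp only [hh]
    · rintro rfl; rw [hh, hend]; simp
  have c' : Continuous φ' := by
    rw [continuous_iff_continuousAt]
    intro x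
    refine hs_glue_cont f' (fun t => - f' (β - t)) (β/2) x (hf' x) ?_ ?_
    · intro hx
      have h1 : ContinuousAt (fun t : ℝ => β - t) x := by fun_prop
      exact (ContinuousAt.comp (g := f') (hf' (β - x) (by linarith)) h1).neg
    · simp only [hh, hend]; simp
  have hφc : Continuous φ := continuous_iff_continuousAt.2 fun x => (d x).continuousAt
  have hz : ∀ θ, θ ∉ Icc δ (β - δ) → φ θ = 0 := by
    intro θ hθ
    by_cases h1 : θ ≤ β/2
    · simp only [hφ, if_pos h1]
      apply z
      by_contra h2
      exact hθ ⟨by linarith, by linarith⟩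
    · simp only [hφ, if_neg h1]
      apply z
      by_contra h2
      exact hθ ⟨by linarith, by linarith⟩
  have k := hs_D2 β c hβ1 hβ hc δ hδ φ φ' d c' hz
  have hsym : ∀ x ∈ Icc 0 (β/2), φ (β - x) = φ x := by
    intro x hx
    rcases eq_or_lt_of_le hx.2 with h | h
    · rw [h, hh]
    · simp only [hφ]
      rw [if_neg (by linarith), if_pos hx.2]; congr 1; ring
  have hsym' : ∀ x ∈ Icc 0 (β/2), φ' (β - x) ^ 2 = φ' x ^ 2 := by
    intro x hx
    rcases eq_or_lt_of_le hx.2 with h | h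
    · rw [h, hh]
    · simp only [hφ']
      rw [if_neg (by linarith), if_pos hx.2, neg_sq]; congr 2; ring
  have z0 : ∀ x ∈ Icc 0 δ, φ x = 0 := by
    intro x hx
    simp only [hφ, if_pos (show x ≤ β/2 by linarith [hx.2])]; exact z x hx.2
  have z1 : ∀ x ∈ Icc (β - δ) β, φ x = 0 := by
    intro x hx
    have := hsym (β - x) ⟨by linarith [hx.2], by linarith [hx.1]⟩
    rw [show β - (β - x) = x by ring] at this
    rw [this]; exact z0 _ ⟨by linarith [hx.2], by linarith [hx.1]⟩
  rw [hs_refl β δ hδ hδ2 _ (hs_quot_cont β δ hβ1 hδ φ hφc z0 z1)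
    (fun x hx => by rw [hsym x hx, hsW_refl β x hβ1 hx]) (fun x hx => by rw [z0 x hx]; simp),
    hs_refl β δ hδ hδ2 (fun x => φ' x ^ 2) (c'.pow 2).continuousOn hsym' (fun x hx => by
      simp only [hφ', if_pos (show x ≤ β/2 by linarith [hx.2])]; rw [z' x hx.2]; simp)] at k
  have e1 : ∫ x in δ..(β/2), φ x ^ 2 / hsW β x ^ 2 = ∫ x in δ..(β/2), f x ^ 2 / hsW β x ^ 2 := by
    refine intervalIntegral.integral_congr fun x hx => ?_
    rw [uIcc_of_le hδ2] at hx
    simp only [hφ, if_pos hx.2]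
  have e2 : ∫ x in δ..(β/2), φ' x ^ 2 = ∫ x in δ..(β/2), f' x ^ 2 := by
    refine intervalIntegral.integral_congr fun x hx => ?_
    rw [uIcc_of_le hδ2] at hx
    simp only [hφ', if_pos hx.2]
  rw [e1, e2] at k
  linarith

lemma hs_cut : ∃ k : ℝ → ℝ, ContDiff ℝ (⊤ : ℕ∞) k ∧ (∀ r, r ≤ 1/4 → k r = 0) ∧
    (∀ r, 1/2 ≤ r → k r = 1) ∧ (∀ r, r ∉ Icc (1/4) (1/2) → deriv k r = 0) := by
  refine ⟨fun r => Real.smoothTransition (4*r - 1), ?_, ?_, ?_, ?_⟩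
  · exact Real.smoothTransition.contDiff.comp (by fun_prop)
  · intro r hr; exact Real.smoothTransition.zero_of_nonpos (by linarith)
  · intro r hr; exact Real.smoothTransition.one_of_one_le (by linarith)
  · intro r hr
    by_cases h : r < 1/4
    · have : (fun r => Real.smoothTransition (4*r - 1)) =ᶠ[nhds r] fun _ => 0 := by
        filter_upwards [Iio_mem_nhds h] with s hs
        have : s < 1/4 := hs
        exact Real.smoothTransition.zero_of_nonpos (by linarith)
      rw [this.deriv_eq]; simp
    · have h2 : 1/2 < r := by
        by_contra h3; exact hr ⟨by linarith, by linarith⟩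
      have : (fun r => Real.smoothTransition (4*r - 1)) =ᶠ[nhds r] fun _ => 1 := by
        filter_upwards [Ioi_mem_nhds h2] with s hs
        have : 1/2 < s := hs
        exact Real.smoothTransition.one_of_one_le (by linarith)
      rw [this.deriv_eq]; simp

lemma hs_D4b (β c c0 C : ℝ) (hβ1 : π < β) (hβ : β ≤ 2*π) (hc : hsAdm β c) (g g' : ℝ → ℝ)
    (hg : ∀ x, 0 < x → x ≤ β/2 → HasDerivAt g (g' x) x)
    (hg' : ∀ x, 0 < x → x ≤ β/2 → HasDerivAt g' (-(c0 * g x / hsW β x ^ 2)) x)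
    (hend : g' (β/2) = 0) (hC : ∀ x, 0 < x → x ≤ π/2 → g x ^ 2 ≤ C * x) (hne : g (β/2) ≠ 0) :
    c ≤ c0 := by
  have hpi := Real.pi_gt_three
  by_contra hcon
  push Not at hcon
  obtain ⟨k, hk, k0, k1, kd0⟩ := hs_cut
  have hkd : ∀ x, HasDerivAt k (deriv k x) x := fun x => (hk.differentiable (by simp) x).hasDerivAt
  have hk' : Continuous (deriv k) := hk.continuous_deriv (by simp)
  have hkc : Continuous k := hk.continuous
  have hC0 : 0 ≤ C := by
    have := hC 1 one_pos (by linarith)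
    nlinarith [sq_nonneg (g 1)]
  have hgc : ∀ x, 0 < x → x ≤ β/2 → ContinuousAt g x := fun x h1 h2 => (hg x h1 h2).continuousAt
  have hgc' : ∀ x, 0 < x → x ≤ β/2 → ContinuousAt g' x := fun x h1 h2 => (hg' x h1 h2).continuousAt
  set B := ∫ r in Ioi (0:ℝ), r * deriv k r ^ 2 with hB
  set X0 := ∫ x in (π/2)..(β/2), g x ^ 2 with hX0
  have hX0p : 0 < X0 := by
    refine intervalIntegral.integral_pos (by linarith) ?_ (fun x _ => sq_nonneg _)
      ⟨β/2, ⟨by linarith, le_rfl⟩, by positivity⟩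
    intro x hx
    exact ((hgc x (by linarith [hx.1]) hx.2).pow 2).continuousWithinAt
  have main : (c - c0) * X0 ≤ 0 := by
    apply hs_lim _ _ (C * B) 0
    intro ε hε hε1
    set δ1 : ℝ := (1/4) ^ (1/ε) with hδdef
    have hδ1 : 0 < δ1 := by positivity
    have hδ4 : δ1 ≤ 1/4 := by
      have := Real.rpow_le_rpow_of_exponent_ge (x := 1/4) (by norm_num) (by norm_num)
        (show 1 ≤ 1/ε by rw [le_div_iff₀ hε]; linarith)
      rwa [Real.rpow_one] at this
    have hsmall : ∀ x, 0 < x → x < δ1 → x ^ ε < 1/4 := by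
      intro x hx hx1
      have := Real.rpow_lt_rpow hx.le hx1 hε
      rwa [hδdef, ← Real.rpow_mul (by norm_num), one_div_mul_cancel hε.ne', Real.rpow_one] at this
    have hbig : ∀ x : ℝ, 1 ≤ x → 1 ≤ x ^ ε := fun x hx => Real.one_le_rpow hx hε.le
    set δ := δ1 / 2 with hδ
    have hδ0 : 0 < δ := by linarith
    have hδ2 : δ ≤ β/2 := by linarith
    set e : ℝ → ℝ := fun x => deriv k (x ^ ε) * (ε * x ^ (ε - 1)) with he
    have hed : ∀ x, 0 < x → HasDerivAt (fun x => k (x ^ ε)) (e x) x := fun x hx =>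
      hs_rpow_deriv k _ ε x hx (hkd _)
    have hec : ∀ x, 0 < x → ContinuousAt e x := by
      intro x hx
      have h1 : ContinuousAt (fun x : ℝ => x ^ ε) x := Real.continuousAt_rpow_const _ _ (Or.inl hx.ne')
      have h2 : ContinuousAt (fun x : ℝ => x ^ (ε-1)) x :=
        Real.continuousAt_rpow_const _ _ (Or.inl hx.ne')
      exact (hk'.continuousAt.comp h1).mul (h2.const_mul ε)
    have hηc : ∀ x, 0 < x → ContinuousAt (fun x => k (x ^ ε)) x := fun x hx =>
      (hed x hx).continuousAt
    set f : ℝ → ℝ := fun x => if 0 < x then k (x ^ ε) * g x else 0 with hf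
    set f' : ℝ → ℝ := fun x => if 0 < x then e x * g x + k (x ^ ε) * g' x else 0 with hf'
    have z : ∀ x, x < δ1 → f x = 0 := by
      intro x hx
      by_cases h : 0 < x
      · simp only [hf, if_pos h]; rw [k0 _ (hsmall x h hx).le, zero_mul]
      · simp only [hf, if_neg h]
    have z' : ∀ x, x < δ1 → f' x = 0 := by
      intro x hx
      by_cases h : 0 < x
      · simp only [hf', if_pos h, he]
        rw [k0 _ (hsmall x h hx).le, kd0 _ (fun hm => by linarith [hm.1, hsmall x h hx])]; ring
      · simp only [hf', if_neg h]
    have hfe : ∀ x, 0 < x → f =ᶠ[nhds x] fun x => k (x ^ ε) * g x := by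
      intro r hr
      filter_upwards [Ioi_mem_nhds hr] with s hs
      exact if_pos hs
    have hfe' : ∀ x, 0 < x → f' =ᶠ[nhds x] fun x => e x * g x + k (x ^ ε) * g' x := by
      intro r hr
      filter_upwards [Ioi_mem_nhds hr] with s hs
      exact if_pos hs
    have heb : e (β/2) = 0 := by
      simp only [he]
      rw [kd0 _ (fun hm => by linarith [hm.2, hbig (β/2) (by linarith)])]; ring
    have key := hs_D4a β c hβ1 hβ hc δ hδ0 hδ2 f f' ?_ ?_ (fun x hx => z x (by linarith))
      (fun x hx => z' x (by linarith)) ?_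
    rotate_left
    · intro x hx
      by_cases h : 0 < x
      · have := (((hed x h).mul (hg x h hx)).congr_of_eventuallyEq (hfe x h))
        exact this.congr_deriv (by simp only [hf', if_pos h])
      · have h2 : f =ᶠ[nhds x] fun _ => 0 := by
          filter_upwards [Iio_mem_nhds (show x < δ1 by linarith)] with s hs using z s hs
        rw [z' x (by linarith)]
        exact (hasDerivAt_const x 0).congr_of_eventuallyEq h2
    · intro x hx
      by_cases h : 0 < x
      · exact (((hec x h).mul (hgc x h hx)).add ((hηc x h).mul (hgc' x h hx))).congr_of_eventuallyEq
          (hfe' x h)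
      · have h2 : f' =ᶠ[nhds x] fun _ => 0 := by
          filter_upwards [Iio_mem_nhds (show x < δ1 by linarith)] with s hs using z' s hs
        exact continuousAt_const.congr_of_eventuallyEq h2
    · simp only [hf', if_pos (show 0 < β/2 by linarith)]; rw [heb, hend]; ring
    set X := ∫ θ in δ..(β/2), f θ ^ 2 / hsW β θ ^ 2 with hX
    -- continuity on [δ, β/2]
    have hpos : ∀ x ∈ Icc δ (β/2), 0 < x := fun x hx => lt_of_lt_of_le hδ0 hx.1
    have cg : ContinuousOn g (Icc δ (β/2)) := fun x hx =>
      (hgc x (hpos x hx) hx.2).continuousWithinAt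
    have cg' : ContinuousOn g' (Icc δ (β/2)) := fun x hx =>
      (hgc' x (hpos x hx) hx.2).continuousWithinAt
    have ce : ContinuousOn e (Icc δ (β/2)) := fun x hx => (hec x (hpos x hx)).continuousWithinAt
    have cη : ContinuousOn (fun x => k (x ^ ε)) (Icc δ (β/2)) := fun x hx =>
      (hηc x (hpos x hx)).continuousWithinAt
    have cW : ContinuousOn (fun x => (hsW β x ^ 2)⁻¹) (Icc δ (β/2)) :=
      ((hsW_cont β hβ1).pow 2).continuousOn.inv₀ fun x hx =>
        pow_ne_zero 2 (hsW_pos β x (hpos x hx) (by linarith [hx.2])).ne'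
    have cI : ∀ G : ℝ → ℝ, ContinuousOn G (Icc δ (β/2)) → IntervalIntegrable G volume δ (β/2) := by
      intro G hG
      apply ContinuousOn.intervalIntegrable
      rwa [uIcc_of_le hδ2]
    have feq : ∀ x ∈ Icc δ (β/2), f x = k (x ^ ε) * g x := fun x hx => if_pos (hpos x hx)
    have feq' : ∀ x ∈ Icc δ (β/2), f' x = e x * g x + k (x ^ ε) * g' x :=
      fun x hx => if_pos (hpos x hx)
    have cfW : ContinuousOn (fun x => f x ^ 2 / hsW β x ^ 2) (Icc δ (β/2)) := by
      have : ContinuousOn (fun x => (k (x ^ ε) * g x) ^ 2 * (hsW β x ^ 2)⁻¹) (Icc δ (β/2)) :=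
        ((cη.mul cg).pow 2).mul cW
      exact this.congr fun x hx => by rw [feq x hx, div_eq_mul_inv]
    set F' : ℝ → ℝ := fun x => 2 * k (x ^ ε) * e x * (g x * g' x) +
      k (x ^ ε) ^ 2 * (g' x * g' x + g x * -(c0 * g x * (hsW β x ^ 2)⁻¹)) with hF'
    have cF' : ContinuousOn F' (Icc δ (β/2)) :=
      (((continuousOn_const.mul cη).mul ce).mul (cg.mul cg')).add
        ((cη.pow 2).mul ((cg'.mul cg').add (cg.mul ((continuousOn_const.mul cg).mul cW).neg)))
    have hFTC : ∫ x in δ..(β/2), F' x = 0 := by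
      rw [intervalIntegral.integral_eq_sub_of_hasDerivAt
        (f := fun x => k (x ^ ε) ^ 2 * (g x * g' x)) _ (cI _ cF')]
      · rw [hend, k0 _ (hsmall δ hδ0 (by linarith)).le]; ring
      · intro x hx
        rw [uIcc_of_le hδ2] at hx
        have h := hpos x hx
        refine (((hed x h).pow 2).mul ((hg x h hx.2).mul (hg' x h hx.2))).congr_deriv ?_
        simp only [hF']
        simp [div_eq_mul_inv]
    have hid : ∫ x in δ..(β/2), f' x ^ 2 = (∫ x in δ..(β/2), e x ^ 2 * g x ^ 2) + c0 * X := by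
      have i1 := cI _ ((ce.pow 2).mul (cg.pow 2))
      have i2 := (cI _ cfW).const_mul c0
      have i3 := cI _ cF'
      have : (∫ x in δ..(β/2), e x ^ 2 * g x ^ 2) + c0 * X =
          (∫ x in δ..(β/2), e x ^ 2 * g x ^ 2) + c0 * X + ∫ x in δ..(β/2), F' x := by
        rw [hFTC, add_zero]
      have i1' : IntervalIntegrable (fun x => e x ^ 2 * g x ^ 2) volume δ (β/2) := i1
      rw [this, hX, ← intervalIntegral.integral_const_mul, ← intervalIntegral.integral_add i1' i2,
        ← intervalIntegral.integral_add (i1'.add i2) i3]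
      refine intervalIntegral.integral_congr fun x hx => ?_
      rw [uIcc_of_le hδ2] at hx
      simp only [hF']
      rw [feq x hx, feq' x hx, div_eq_mul_inv]
      ring
    have hXX : X0 ≤ X := by
      have h1 : X0 = ∫ x in (π/2)..(β/2), f x ^ 2 / hsW β x ^ 2 := by
        refine intervalIntegral.integral_congr fun x hx => ?_
        rw [uIcc_of_le (by linarith)] at hx
        rw [feq x ⟨by linarith [hx.1], hx.2⟩, k1 _ (by linarith [hbig x (by linarith [hx.1])])]
        have : hsW β x = 1 := by
          unfold hsW
          rcases eq_or_lt_of_le hx.1 with h | h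
          · rw [← h, if_pos le_rfl, Real.sin_pi_div_two]
          · rw [if_neg (by linarith), if_pos (by linarith [hx.2])]
        rw [this]; simp
      rw [h1]
      refine intervalIntegral.integral_mono_interval (by linarith) (by linarith) le_rfl ?_ (cI _ cfW)
      exact Filter.Eventually.of_forall fun x => by simp only [Pi.zero_apply]; positivity
    have hE : ∫ x in δ..(β/2), e x ^ 2 * g x ^ 2 ≤ C * B * ε := by
      have hsub : ∫ x in Ioi (0:ℝ), C * (x * e x ^ 2) = C * B * ε := by
        have := hs_subst (fun r => ε^2 * (r * deriv k r ^ 2)) ε hε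
        rw [integral_const_mul] at this
        rw [integral_const_mul, show C * B * ε = C * (1/ε * (ε^2 * B)) by field_simp, ← this]
        congr 1
        refine setIntegral_congr_fun measurableSet_Ioi fun r hr => ?_
        have hr0 : (0:ℝ) < r := hr
        simp only [he]
        rw [Real.rpow_sub_one hr0.ne']
        field_simp
      have hez : ∀ x, 0 < x → x ∉ Icc δ1 1 → e x = 0 := by
        intro x hx hx1
        simp only [he]
        rw [kd0, zero_mul]
        intro hm
        apply hx1
        constructor
        · by_contra h; linarith [hsmall x hx (by linarith), hm.1]
        · by_contra h; linarith [hbig x (by linarith), hm.2]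
      have hInteg : IntegrableOn (fun x => C * (x * e x ^ 2)) (Ioi 0) := by
        have h1 : IntegrableOn (fun x => C * (x * e x ^ 2)) (Icc δ1 1) := by
          refine ContinuousOn.integrableOn_compact isCompact_Icc ?_
          intro x hx
          exact ((continuousAt_id.mul ((hec x (by linarith [hx.1])).pow 2)).const_mul
            C).continuousWithinAt
        exact h1.of_forall_sdiff_eq_zero measurableSet_Ioi fun x hx => by
          rw [hez x hx.1 hx.2]; simp
      rw [intervalIntegral.integral_of_le hδ2, ← hsub]
      calc ∫ x in Ioc δ (β/2), e x ^ 2 * g x ^ 2 ≤ ∫ x in Ioc δ (β/2), C * (x * e x ^ 2) := by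
            refine setIntegral_mono_on
              ((((ce.pow 2).mul (cg.pow 2)).integrableOn_compact isCompact_Icc).mono_set
                Ioc_subset_Icc_self) (hInteg.mono_set fun x hx => lt_trans hδ0 hx.1)
              measurableSet_Ioc ?_
            intro x hx
            have hx0 : 0 < x := lt_trans hδ0 hx.1
            by_cases h1 : x ∈ Icc δ1 1
            · have := mul_le_mul_of_nonneg_left (hC x hx0 (by linarith [h1.2])) (sq_nonneg (e x))
              linarith
            · simp [hez x hx0 h1]
        _ ≤ _ := by
            refine setIntegral_mono_set hInteg ?_ ?_
            · filter_upwards [self_mem_ae_restrict measurableSet_Ioi] with x hx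
              have : (0:ℝ) < x := hx
              simp only [Pi.zero_apply]; positivity
            · exact Filter.Eventually.of_forall fun x hx => lt_trans hδ0 hx.1
    rw [hid] at key
    have := mul_le_mul_of_nonneg_left hXX (sub_nonneg.2 hcon.le)
    nlinarith
  nlinarith [mul_pos (sub_pos.2 hcon) hX0p]

lemma hs_upper (β c c0 a : ℝ) (hβ1 : π < β) (hβ : β ≤ 2*π) (hc0 : 0 < c0) (hc4 : c0 ≤ 1/4)
    (ha : 1/2 ≤ a) (hac : a * (1-a) = c0)
    (hTG : Real.sqrt c0 * Real.tan (Real.sqrt c0 * ((β - π)/2)) =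
      2 * (Real.Gamma ((a+1)/2) / Real.Gamma (a/2)) ^ 2) (hc : hsAdm β c) : c ≤ c0 := by
  have hpi := Real.pi_pos
  have ha0 : 0 < a := by linarith
  set s := Real.sqrt c0 with hs
  have hs0 : 0 < s := Real.sqrt_pos.2 hc0
  have hss : s * s = c0 := Real.mul_self_sqrt hc0.le
  have hs1 : s ≤ 1/2 := by
    rw [hs, Real.sqrt_le_left (by norm_num)]; linarith
  have hcos : 0 < Real.cos (s * ((β - π)/2)) := by
    apply Real.cos_pos_of_mem_Ioo
    constructor <;> nlinarith
  set A := hsP a (π/2) / Real.cos (s * ((β - π)/2)) with hA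
  have hPp : 0 < hsP a (π/2) := hsP_pos a (π/2) ha0 (by positivity) le_rfl
  have hAp : 0 < A := by positivity
  have hr : β/2 - π/2 = (β - π)/2 := by ring
  have m1 : hsP a (π/2) = A * Real.cos (s * (β/2 - π/2)) := by
    rw [hr, hA, div_mul_cancel₀ _ hcos.ne']
  have m2 : hsQ a (π/2) = A * (s * Real.sin (s * (β/2 - π/2))) := by
    rw [hr, hsQP a ha0, ← hTG, Real.tan_eq_sin_div_cos, hA]; field_simp
  have hlin : ∀ x, HasDerivAt (fun x => s * (β/2 - x)) (s * (-1)) x := fun x =>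
    ((hasDerivAt_id x).const_sub (β/2)).const_mul _
  refine hs_D4b β c c0 (hsJ a 0 ^ 2) hβ1 hβ hc
    (fun t => if t ≤ π/2 then hsP a t else A * Real.cos (s * (β/2 - t)))
    (fun t => if t ≤ π/2 then hsQ a t else A * (s * Real.sin (s * (β/2 - t)))) ?_ ?_ ?_ ?_ ?_
  · intro x hx hx2
    refine hs_glue_deriv (hsP a) (fun t => A * Real.cos (s * (β/2 - t))) (π/2) (hsQ a x)
      (A * (s * Real.sin (s * (β/2 - x)))) x (fun h => hsP_deriv a x ha0 hx h) ?_ m1 ?_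
    · intro _
      refine ((hlin x).cos.const_mul A).congr_deriv ?_
      ring
    · rintro rfl; exact m2
  · intro x hx hx2
    have h := hs_glue_deriv (hsQ a) (fun t => A * (s * Real.sin (s * (β/2 - t)))) (π/2)
      (-(a*(1-a)) * hsP a x / Real.sin x ^ 2)
      (- (c0 * (A * Real.cos (s * (β/2 - x))))) x (fun h => hsQ_deriv a x ha0 hx h) ?_ m2 ?_
    · refine h.congr_deriv ?_
      unfold hsW
      by_cases h1 : x ≤ π/2
      · simp only [if_pos h1]; rw [hac]; ring
      · simp only [if_neg h1]; rw [if_pos (by linarith)]; ring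
    · intro _
      refine (((hlin x).sin.const_mul s).const_mul A).congr_deriv ?_
      rw [← hss]; ring
    · rintro rfl; rw [hac, m1, Real.sin_pi_div_two]; ring
  · rw [if_neg (by linarith)]; simp
  · intro x hx hx2
    simp only [if_pos hx2]
    exact hsP_sq_le a x ha hx hx2
  · rw [if_neg (by linarith)]; simp; exact (ne_of_gt hAp)

/-- The Hardy constant of the infinite sector of angle `β ∈ (π, 2π]`, i.e. the largest
constant `c` such that `∫_{S_β} |∇u|² ≥ c ∫_{S_β} u²/d²` for all `u ∈ C_c^∞(S_β)`,
equals `c_β`. -/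
theorem hardy_constant_sector
    (β βcr cβ : ℝ) (hβ1 : Real.pi < β) (hβ2 : β ≤ 2 * Real.pi)
    (hβcr : isBetaCr βcr) (hcβ : isHardyConst βcr β cβ) :
    IsGreatest {c : ℝ |
      ∀ u : E2 → ℝ, ContDiff ℝ (⊤ : ℕ∞) u → HasCompactSupport u → tsupport u ⊆ sector β →
        c * ∫ x in sector β, (u x) ^ 2 / (Metric.infDist x (frontier (sector β))) ^ 2 ≤
          ∫ x in sector β, ‖gradient u x‖ ^ 2} cβ := by
  have hpi := Real.pi_pos
  rcases hcβ with ⟨hle, rfl⟩ | ⟨hlt, hmem, heq⟩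
  · constructor
    · intro u hu hcs hts
      refine hs_lower β (1/4) (1/2) hβ1 hβ2 (by norm_num) (by norm_num) (by norm_num) (by norm_num)
        ?_ u hu hcs hts
      have hsq : Real.sqrt (1/4) = 1/2 := by
        rw [show (1/4:ℝ) = (1/2)^2 by norm_num, Real.sqrt_sq (by norm_num)]
      have hm : Real.tan ((β - π)/4) ≤ Real.tan ((βcr - π)/4) := by
        have h2 := hβcr.1.2
        refine Real.strictMonoOn_tan.monotoneOn ⟨by linarith, by linarith⟩
          ⟨by linarith, by linarith⟩ (by linarith)
      rw [hβcr.2] at hm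
      rw [hsq, show (1/2:ℝ) * ((β - π)/2) = (β - π)/4 by ring,
        show ((1/2:ℝ) + 1)/2 = 3/4 by norm_num, show (1/2:ℝ)/2 = 1/4 by norm_num]
      linarith
    · intro c hc
      exact hs_D3 β c hβ1 hβ2 hc
  · set s := Real.sqrt (1 - 4 * cβ) with hs
    have hs0 : 0 ≤ s := Real.sqrt_nonneg _
    have hss : s * s = 1 - 4 * cβ := Real.mul_self_sqrt (by linarith [hmem.2])
    have hTG : Real.sqrt cβ * Real.tan (Real.sqrt cβ * ((β - π)/2)) =
      2 * (Real.Gamma (((1+s)/2+1)/2) / Real.Gamma ((1+s)/2/2)) ^ 2 := by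
      rw [show ((1+s)/2+1)/2 = (3+s)/4 by ring, show (1+s)/2/2 = (1+s)/4 by ring]
      exact heq
    have hac : (1+s)/2 * (1 - (1+s)/2) = cβ := by linear_combination (-1/4) * hss
    constructor
    · intro u hu hcs hts
      exact hs_lower β cβ ((1+s)/2) hβ1 hβ2 hmem.1 hmem.2 (by linarith) hac hTG.le u hu hcs hts
    · intro c hc
      exact hs_upper β c cβ ((1+s)/2) hβ1 hβ2 hmem.1 hmem.2 (by linarith) hac hTG hc
end

section
/- There exists exactly one β ∈ (π, 2π) satisfying tan((β−π)/4) = 4·(Γ(3/4)/Γ(1/4))², where Γ is the Gamma function; moreover, for this β the value c = 1/4 solves the Hardy-constant equation for β. -/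
open Real Set

lemma gamma_ratio_bound :
    4 * (Real.Gamma (3 / 4) / Real.Gamma (1 / 4)) ^ 2 < 1 := by
  have h1 : 0 < Real.Gamma (1 / 4) := Real.Gamma_pos_of_pos (by norm_num)
  have h3 : 0 < Real.Gamma (3 / 4) := Real.Gamma_pos_of_pos (by norm_num)
  have hr := Real.Gamma_mul_Gamma_one_sub (1 / 4)
  rw [show (1 : ℝ) - 1 / 4 = 3 / 4 by norm_num, show Real.pi * (1 / 4) = Real.pi / 4 by ring,
    Real.sin_pi_div_four] at hr
  have hc := Real.Gamma_mul_add_mul_le_rpow_Gamma_mul_rpow_Gamma (s := 1 / 2) (t := 1)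
    (a := 1 / 2) (b := 1 / 2) (by norm_num) (by norm_num) (by norm_num) (by norm_num) (by norm_num)
  rw [Real.Gamma_one_half_eq, Real.Gamma_one, Real.one_rpow, mul_one, mul_one,
    show (1 / 2 : ℝ) * (1 / 2) + 1 / 2 = 3 / 4 by norm_num, ← Real.sqrt_eq_rpow] at hc
  have hpi := Real.pi_gt_three
  have hc2 : Real.Gamma (3 / 4) ^ 2 ≤ √Real.pi := by
    calc Real.Gamma (3 / 4) ^ 2 ≤ (√(√Real.pi)) ^ 2 := by gcongr
      _ = _ := Real.sq_sqrt (Real.sqrt_nonneg _)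
  have hc4 : Real.Gamma (3 / 4) ^ 4 ≤ Real.pi := by
    calc Real.Gamma (3 / 4) ^ 4 = (Real.Gamma (3 / 4) ^ 2) ^ 2 := by ring
      _ ≤ (√Real.pi) ^ 2 := by gcongr
      _ = _ := Real.sq_sqrt Real.pi_pos.le
  have hs : (Real.Gamma (1 / 4) * Real.Gamma (3 / 4)) ^ 2 = 2 * Real.pi ^ 2 := by
    rw [hr, div_pow, div_pow, Real.sq_sqrt (by norm_num)]
    ring
  rw [div_pow, ← mul_div_assoc, div_lt_one (by positivity)]
  have : Real.Gamma (3 / 4) ^ 2 * (4 * Real.Gamma (3 / 4) ^ 2) <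
      Real.Gamma (3 / 4) ^ 2 * Real.Gamma (1 / 4) ^ 2 := by
    calc _ = 4 * Real.Gamma (3 / 4) ^ 4 := by ring
      _ ≤ 4 * Real.pi := by linarith
      _ < 2 * Real.pi ^ 2 := by nlinarith
      _ = _ := by rw [← hs]; ring
  exact lt_of_mul_lt_mul_left this (by positivity)

/-- There is exactly one `β ∈ (π, 2π)` with `tan((β−π)/4) = 4 (Γ(3/4)/Γ(1/4))²`, and for
this `β` the value `c = 1/4` solves the Hardy-constant equation for `β`. -/
theorem critical_angle_exists_unique :
    (∃! β : ℝ, β ∈ Set.Ioo Real.pi (2 * Real.pi) ∧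
      Real.tan ((β - Real.pi) / 4) = 4 * (Real.Gamma (3 / 4) / Real.Gamma (1 / 4)) ^ 2) ∧
    ∀ β : ℝ, β ∈ Set.Ioo Real.pi (2 * Real.pi) →
      Real.tan ((β - Real.pi) / 4) = 4 * (Real.Gamma (3 / 4) / Real.Gamma (1 / 4)) ^ 2 →
      hardyEq (1 / 4) β := by
  have hK := gamma_ratio_bound
  have h1 : 0 < Real.Gamma (1 / 4) := Real.Gamma_pos_of_pos (by norm_num)
  have h3 : 0 < Real.Gamma (3 / 4) := Real.Gamma_pos_of_pos (by norm_num)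
  have hK0 : 0 < 4 * (Real.Gamma (3 / 4) / Real.Gamma (1 / 4)) ^ 2 := by positivity
  constructor
  · generalize 4 * (Real.Gamma (3 / 4) / Real.Gamma (1 / 4)) ^ 2 = K at *
    have ha : 0 < Real.arctan K := Real.arctan_pos.2 hK0
    have hb : Real.arctan K < Real.pi / 4 := by
      rw [← Real.arctan_one]
      exact Real.arctan_strictMono hK
    refine ⟨Real.pi + 4 * Real.arctan K, ⟨⟨by linarith, by linarith⟩, ?_⟩, ?_⟩
    · rw [show (Real.pi + 4 * Real.arctan K - Real.pi) / 4 = Real.arctan K by ring,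
        Real.tan_arctan]
    · rintro y ⟨⟨hy1, hy2⟩, hy⟩
      rw [← hy, Real.arctan_tan (by linarith) (by linarith)]
      ring
  · intro β _ h
    have hs : √(1 / 4 : ℝ) = 1 / 2 := by
      rw [show (1 / 4 : ℝ) = (1 / 2) ^ 2 by norm_num]
      exact Real.sqrt_sq (by norm_num)
    unfold hardyEq
    rw [hs, show (1 : ℝ) - 4 * (1 / 4) = 0 by norm_num, Real.sqrt_zero, add_zero, add_zero,
      show 1 / 2 * ((β - Real.pi) / 2) = (β - Real.pi) / 4 by ring, h]
    ring
end

section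
/- Let β ∈ (π, β_cr]. Then the largest c > 0 for which the boundary value problem −ψ''(θ) = c·V(θ)·ψ(θ) on (0, β/2), with ψ(θ) → 0 as θ → 0+ and ψ'(β/2) = 0, admits a positive solution is c = 1/4. -/
open Real Set
open scoped Classical

/-- The potential `V` on `(0, β)`. -/
noncomputable def Vpot (β θ : ℝ) : ℝ :=
  if θ < Real.pi / 2 then 1 / Real.sin θ ^ 2
  else if θ < β - Real.pi / 2 then 1
  else 1 / Real.sin (β - θ) ^ 2

/-- `ψ` is a positive solution of the boundary value problem
`−ψ'' = c·V·ψ` on `(0, β/2)`, `ψ(0+) = 0`, `ψ'(β/2) = 0`. -/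
def IsBVPSolution (β c : ℝ) (ψ : ℝ → ℝ) : Prop :=
  ∃ ψ' : ℝ → ℝ,
    (∀ θ ∈ Set.Ioc 0 (β / 2), HasDerivWithinAt ψ (ψ' θ) (Set.Ioc 0 (β / 2)) θ) ∧
    (∀ θ ∈ Set.Ioo 0 (β / 2),
      HasDerivWithinAt ψ' (-(c * Vpot β θ * ψ θ)) (Set.Ioc 0 (β / 2)) θ) ∧
    (∀ θ ∈ Set.Ioc 0 (β / 2), 0 < ψ θ) ∧
    Filter.Tendsto ψ (nhdsWithin 0 (Set.Ioi 0)) (nhds 0) ∧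
    ψ' (β / 2) = 0


lemma upper_bd (β c : ℝ) (ψ : ℝ → ℝ) (hβ : Real.pi < β) (h : IsBVPSolution β c ψ) :
    c ≤ 1 / 4 := by
  by_contra hc
  push Not at hc
  obtain ⟨ψ', h1, h2, h3, -, -⟩ := h
  have hpi := Real.pi_gt_three
  obtain ⟨d, hd, hd2⟩ : ∃ d : ℝ, 0 < d ∧ d ^ 2 = c - 1 / 4 :=
    ⟨√(c - 1 / 4), Real.sqrt_pos.2 (by linarith), Real.sq_sqrt (by linarith)⟩
  set G : ℝ → ℝ := fun θ => Real.arctan ((θ * ψ' θ / ψ θ - 1 / 2) / d) + d * Real.log θ with hG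
  have hder : ∀ θ ∈ Ioo (0 : ℝ) 1, ∃ g, HasDerivAt G g θ ∧ g ≤ 0 := by
    intro θ hθ
    have hmem : θ ∈ Ioo 0 (β / 2) := ⟨hθ.1, by linarith [hθ.2]⟩
    have hnb : Ioc 0 (β / 2) ∈ nhds θ := Ioc_mem_nhds hmem.1 hmem.2
    have e1 := (h1 θ ⟨hmem.1, hmem.2.le⟩).hasDerivAt hnb
    have e2 := (h2 θ hmem).hasDerivAt hnb
    have hp := h3 θ ⟨hmem.1, hmem.2.le⟩
    have e3 := ((((((hasDerivAt_id θ).mul e2).div e1 hp.ne').sub_const (1 / 2)).div_const d).arctan).add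
      ((Real.hasDerivAt_log hθ.1.ne').const_mul d)
    refine ⟨_, e3, ?_⟩
    have hV : 1 / θ ^ 2 ≤ Vpot β θ := by
      rw [Vpot, if_pos (by linarith [hθ.2])]
      have hs : 0 < Real.sin θ := Real.sin_pos_of_pos_of_lt_pi hθ.1 (by linarith [hθ.2])
      have hs2 : Real.sin θ ≤ θ := Real.sin_le hθ.1.le
      gcongr
    have hV' : 1 ≤ θ ^ 2 * Vpot β θ := by
      have := hθ.1
      rw [div_le_iff₀ (by positivity)] at hV
      linarith
    generalize Vpot β θ = v at *
    simp only [id, Pi.mul_apply, Pi.div_apply]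
    obtain ⟨w, hw⟩ : ∃ w, w = θ * ψ' θ / ψ θ := ⟨_, rfl⟩
    have hθ0 := hθ.1
    have hψ' : ψ' θ = w * ψ θ / θ := by rw [hw]; field_simp
    have key : ((1 * ψ' θ + θ * -(c * v * ψ θ)) * ψ θ - θ * ψ' θ * ψ' θ) / ψ θ ^ 2
        = (w - w ^ 2 - c * (θ ^ 2 * v)) / θ := by
      rw [hψ']; field_simp; ring
    rw [key, ← hw]
    have k2 : (w - w ^ 2 - c * (θ ^ 2 * v)) ≤ - ((w - 1 / 2) ^ 2 + d ^ 2) := by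
      nlinarith
    have k3 : 1 / (1 + ((w - 1 / 2) / d) ^ 2) * ((w - w ^ 2 - c * (θ ^ 2 * v)) / θ / d) + d * θ⁻¹
       = d * ((w - w ^ 2 - c * (θ ^ 2 * v)) + ((w - 1 / 2) ^ 2 + d ^ 2)) / (θ * ((w - 1 / 2) ^ 2 + d ^ 2)) := by
      have : 0 < (w - 1 / 2) ^ 2 + d ^ 2 := by positivity
      have e : 1 + ((w - 1 / 2) / d) ^ 2 = ((w - 1 / 2) ^ 2 + d ^ 2) / d ^ 2 := by
        field_simp; ring
      rw [e]
      generalize (w - 1 / 2) ^ 2 + d ^ 2 = q at *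
      field_simp
    rw [k3]
    apply div_nonpos_of_nonpos_of_nonneg
    · exact mul_nonpos_of_nonneg_of_nonpos hd.le (by linarith)
    · positivity
  have hanti : AntitoneOn G (Ioo 0 1) := by
    apply antitoneOn_of_deriv_nonpos (convex_Ioo 0 1)
    · intro θ hθ
      obtain ⟨g, hg, -⟩ := hder θ hθ
      exact hg.continuousAt.continuousWithinAt
    · intro θ hθ
      rw [interior_Ioo] at hθ
      obtain ⟨g, hg, -⟩ := hder θ hθ
      exact hg.differentiableAt.differentiableWithinAt
    · intro θ hθ
      rw [interior_Ioo] at hθ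
      obtain ⟨g, hg, hg0⟩ := hder θ hθ
      rw [hg.deriv]; exact hg0
  set N : ℝ := 1 + |G (1 / 2) - Real.pi / 2| / d with hN
  have hN1 : 1 ≤ N := by rw [hN]; linarith [div_nonneg (abs_nonneg (G (1 / 2) - Real.pi / 2)) hd.le]
  have hx : Real.exp (-N) ≤ 1 / 2 := by
    rw [Real.exp_neg, ← one_div]
    apply one_div_le_one_div_of_le (by norm_num)
    linarith [Real.add_one_le_exp N]
  have := hanti ⟨Real.exp_pos _, by linarith⟩ ⟨by norm_num, by norm_num⟩ hx
  have h5 : G (Real.exp (-N)) ≤ Real.pi / 2 - d * N := by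
    simp only [hG, Real.log_exp]
    linarith [Real.arctan_lt_pi_div_two ((Real.exp (-N) * ψ' (Real.exp (-N)) / ψ (Real.exp (-N)) - 1 / 2) / d)]
  have h6 : d * N = d + |G (1 / 2) - Real.pi / 2| := by rw [hN]; field_simp
  linarith [neg_abs_le (G (1 / 2) - Real.pi / 2)]

/-- Legendre-type Taylor coefficients. -/
noncomputable def lc (k : ℕ) : ℝ :=
  Real.Gamma (k / 2 + 1 / 4) ^ 2 / (Real.Gamma (k / 2 + 1 / 2) * Real.Gamma (k / 2 + 1))

lemma lc_pos (k : ℕ) : 0 < lc k := by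
  have h1 : 0 < Real.Gamma ((k : ℝ) / 2 + 1 / 4) := Real.Gamma_pos_of_pos (by positivity)
  have h2 : 0 < Real.Gamma ((k : ℝ) / 2 + 1 / 2) := Real.Gamma_pos_of_pos (by positivity)
  have h3 : 0 < Real.Gamma ((k : ℝ) / 2 + 1) := Real.Gamma_pos_of_pos (by positivity)
  unfold lc; positivity

lemma lc_rec (k : ℕ) : ((k : ℝ) + 1) * (k + 2) * lc (k + 2) = ((k : ℝ) ^ 2 + k + 1 / 4) * lc k := by
  have h1 : 0 < Real.Gamma ((k : ℝ) / 2 + 1 / 4) := Real.Gamma_pos_of_pos (by positivity)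
  have h2 : 0 < Real.Gamma ((k : ℝ) / 2 + 1 / 2) := Real.Gamma_pos_of_pos (by positivity)
  have h3 : 0 < Real.Gamma ((k : ℝ) / 2 + 1) := Real.Gamma_pos_of_pos (by positivity)
  have e1 : Real.Gamma (((k + 2 : ℕ) : ℝ) / 2 + 1 / 4) = ((k : ℝ) / 2 + 1 / 4) * Real.Gamma ((k : ℝ) / 2 + 1 / 4) := by
    rw [← Real.Gamma_add_one (by positivity)]; congr 1; push_cast; ring
  have e2 : Real.Gamma (((k + 2 : ℕ) : ℝ) / 2 + 1 / 2) = ((k : ℝ) / 2 + 1 / 2) * Real.Gamma ((k : ℝ) / 2 + 1 / 2) := by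
    rw [← Real.Gamma_add_one (by positivity)]; congr 1; push_cast; ring
  have e3 : Real.Gamma (((k + 2 : ℕ) : ℝ) / 2 + 1) = ((k : ℝ) / 2 + 1) * Real.Gamma ((k : ℝ) / 2 + 1) := by
    rw [← Real.Gamma_add_one (by positivity)]; congr 1; push_cast; ring
  unfold lc
  rw [e1, e2, e3]
  field_simp
  ring

lemma gamma_half (x : ℝ) (hx : 0 < x) :
    Real.Gamma (x + 1 / 2) ^ 2 ≤ x * Real.Gamma x ^ 2 := by
  have h := Real.Gamma_mul_add_mul_le_rpow_Gamma_mul_rpow_Gamma (s := x) (t := x + 1)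
    (a := 1 / 2) (b := 1 / 2) hx (by linarith) (by norm_num) (by norm_num) (by norm_num)
  have h1 : 0 < Real.Gamma x := Real.Gamma_pos_of_pos hx
  rw [show 1 / 2 * x + 1 / 2 * (x + 1) = x + 1 / 2 by ring, Real.Gamma_add_one hx.ne',
    ← Real.sqrt_eq_rpow, ← Real.sqrt_eq_rpow, ← Real.sqrt_mul h1.le] at h
  have h2 : 0 < Real.Gamma (x + 1 / 2) := Real.Gamma_pos_of_pos (by linarith)
  have := pow_le_pow_left₀ h2.le h 2
  rw [Real.sq_sqrt (by positivity)] at this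
  linarith

lemma lc_anti (k : ℕ) : lc (k + 1) < lc k := by
  have h1 : 0 < Real.Gamma ((k : ℝ) / 2 + 1 / 4) := Real.Gamma_pos_of_pos (by positivity)
  have h2 : 0 < Real.Gamma ((k : ℝ) / 2 + 1 / 2) := Real.Gamma_pos_of_pos (by positivity)
  have h3 : 0 < Real.Gamma ((k : ℝ) / 2 + 1) := Real.Gamma_pos_of_pos (by positivity)
  have e1 : (((k + 1 : ℕ) : ℝ) / 2 + 1 / 4) = ((k : ℝ) / 2 + 1 / 4) + 1 / 2 := by push_cast; ring
  have e2 : (((k + 1 : ℕ) : ℝ) / 2 + 1 / 2) = ((k : ℝ) / 2 + 1) := by push_cast; ring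
  have e3 : Real.Gamma (((k + 1 : ℕ) : ℝ) / 2 + 1) = ((k : ℝ) / 2 + 1 / 2) * Real.Gamma ((k : ℝ) / 2 + 1 / 2) := by
    rw [← Real.Gamma_add_one (by positivity)]; congr 1; push_cast; ring
  have h := gamma_half ((k : ℝ) / 2 + 1 / 4) (by positivity)
  unfold lc
  rw [e1, e2, e3, div_lt_div_iff₀ (by positivity) (by positivity)]
  have h4 : Real.Gamma ((k : ℝ) / 2 + 1 / 4 + 1 / 2) ^ 2 <
    ((k : ℝ) / 2 + 1 / 2) * Real.Gamma ((k : ℝ) / 2 + 1 / 4) ^ 2 := by nlinarith [pow_pos h1 2]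
  have := mul_lt_mul_of_pos_right h4 (mul_pos h2 h3)
  nlinarith

lemma lc_le (k : ℕ) : ((k : ℝ) + 1) * lc k ≤ 2 * lc 0 := by
  induction k using Nat.strong_induction_on with
  | _ k ih =>
    match k with
    | 0 => have := lc_pos 0; norm_num; linarith
    | 1 => have := lc_anti 0; norm_num at *; linarith
    | k + 2 =>
      refine le_trans ?_ (ih k (by omega))
      have h := lc_rec k
      have hp := lc_pos k
      have hk : (0 : ℝ) ≤ k := by positivity
      have e : lc (k + 2) = ((k : ℝ) ^ 2 + k + 1 / 4) * lc k / (((k : ℝ) + 1) * (k + 2)) := by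
        rw [← h]; field_simp
      rw [e, mul_div_assoc', div_le_iff₀ (by positivity)]
      push_cast
      have : ((k : ℝ) + 2 + 1) * ((k : ℝ) ^ 2 + k + 1 / 4) ≤ (k + 1) * ((k + 1) * (k + 2)) := by nlinarith
      nlinarith [mul_le_mul_of_nonneg_right this hp.le]

lemma lc_bdd (k : ℕ) : lc k ≤ 2 * lc 0 := by
  have h := lc_le k
  have := lc_pos k
  have hk : (0 : ℝ) ≤ k := by positivity
  nlinarith

/-- General summability. -/
lemma ps_summable (a : ℕ → ℝ) (C : ℝ) (m : ℕ) (ha : ∀ k, |a k| ≤ C * ((k : ℝ) + 1) ^ m)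
    (x : ℝ) (hx : |x| < 1) : Summable fun k => a k * x ^ k := by
  by_cases hx0 : x = 0
  · apply summable_of_ne_finset_zero (s := {0})
    intro b hb
    simp at hb
    simp [hx0, hb]
  have h1 := (summable_nat_add_iff 1).2 (summable_pow_mul_geometric_of_norm_lt_one m (r := |x|) (by simpa using hx))
  have h2 := h1.mul_left (C / |x|)
  refine Summable.of_norm_bounded h2 ?_
  intro k
  have : 0 < |x| := abs_pos.2 hx0
  rw [norm_mul, norm_pow, Real.norm_eq_abs, Real.norm_eq_abs]
  calc |a k| * |x| ^ k ≤ (C * ((k : ℝ) + 1) ^ m) * |x| ^ k := by gcongr; exact ha k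
    _ = _ := by push_cast; field_simp; ring

lemma ps_deriv (a : ℕ → ℝ) (C : ℝ) (m : ℕ) (ha : ∀ k, |a k| ≤ C * ((k : ℝ) + 1) ^ m)
    (x : ℝ) (hx : |x| < 1) :
    HasDerivAt (fun y => ∑' k, a k * y ^ k) (∑' k : ℕ, ((k : ℝ) + 1) * a (k + 1) * x ^ k) x := by
  obtain ⟨r, hr1, hr2⟩ := exists_between hx
  have hr0 : 0 < r := lt_of_le_of_lt (abs_nonneg x) hr1
  have hC : 0 ≤ C := by
    have := (abs_nonneg _).trans (ha 0); simpa using this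
  have hsum : Summable fun k : ℕ => (C * ((k : ℝ) + 1) ^ (m + 1)) * r ^ (k - 1) := by
    have := ps_summable (fun k => C * ((k : ℝ) + 1) ^ (m + 1)) C (m + 1)
      (fun k => by rw [abs_of_nonneg (by positivity)]) r (by rwa [abs_of_pos hr0])
    refine (summable_nat_add_iff 1).1 ?_
    have := ((summable_nat_add_iff 1).2 this).mul_right (1 / r)
    refine this.congr ?_
    intro k
    simp only [Nat.add_sub_cancel]
    field_simp
    ring
  have hd := hasDerivAt_tsum_of_isPreconnected (g := fun k y => a k * y ^ k)
    (g' := fun k y => a k * ((k : ℝ) * y ^ (k - 1))) (t := Ioo (-r) r) (y₀ := 0) (y := x)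
    hsum isOpen_Ioo isPreconnected_Ioo
    (fun k y _ => (hasDerivAt_pow k y).const_mul (a k))
    (fun k y hy => by
      have hy' : |y| ≤ r := abs_le.2 ⟨hy.1.le, hy.2.le⟩
      rw [norm_mul, norm_mul, norm_pow, Real.norm_eq_abs, Real.norm_eq_abs, Real.norm_eq_abs,
        abs_of_nonneg (Nat.cast_nonneg k : (0 : ℝ) ≤ k)]
      calc |a k| * ((k : ℝ) * |y| ^ (k - 1)) ≤ (C * ((k : ℝ) + 1) ^ m) * (((k : ℝ) + 1) * r ^ (k - 1)) := by
            gcongr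
            · exact ha k
            · linarith
        _ = _ := by ring)
    ⟨by linarith, hr0⟩
    (ps_summable a C m ha 0 (by simp))
    (abs_lt.1 hr1)
  convert! hd using 1
  have hs : Summable fun k : ℕ => a k * ((k : ℝ) * x ^ (k - 1)) := by
    refine Summable.of_norm_bounded hsum ?_
    intro k
    rw [norm_mul, norm_mul, norm_pow, Real.norm_eq_abs, Real.norm_eq_abs, Real.norm_eq_abs,
        abs_of_nonneg (Nat.cast_nonneg k : (0 : ℝ) ≤ k)]
    calc |a k| * ((k : ℝ) * |x| ^ (k - 1)) ≤ (C * ((k : ℝ) + 1) ^ m) * (((k : ℝ) + 1) * r ^ (k - 1)) := by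
            gcongr
            · exact ha k
            · linarith
        _ = _ := by ring
  rw [hs.tsum_eq_zero_add]
  simp only [Nat.cast_zero, zero_mul, mul_zero, zero_add, Nat.add_sub_cancel]
  refine tsum_congr fun k => ?_
  push_cast; ring

noncomputable def lf (x : ℝ) : ℝ := ∑' k, lc k * x ^ k
noncomputable def lf1 (x : ℝ) : ℝ := ∑' k : ℕ, (((k : ℝ) + 1) * lc (k + 1)) * x ^ k
noncomputable def lf2 (x : ℝ) : ℝ := ∑' k : ℕ, (((k : ℝ) + 1) * (((k + 1 : ℕ) : ℝ) + 1) * lc (k + 2)) * x ^ k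

lemma lc_b0 (k : ℕ) : |lc k| ≤ (2 * lc 0) * ((k : ℝ) + 1) ^ 0 := by
  rw [abs_of_pos (lc_pos k)]; simpa using lc_bdd k

lemma lc_b1 (k : ℕ) : |((k : ℝ) + 1) * lc (k + 1)| ≤ (2 * lc 0) * ((k : ℝ) + 1) ^ 1 := by
  have := lc_pos (k + 1)
  rw [abs_of_pos (by positivity)]
  have h := lc_bdd (k + 1)
  have hk : (0 : ℝ) ≤ k := by positivity
  nlinarith

lemma lc_b2 (k : ℕ) : |((k : ℝ) + 1) * (((k + 1 : ℕ) : ℝ) + 1) * lc (k + 2)| ≤ (4 * lc 0) * ((k : ℝ) + 1) ^ 2 := by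
  have := lc_pos (k + 2)
  have h0 := lc_pos 0
  rw [abs_of_pos (by positivity)]
  have h := lc_bdd (k + 2)
  have hk : (0 : ℝ) ≤ k := by positivity
  push_cast
  calc ((k : ℝ) + 1) * ((k : ℝ) + 1 + 1) * lc (k + 2) ≤ ((k : ℝ) + 1) * (2 * (k + 1)) * (2 * lc 0) := by
        gcongr; linarith
    _ = _ := by ring

lemma lf_deriv (x : ℝ) (hx : |x| < 1) : HasDerivAt lf (lf1 x) x :=
  ps_deriv lc _ 0 lc_b0 x hx

lemma lf1_deriv (x : ℝ) (hx : |x| < 1) : HasDerivAt lf1 (lf2 x) x := by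
  have := ps_deriv _ _ 1 lc_b1 x hx
  convert! this using 1
  unfold lf2
  refine tsum_congr fun k => ?_
  ring

lemma lf_ode (x : ℝ) (hx : |x| < 1) : (1 - x ^ 2) * lf2 x - 2 * x * lf1 x - lf x / 4 = 0 := by
  have s0 : HasSum (fun k => lc k * x ^ k) (lf x) := (ps_summable lc _ 0 lc_b0 x hx).hasSum
  have s1 : HasSum (fun k : ℕ => (((k : ℝ) + 1) * lc (k + 1)) * x ^ k) (lf1 x) :=
    (ps_summable _ _ 1 lc_b1 x hx).hasSum
  have s2 : HasSum (fun k : ℕ => (((k : ℝ) + 1) * (((k + 1 : ℕ) : ℝ) + 1) * lc (k + 2)) * x ^ k) (lf2 x) :=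
    (ps_summable _ _ 2 lc_b2 x hx).hasSum
  have t1 : HasSum (fun k : ℕ => ((k : ℝ) * lc k) * x ^ k) (x * lf1 x) := by
    rw [← hasSum_nat_add_iff' 1]
    convert! s1.mul_left x using 1
    · funext k; push_cast; ring
    · simp
  have t2 : HasSum (fun k : ℕ => ((k : ℝ) * (k - 1) * lc k) * x ^ k) (x ^ 2 * lf2 x) := by
    rw [← hasSum_nat_add_iff' 2]
    convert! s2.mul_left (x ^ 2) using 1
    · funext k; push_cast; ring
    · simp [Finset.sum_range_succ]
  have t3 := ((s2.sub t2).sub (t1.mul_left 2)).sub (s0.mul_left (1 / 4))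
  have : (fun k : ℕ => ((((k : ℝ) + 1) * (((k + 1 : ℕ) : ℝ) + 1) * lc (k + 2)) * x ^ k -
      ((k : ℝ) * (k - 1) * lc k) * x ^ k - 2 * (((k : ℝ) * lc k) * x ^ k)) - 1 / 4 * (lc k * x ^ k))
      = fun _ => (0 : ℝ) := by
    funext k
    have := lc_rec k
    push_cast
    linear_combination x ^ k * this
  rw [this] at t3
  have := t3.unique hasSum_zero
  linarith

lemma lf_pos (x : ℝ) (hx0 : 0 ≤ x) (hx : x < 1) : 0 < lf x := by
  have s0 := (ps_summable lc _ 0 lc_b0 x (by rwa [abs_of_nonneg hx0]))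
  exact s0.tsum_pos (fun k => mul_nonneg (lc_pos k).le (by positivity)) 0 (by simpa using lc_pos 0)

lemma lf_neg_le (x : ℝ) (hx0 : 0 ≤ x) (hx : x < 1) : lf (-x) ≤ lf x := by
  have s0 := (ps_summable lc _ 0 lc_b0 x (by rwa [abs_of_nonneg hx0]))
  have s1 := (ps_summable lc _ 0 lc_b0 (-x) (by rwa [abs_neg, abs_of_nonneg hx0]))
  refine s1.tsum_le_tsum (fun k => ?_) s0
  refine mul_le_mul_of_nonneg_left ?_ (lc_pos k).le
  refine (le_abs_self _).trans ?_
  rw [abs_pow, abs_neg, abs_of_nonneg hx0]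

lemma lf_neg_pos (x : ℝ) (hx0 : 0 ≤ x) (hx : x < 1) : 0 < lf (-x) := by
  have s1 := (ps_summable lc _ 0 lc_b0 (-x) (by rwa [abs_neg, abs_of_nonneg hx0]))
  have he : Summable (fun k : ℕ => lc (2 * k) * (-x) ^ (2 * k)) :=
    s1.comp_injective (i := fun k : ℕ => 2 * k) (fun a b h => by simpa using h)
  have ho : Summable (fun k : ℕ => lc (2 * k + 1) * (-x) ^ (2 * k + 1)) :=
    s1.comp_injective (i := fun k : ℕ => 2 * k + 1) (fun a b h => by simpa using h)
  have hterm : ∀ k : ℕ, 0 ≤ lc (2 * k) * (-x) ^ (2 * k) + lc (2 * k + 1) * (-x) ^ (2 * k + 1) := by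
    intro k
    rw [pow_succ, pow_mul, neg_sq, ← pow_mul]
    have h1 := lc_anti (2 * k)
    have h2 := lc_pos (2 * k + 1)
    have h3 : 0 ≤ x ^ (2 * k) := by positivity
    have : 0 ≤ lc (2 * k) - lc (2 * k + 1) * x := by nlinarith
    linarith [mul_nonneg h3 this]
  have h0 : 0 < lc (2 * 0) * (-x) ^ (2 * 0) + lc (2 * 0 + 1) * (-x) ^ (2 * 0 + 1) := by
    have h1 := lc_anti 0
    have h2 := lc_pos 1
    rw [zero_add] at h1
    simp only [mul_zero, pow_zero, mul_one, zero_add, pow_one]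
    nlinarith
  have hpos := (he.add ho).tsum_pos hterm 0 h0
  rw [he.tsum_add ho] at hpos
  have h7 : lf (-x) = _ := (tsum_even_add_odd (f := fun k => lc k * (-x) ^ k) he ho).symm
  rw [h7]
  exact hpos

lemma lf_log (x : ℝ) (hx0 : 1 / 2 ≤ x) (hx : x < 1) : lf x ≤ 4 * lc 0 * (-Real.log (1 - x)) := by
  have hx' : |x| < 1 := by rwa [abs_of_nonneg (by linarith)]
  have s0 : HasSum (fun k => lc k * x ^ k) (lf x) := (ps_summable lc _ 0 lc_b0 x hx').hasSum
  have s1 := (Real.hasSum_pow_div_log_of_abs_lt_one hx').mul_left (2 * lc 0)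
  have h := hasSum_le (fun k => ?_) (s0.mul_left x) s1
  · have := lf_pos x (by linarith) hx
    nlinarith
  · have h1 := lc_le k
    have h2 : (0 : ℝ) < (k : ℝ) + 1 := by positivity
    rw [mul_div_assoc', le_div_iff₀ h2]
    have h3 : 0 ≤ x ^ (k + 1) := by positivity
    calc x * (lc k * x ^ k) * ((k : ℝ) + 1) = ((k : ℝ) + 1) * lc k * x ^ (k + 1) := by ring
      _ ≤ _ := by gcongr

lemma psi_deriv (y y1 y2 : ℝ → ℝ) (hy : ∀ x, |x| < 1 → HasDerivAt y (y1 x) x)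
    (hy1 : ∀ x, |x| < 1 → HasDerivAt y1 (y2 x) x)
    (hode : ∀ x, |x| < 1 → (1 - x ^ 2) * y2 x - 2 * x * y1 x - y x / 4 = 0)
    (θ : ℝ) (h0 : 0 < θ) (h1 : θ < Real.pi) :
    HasDerivAt (fun t => √(Real.sin t) * y (Real.cos t))
      (Real.cos θ / (2 * √(Real.sin θ)) * y (Real.cos θ)
        - √(Real.sin θ) * Real.sin θ * y1 (Real.cos θ)) θ ∧
    HasDerivAt (fun t => Real.cos t / (2 * √(Real.sin t)) * y (Real.cos t)
        - √(Real.sin t) * Real.sin t * y1 (Real.cos t))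
      (-(1 / 4 * (1 / Real.sin θ ^ 2) * (√(Real.sin θ) * y (Real.cos θ)))) θ := by
  have hs : 0 < Real.sin θ := Real.sin_pos_of_pos_of_lt_pi h0 h1
  have hc : |Real.cos θ| < 1 := by
    rw [← sq_lt_one_iff_abs_lt_one]
    nlinarith [Real.sin_sq_add_cos_sq θ]
  have hS : 0 < √(Real.sin θ) := Real.sqrt_pos.2 hs
  have hSS : √(Real.sin θ) ^ 2 = Real.sin θ := Real.sq_sqrt hs.le
  have d1 := (Real.hasDerivAt_sin θ).sqrt hs.ne'
  have d2 := (hy _ hc).comp θ (Real.hasDerivAt_cos θ)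
  have d3 := (hy1 _ hc).comp θ (Real.hasDerivAt_cos θ)
  have ode := hode _ hc
  have hcs := Real.sin_sq_add_cos_sq θ
  constructor
  · convert! d1.mul d2 using 1
    simp only [Function.comp]
    ring
  · convert! ((((Real.hasDerivAt_cos θ).div (d1.const_mul 2) (by positivity)).mul d2).sub
      ((d1.mul (Real.hasDerivAt_sin θ)).mul d3)) using 1
    simp only [Function.comp, Pi.mul_apply, Pi.div_apply]
    generalize √(Real.sin θ) = S at *
    rw [← hSS] at hcs ⊢
    generalize Real.cos θ = C at *
    generalize y C = a at *
    generalize y1 C = b at *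
    generalize y2 C = e at *
    have hC : C ^ 2 = 1 - S ^ 4 := by linear_combination hcs
    rw [hC] at ode
    have ha : a = 4 * (S ^ 4 * e - 2 * C * b) := by linarith
    subst ha
    field_simp
    ring_nf
    simp only [hC, show C ^ 3 = C * (1 - S ^ 4) by rw [← hC]; ring]
    ring

lemma tendsto_aux (y : ℝ → ℝ) (K : ℝ) (hy0 : ∀ x, 0 ≤ x → x < 1 → 0 ≤ y x)
    (hyK : ∀ x, 0 ≤ x → x < 1 → y x ≤ K * lf x) (hK : 0 ≤ K) :
    Filter.Tendsto (fun t => √(Real.sin t) * y (Real.cos t)) (nhdsWithin 0 (Set.Ioi 0)) (nhds 0) := by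
  have hsin : Filter.Tendsto Real.sin (nhdsWithin 0 (Set.Ioi 0)) (nhdsWithin 0 (Set.Ioi 0)) := by
    apply tendsto_nhdsWithin_of_tendsto_nhds_of_eventually_within
    · have := Real.continuous_sin.tendsto 0
      rw [Real.sin_zero] at this
      exact this.mono_left nhdsWithin_le_nhds
    · filter_upwards [Ioo_mem_nhdsGT Real.pi_pos] with t ht
      exact Real.sin_pos_of_pos_of_lt_pi ht.1 ht.2
  have hl := tendsto_log_mul_rpow_nhdsGT_zero (r := 1 / 2) (by norm_num)
  have hr : Filter.Tendsto (fun s : ℝ => s ^ (1 / 2 : ℝ)) (nhdsWithin 0 (Set.Ioi 0)) (nhds 0) := by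
    have := (Real.continuous_sqrt.tendsto 0).mono_left (nhdsWithin_le_nhds (s := Set.Ioi 0))
    rw [Real.sqrt_zero] at this
    exact this.congr (fun s => Real.sqrt_eq_rpow s)
  have hlim : Filter.Tendsto (fun s : ℝ => K * (4 * lc 0) * (Real.log 2 * s ^ (1 / 2 : ℝ)
      - 2 * (Real.log s * s ^ (1 / 2 : ℝ)))) (nhdsWithin 0 (Set.Ioi 0)) (nhds 0) := by
    have := ((hr.const_mul (Real.log 2)).sub (hl.const_mul 2)).const_mul (K * (4 * lc 0))
    simpa using this
  refine tendsto_of_tendsto_of_tendsto_of_le_of_le' tendsto_const_nhds (hlim.comp hsin) ?_ ?_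
  all_goals
    filter_upwards [Ioo_mem_nhdsGT (show (0 : ℝ) < Real.pi / 3 by positivity)] with t ht
    have hpi := Real.pi_pos
    have hs : 0 < Real.sin t := Real.sin_pos_of_pos_of_lt_pi ht.1 (by linarith [ht.2])
    have hc2 : 1 / 2 ≤ Real.cos t := by
      rw [← Real.cos_pi_div_three]
      exact Real.cos_le_cos_of_nonneg_of_le_pi ht.1.le (by linarith) ht.2.le
    have hcs := Real.sin_sq_add_cos_sq t
    have hc1 : Real.cos t < 1 := by nlinarith
    have hS : 0 < √(Real.sin t) := Real.sqrt_pos.2 hs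
  · exact mul_nonneg hS.le (hy0 _ (by linarith) hc1)
  · simp only [Function.comp]
    rw [← Real.sqrt_eq_rpow]
    have h1 := hyK _ (by linarith) hc1
    have h2 := lf_log _ hc2 hc1
    have h3 : Real.log (Real.sin t ^ 2 / 2) ≤ Real.log (1 - Real.cos t) := by
      apply Real.log_le_log (by positivity)
      nlinarith
    rw [Real.log_div (by positivity) (by norm_num), Real.log_pow] at h3
    push_cast at h3
    have hl0 := lc_pos 0
    calc √(Real.sin t) * y (Real.cos t)
        ≤ √(Real.sin t) * (K * (4 * lc 0 * (Real.log 2 - 2 * Real.log (Real.sin t)))) := by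
          refine mul_le_mul_of_nonneg_left (h1.trans ?_) hS.le
          refine mul_le_mul_of_nonneg_left (h2.trans ?_) hK
          refine mul_le_mul_of_nonneg_left ?_ (by positivity)
          linarith
      _ = _ := by ring

lemma lc_ratio : lc 1 = 2 * (Real.Gamma (3 / 4) / Real.Gamma (1 / 4)) ^ 2 * lc 0 := by
  have h1 : 0 < Real.Gamma (1 / 4) := Real.Gamma_pos_of_pos (by positivity)
  have h2 : 0 < Real.Gamma (1 / 2) := Real.Gamma_pos_of_pos (by positivity)
  have h3 : Real.Gamma (1 / 2 + 1) = 1 / 2 * Real.Gamma (1 / 2) := Real.Gamma_add_one (by norm_num)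
  unfold lc
  rw [show ((1 : ℕ) : ℝ) / 2 + 1 / 4 = 3 / 4 by norm_num,
    show ((1 : ℕ) : ℝ) / 2 + 1 / 2 = 1 by norm_num,
    show ((1 : ℕ) : ℝ) / 2 + 1 = 1 / 2 + 1 by norm_num, h3,
    show ((0 : ℕ) : ℝ) / 2 + 1 / 4 = 1 / 4 by norm_num,
    show ((0 : ℕ) : ℝ) / 2 + 1 / 2 = 1 / 2 by norm_num,
    show ((0 : ℕ) : ℝ) / 2 + 1 = 1 by norm_num, Real.Gamma_one]
  field_simp

lemma lf_zero : lf 0 = lc 0 := by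
  unfold lf
  rw [tsum_eq_single 0 (fun k hk => by simp [hk])]; simp

lemma lf1_zero : lf1 0 = lc 1 := by
  unfold lf1
  rw [tsum_eq_single 0 (fun k hk => by simp [hk])]; simp

/-- Gluing two functions at a point. -/
lemma glue_deriv (f g : ℝ → ℝ) (a : ℝ) (hfg : f a = g a) (θ d : ℝ)
    (hl : θ ≤ a → HasDerivAt f d θ) (hr : a ≤ θ → HasDerivAt g d θ) :
    HasDerivAt (fun t => if t < a then f t else g t) d θ := by
  rcases lt_trichotomy θ a with h | h | h
  · refine (hl h.le).congr_of_eventuallyEq ?_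
    filter_upwards [Iio_mem_nhds h] with t ht
    exact if_pos ht
  · subst h
    rw [← hasDerivWithinAt_univ, ← Set.Iic_union_Ici (a := θ)]
    refine HasDerivWithinAt.union ?_ ?_
    · refine (hl le_rfl).hasDerivWithinAt.congr ?_ ?_
      · intro t ht
        rcases (show t ≤ θ from ht).lt_or_eq with h | h
        · exact if_pos h
        · subst h; simp [hfg]
      · simp [hfg]
    · refine (hr le_rfl).hasDerivWithinAt.congr ?_ ?_
      · intro t ht
        exact if_neg (not_lt.2 ht)
      · simp
  · refine (hr h.le).congr_of_eventuallyEq ?_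
    filter_upwards [Ioi_mem_nhds h] with t ht
    exact if_neg (not_lt.2 (le_of_lt ht))

lemma exists_sol (β βcr : ℝ) (hβcr : isBetaCr βcr) (hβ1 : Real.pi < β) (hβ2 : β ≤ βcr) :
    ∃ ψ : ℝ → ℝ, IsBVPSolution β (1 / 4) ψ := by
  obtain ⟨⟨hb1, hb2⟩, hb3⟩ := hβcr
  have hpi := Real.pi_pos
  have hl0 := lc_pos 0
  have hl1 := lc_pos 1
  set α : ℝ := (β - Real.pi) / 4 with hα
  have hα0 : 0 < α := by rw [hα]; linarith
  have hα1 : α < Real.pi / 4 := by rw [hα]; linarith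
  have hcα : 0 < Real.cos α := Real.cos_pos_of_mem_Ioo ⟨by linarith, by linarith⟩
  have htan : Real.tan α ≤ 4 * (Real.Gamma (3 / 4) / Real.Gamma (1 / 4)) ^ 2 := by
    rw [← hb3]
    rcases hβ2.lt_or_eq with h | h
    · exact (Real.tan_lt_tan_of_lt_of_lt_pi_div_two (by linarith) (by linarith)
        (by rw [hα]; linarith)).le
    · rw [hα, h]
  have htan0 : 0 < Real.tan α := Real.tan_pos_of_pos_of_lt_pi_div_two hα0 (by linarith)
  obtain ⟨q, hq⟩ : ∃ q, q = Real.tan α * lc 0 / (2 * lc 1) := ⟨_, rfl⟩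
  have hq0 : 0 < q := by rw [hq]; positivity
  have hq1 : q ≤ 1 := by
    rw [hq, div_le_one (by positivity), lc_ratio]
    nlinarith
  have hq2 : 2 * q * lc 1 = Real.tan α * lc 0 := by rw [hq]; field_simp
  obtain ⟨y, hydef⟩ : ∃ y : ℝ → ℝ, y = fun x => (1 + q) * lf (-x) + (1 - q) * lf x := ⟨_, rfl⟩
  obtain ⟨y1, hy1def⟩ : ∃ y1 : ℝ → ℝ, y1 = fun x => -((1 + q) * lf1 (-x)) + (1 - q) * lf1 x := ⟨_, rfl⟩
  obtain ⟨y2, hy2def⟩ : ∃ y2 : ℝ → ℝ, y2 = fun x => (1 + q) * lf2 (-x) + (1 - q) * lf2 x := ⟨_, rfl⟩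
  have hy : ∀ x, |x| < 1 → HasDerivAt y (y1 x) x := by
    intro x hx
    have h1 := ((lf_deriv (-x) (by rwa [abs_neg])).comp x (hasDerivAt_neg x)).const_mul (1 + q)
    have h2 := (lf_deriv x hx).const_mul (1 - q)
    rw [hydef, hy1def]
    convert! h1.add h2 using 1
    ring
  have hy1 : ∀ x, |x| < 1 → HasDerivAt y1 (y2 x) x := by
    intro x hx
    have h1 := (((lf1_deriv (-x) (by rwa [abs_neg])).comp x (hasDerivAt_neg x)).const_mul (1 + q)).neg
    have h2 := (lf1_deriv x hx).const_mul (1 - q)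
    rw [hy1def, hy2def]
    convert! h1.add h2 using 1
    ring
  have hode : ∀ x, |x| < 1 → (1 - x ^ 2) * y2 x - 2 * x * y1 x - y x / 4 = 0 := by
    intro x hx
    have h1 := lf_ode (-x) (by rwa [abs_neg])
    have h2 := lf_ode x hx
    rw [hydef, hy1def, hy2def]
    linear_combination (1 + q) * h1 + (1 - q) * h2
  have hypos : ∀ x, 0 ≤ x → x < 1 → 0 < y x := by
    intro x h0 h1
    have e1 := lf_pos x h0 h1
    have e2 := lf_neg_pos x h0 h1
    rw [hydef]
    have := mul_nonneg (sub_nonneg.2 hq1) e1.le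
    have := mul_pos (show 0 < 1 + q by linarith) e2
    simp only
    linarith
  have hyle : ∀ x, 0 ≤ x → x < 1 → y x ≤ 2 * lf x := by
    intro x h0 h1
    have e1 := lf_neg_le x h0 h1
    rw [hydef]
    simp only
    nlinarith
  have hyz : y 0 = 2 * lc 0 := by
    rw [hydef]; simp only [neg_zero, lf_zero]; ring
  have hy1z : y1 0 = - (Real.tan α * lc 0) := by
    rw [hy1def]; simp only [neg_zero, lf1_zero]; linarith
  set κ : ℝ := 2 * lc 0 / Real.cos α with hκ
  have hκ0 : 0 < κ := by positivity
  have hg : ∀ t : ℝ, HasDerivAt (fun t => κ * Real.cos ((β / 2 - t) / 2))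
      (κ / 2 * Real.sin ((β / 2 - t) / 2)) t := by
    intro t
    have h1 : HasDerivAt (fun t : ℝ => (β / 2 - t) / 2) (-1 / 2) t :=
      ((hasDerivAt_id t).const_sub (β / 2)).div_const 2
    have := h1.cos.const_mul κ
    convert! this using 1
    ring
  have hg' : ∀ t : ℝ, HasDerivAt (fun t => κ / 2 * Real.sin ((β / 2 - t) / 2))
      (-(1 / 4 * (κ * Real.cos ((β / 2 - t) / 2)))) t := by
    intro t
    have h1 : HasDerivAt (fun t : ℝ => (β / 2 - t) / 2) (-1 / 2) t :=
      ((hasDerivAt_id t).const_sub (β / 2)).div_const 2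
    have := h1.sin.const_mul (κ / 2)
    convert! this using 1
    ring
  have hpd := psi_deriv y y1 y2 hy hy1 hode
  have hαe : (β / 2 - Real.pi / 2) / 2 = α := by rw [hα]; ring
  have glue0 : √(Real.sin (Real.pi / 2)) * y (Real.cos (Real.pi / 2))
      = κ * Real.cos ((β / 2 - Real.pi / 2) / 2) := by
    rw [hαe, Real.sin_pi_div_two, Real.cos_pi_div_two, hyz, hκ]
    simp only [Real.sqrt_one]
    field_simp
  have glue1 : Real.cos (Real.pi / 2) / (2 * √(Real.sin (Real.pi / 2))) * y (Real.cos (Real.pi / 2))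
        - √(Real.sin (Real.pi / 2)) * Real.sin (Real.pi / 2) * y1 (Real.cos (Real.pi / 2))
      = κ / 2 * Real.sin ((β / 2 - Real.pi / 2) / 2) := by
    rw [hαe, Real.sin_pi_div_two, Real.cos_pi_div_two, hy1z, hκ, Real.tan_eq_sin_div_cos]
    simp only [Real.sqrt_one]
    field_simp
    ring
  refine ⟨fun t => if t < Real.pi / 2 then √(Real.sin t) * y (Real.cos t)
      else κ * Real.cos ((β / 2 - t) / 2),
    fun t => if t < Real.pi / 2 then Real.cos t / (2 * √(Real.sin t)) * y (Real.cos t)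
        - √(Real.sin t) * Real.sin t * y1 (Real.cos t)
      else κ / 2 * Real.sin ((β / 2 - t) / 2), ?_, ?_, ?_, ?_, ?_⟩
  · intro θ hθ
    refine (glue_deriv _ _ _ glue0 θ _ ?_ ?_).hasDerivWithinAt
    · intro h
      have h1 := (hpd θ hθ.1 (by linarith)).1
      rcases h.lt_or_eq with h | h
      · simpa only [if_pos h] using h1
      · subst h
        simp only [if_neg (lt_irrefl _)]
        rw [← glue1]
        exact h1
    · intro h
      simpa only [if_neg (not_lt.2 h)] using hg θ
  · intro θ hθ
    refine (glue_deriv _ _ _ glue1 θ _ ?_ ?_).hasDerivWithinAt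
    · intro h
      have h1 := (hpd θ hθ.1 (by linarith)).2
      rcases h.lt_or_eq with h | h
      · simp only [Vpot, if_pos h]; exact h1
      · subst h
        simp only [Vpot, if_neg (lt_irrefl _)]
        rw [if_pos (by linarith), ← glue0]
        convert! h1 using 1
        simp
    · intro h
      simp only [Vpot, if_neg (not_lt.2 h)]
      rw [if_pos (by linarith [hθ.2])]
      convert! hg' θ using 1
      ring
  · intro θ hθ
    by_cases h : θ < Real.pi / 2
    · simp only [if_pos h]
      have hs : 0 < Real.sin θ := Real.sin_pos_of_pos_of_lt_pi hθ.1 (by linarith)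
      have hc : 0 < Real.cos θ := Real.cos_pos_of_mem_Ioo ⟨by linarith [hθ.1], h⟩
      refine mul_pos (Real.sqrt_pos.2 hs) (hypos _ hc.le ?_)
      nlinarith [Real.sin_sq_add_cos_sq θ]
    · simp only [if_neg h]
      push Not at h
      refine mul_pos hκ0 (Real.cos_pos_of_mem_Ioo ⟨?_, ?_⟩)
      · linarith [hθ.2]
      · linarith
  · refine (tendsto_aux y 2 (fun x h0 h1 => (hypos x h0 h1).le) hyle (by norm_num)).congr' ?_
    filter_upwards [Ioo_mem_nhdsGT (show (0 : ℝ) < Real.pi / 2 by positivity)] with t ht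
    rw [if_pos ht.2]
  · simp only
    rw [if_neg (by linarith)]
    simp

/-- For `β ∈ (π, βcr]`, the largest `c > 0` for which the boundary value problem
`−ψ'' = c·V·ψ`, `ψ(0+) = 0`, `ψ'(β/2) = 0` admits a positive solution is `c = 1/4`. -/
theorem bvp_largest_constant_small_beta
    (β βcr : ℝ) (hβcr : isBetaCr βcr) (hβ1 : Real.pi < β) (hβ2 : β ≤ βcr) :
    IsGreatest {c : ℝ | 0 < c ∧ ∃ ψ : ℝ → ℝ, IsBVPSolution β c ψ} (1 / 4) := by
  refine ⟨⟨by norm_num, exists_sol β βcr hβcr hβ1 hβ2⟩, ?_⟩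
  rintro c ⟨-, ψ, hψ⟩
  exact upper_bd β c ψ hβ1 hψ
end
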